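/- Let H be an affine quasi-hereditary algebra over a field k with property (♠) and finite index poset (Π, ≤). Then a module V ∈ H-gmod has a Δ-filtration if and only if V admits a finite right resolution by tilting modules, i.e. an exact sequence 0 → V → T_0 → T_1 → ⋯ → T_r → 0 with each T_i a tilting module. -/

import Mathlib

/-!
Write "`E` is good" if `ext¹(Δ(σ), E) = 0` for all `σ`; concretely, with `K(σ)` the kernel of
`P(σ) ↠ Δ(σ)`, every homogeneous map `K(σ) → E` extends to `P(σ)` (`AHW.Good`).

**Preparation.** A `Δ`-filtration is finite (`AHW.hasDFilt_iff`), because each `Δ(π)` in it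
contributes to one of the finite-dimensional spaces `hom(V, ∇̄(π))`: maps to `∇̄(π)` extend along
inclusions with `Δ`-filtered cokernel, since `ext¹(Δ(σ), ∇̄(π)) = 0`. Hence `Δ`-filtrations may be
handled as finite chains of submodules (`Ch`).

**Good modules have `∇̄`-filtrations** (`AHW.hasPCFilt_of_good`). Let `E` be good and let `π` be
maximal with a nonzero map `P(π) → E`. Such a map of minimal degree, followed by a suitable
map `E → ∇̄(π)`, is the canonical one; the latter map is surjective with good kernel
(`AHW.exists_pco_quot`). Repeating this removes the maps from `P(π)` degree by degree. The
intersection of the kernels is again good, because in each degree the sequence of homomorphism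
spaces is stationary (`AHW.good_iInf`), and it involves fewer labels. Induction on the set of
labels shows that `E` has admissible submodules concentrated in arbitrarily large degrees
(`AHW.exists_adm_deep`), and the resulting chains form a separated filtration.

**`Δ`-filtered modules have tilting resolutions** (`tiltRes_of_ch`). By `(♠)` the Noetherian
algebra `H` is a Noetherian module over its centre (`spade_noeth`), so the spaces
`ext¹(Δ(π), E)` are finitely generated over the centre. Hence there is a universal extension
`E ↪ E'` with `E'/E` a finite sum of shifts of `Δ(π)` and `ext¹(Δ(π), E') = 0`
(`AHW.exists_universal`). Treating the labels `π` from larger to smaller ones embeds a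
`Δ`-filtered `V` in a good `E` with `E/V` filtered by `Δ(π)` (`AHW.exists_good`); such an `E` is
tilting. Only those `π` which lie strictly below a label of `V` are needed, so the labels of
`E/V` form a smaller set and induction yields the resolution, which is finite as `Π` is.

**Tiltingly resolved modules are `Δ`-filtered** (`ch_of_tiltRes`). Starting from the right end of
the resolution it suffices that the kernel of a surjection `M ↠ N` of `Δ`-filtered modules is
`Δ`-filtered (`AHW.ker_ch`). This reduces to `N = Δ(π)`; after sorting the filtration of `M`
(`AHW.sorted`) and discarding other labels it reduces to `M` filtered by copies of `Δ(π)`, where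
the point is that `Δ(π)` is local and its surjective endomorphisms are injective
(`AHW.ker_of_isotypic`).
-/

open CategoryTheory

/-! ## Graded algebras (Laurentian) and the category `H`-gmod -/

/-- A `ℤ`-graded `k`-algebra. -/
structure GAlg (k : Type) [Field k] : Type 1 where
  carrier : Type
  [ring : Ring carrier]
  [alg : Algebra k carrier]
  grading : ℤ → Submodule k carrier
  internal : DirectSum.IsInternal grading
  one_mem : (1 : carrier) ∈ grading 0
  mul_mem : ∀ {i j : ℤ} {a b : carrier},
    a ∈ grading i → b ∈ grading j → a * b ∈ grading (i + j)

attribute [instance] GAlg.ring GAlg.alg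

variable {k : Type} [Field k]

namespace GAlg

/-- A graded algebra is Laurentian if the grading is bounded below and has
finite-dimensional components. -/
def Laurentian (A : GAlg k) : Prop :=
  (∃ N : ℤ, ∀ n : ℤ, n < N → A.grading n = ⊥) ∧
    ∀ n : ℤ, FiniteDimensional k (A.grading n)

/-- Property `(♠)`: there is a central `ℤ≥0`-graded subalgebra `Z ⊆ H_{≥0}` with
`Z₀ = k·1` such that `H` is finitely generated as a `Z`-module. -/
def Spade (A : GAlg k) : Prop :=
  ∃ Z : ℤ → Submodule k A.carrier,
    (∀ n, Z n ≤ A.grading n) ∧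
    (∀ n : ℤ, n < 0 → Z n = ⊥) ∧
    (Z 0 = Submodule.span k {(1 : A.carrier)}) ∧
    (∀ (i j : ℤ) (a b : A.carrier), a ∈ Z i → b ∈ Z j → a * b ∈ Z (i + j)) ∧
    (∀ (i : ℤ) (a : A.carrier), a ∈ Z i → ∀ h : A.carrier, a * h = h * a) ∧
    (∃ s : Finset A.carrier,
      AddSubgroup.closure
        {x : A.carrier | ∃ i : ℤ, ∃ z ∈ Z i, ∃ t ∈ s, x = z * t} = ⊤)

end GAlg

/-- A finitely generated graded module over a graded algebra. -/
structure GMod (A : GAlg k) : Type 1 where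
  carrier : Type
  [acg : AddCommGroup carrier]
  [mod : Module A.carrier carrier]
  [kmod : Module k carrier]
  [tower : IsScalarTower k A.carrier carrier]
  [scc : SMulCommClass k A.carrier carrier]
  grading : ℤ → Submodule k carrier
  internal : DirectSum.IsInternal grading
  smul_mem : ∀ {i j : ℤ} {a : A.carrier} {x : carrier},
    a ∈ A.grading i → x ∈ grading j → a • x ∈ grading (i + j)
  fg : Module.Finite A.carrier carrier

attribute [instance] GMod.acg GMod.mod GMod.kmod GMod.tower GMod.scc

variable {A : GAlg k}

/-- The category `H`-gmod : morphisms are degree-preserving `H`-linear maps. -/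
instance GMod.instCategory : Category (GMod A) where
  Hom M N := {f : M.carrier →ₗ[A.carrier] N.carrier //
    ∀ (i : ℤ) (x : M.carrier), x ∈ M.grading i → f x ∈ N.grading i}
  id M := ⟨LinearMap.id, fun _ _ h => h⟩
  comp f g := ⟨g.1.comp f.1, fun i x h => g.2 i _ (f.2 i x h)⟩
  id_comp f := Subtype.ext (LinearMap.ext fun _ => rfl)
  comp_id f := Subtype.ext (LinearMap.ext fun _ => rfl)
  assoc f g h := Subtype.ext (LinearMap.ext fun _ => rfl)

/-- The grading shift `q^n`. -/
def GMod.shift (n : ℤ) (M : GMod A) : GMod A where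
  carrier := M.carrier
  grading := fun i => M.grading (i - n)
  internal := by
    have h := (DirectSum.isInternal_submodule_iff_iSupIndep_and_iSup_eq_top
      M.grading).mp M.internal
    rw [DirectSum.isInternal_submodule_iff_iSupIndep_and_iSup_eq_top]
    refine ⟨h.1.comp (f := fun i : ℤ => i - n)
      (fun a b hab => by simp only [] at hab; omega), ?_⟩
    refine le_antisymm le_top ?_
    rw [← h.2]
    refine iSup_le fun i => ?_
    have hg : M.grading i = M.grading ((i + n) - n) := by norm_num
    rw [hg]
    exact le_iSup (fun j : ℤ => M.grading (j - n)) (i + n)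
  smul_mem := fun {i j a x} ha hx => by
    have h := M.smul_mem ha hx
    have : i + (j - n) = (i + j) - n := by ring
    simpa [this] using h
  fg := M.fg

/-- The grading shift as a (graded) functor. -/
def shiftF (A : GAlg k) (n : ℤ) : GMod A ⥤ GMod A where
  obj M := GMod.shift n M
  map f := ⟨f.1, fun i x h => f.2 (i - n) x h⟩

/-- Isomorphism in `H`-gmod, concretely. -/
structure GIso (M N : GMod A) where
  e : M.carrier ≃ₗ[A.carrier] N.carrier
  mem : ∀ (i : ℤ) (x : M.carrier), x ∈ M.grading i → e x ∈ N.grading i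
  mem' : ∀ (i : ℤ) (y : N.carrier), y ∈ N.grading i → e.symm y ∈ M.grading i

/-- A graded (homogeneous) submodule. -/
def GMod.IsGSub (M : GMod A) (W : Submodule A.carrier M.carrier) : Prop :=
  W.restrictScalars k = ⨆ i : ℤ, (W.restrictScalars k ⊓ M.grading i)

/-- The subquotient `W/W'` of a graded module. -/
abbrev sqMod (M : GMod A) (W W' : Submodule A.carrier M.carrier) : Type :=
  W ⧸ (W'.comap W.subtype)

/-- The induced grading on a subquotient. -/
abbrev sqGrading (M : GMod A) (W W' : Submodule A.carrier M.carrier) (i : ℤ) :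
    Submodule k (sqMod M W W') :=
  ((M.grading i).comap ((W.subtype).restrictScalars k)).map
    (((W'.comap W.subtype).mkQ).restrictScalars k)

/-- The subquotient `W/W'` is isomorphic, as a graded module, to `N`. -/
def SQIso (M : GMod A) (W W' : Submodule A.carrier M.carrier) (N : GMod A) : Prop :=
  ∃ e : (sqMod M W W') ≃ₗ[A.carrier] N.carrier,
    ∀ i : ℤ, (sqGrading M W W' i).map
      ((e : sqMod M W W' →ₗ[A.carrier] N.carrier).restrictScalars k) = N.grading i

/-- A separated filtration by graded submodules. -/
structure GFilt (M : GMod A) where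
  F : ℕ → Submodule A.carrier M.carrier
  first : F 0 = ⊤
  anti : ∀ n, F (n + 1) ≤ F n
  graded : ∀ n, M.IsGSub (F n)
  separated : ∀ x : M.carrier, (∀ n, x ∈ F n) → x = 0

/-- The filtration `Φ` has all subquotients zero or of the form `q^d N` with
`N` in the family `S`. -/
def FiltBy (M : GMod A) (Φ : GFilt M) (S : Set (GMod A)) : Prop :=
  ∀ n : ℕ, Subsingleton (sqMod M (Φ.F n) (Φ.F (n + 1))) ∨
    ∃ N ∈ S, ∃ d : ℤ, SQIso M (Φ.F n) (Φ.F (n + 1)) (GMod.shift d N)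

/-- Homogeneous (degree `d`) `H`-linear maps. -/
def ghomSet (M N : GMod A) (d : ℤ) : Set (M.carrier →ₗ[A.carrier] N.carrier) :=
  {f | ∀ (i : ℤ) (x : M.carrier), x ∈ M.grading i → f x ∈ N.grading (i + d)}

/-- Homogeneous degree `d` maps as a `k`-submodule of all `H`-linear maps. -/
def ghomSub (M N : GMod A) (d : ℤ) :
    Submodule k (M.carrier →ₗ[A.carrier] N.carrier) where
  carrier := ghomSet M N d
  add_mem' := fun hf hg i x hx => (N.grading (i + d)).add_mem (hf i x hx) (hg i x hx)
  zero_mem' := fun i x _ => (N.grading (i + d)).zero_mem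
  smul_mem' := fun c f hf i x hx => by
    simpa using (N.grading (i + d)).smul_mem c (hf i x hx)

/-- A graded-simple module. -/
def IsGSimple (M : GMod A) : Prop :=
  Nontrivial M.carrier ∧
    ∀ W : Submodule A.carrier M.carrier, M.IsGSub W → W = ⊥ ∨ W = ⊤

/-- Graded projectivity. -/
def GProjective (P : GMod A) : Prop :=
  ∀ (M N : GMod A) (g : M ⟶ N) (h : P ⟶ N),
    Function.Surjective g.1 → ∃ l : P ⟶ M, l ≫ g = h

/-- Vanishing of all (graded) `ext¹` groups `ext¹(U, V) = ⊕ₙ Ext¹(qⁿU, V) = 0`: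
every extension of a shift of `U` by `V` splits. -/
def Ext1Vanish (U V : GMod A) : Prop :=
  ∀ (n : ℤ) (E : GMod A) (f : V ⟶ E) (g : E ⟶ GMod.shift n U),
    Function.Injective f.1 → Function.Surjective g.1 →
    LinearMap.range f.1 = LinearMap.ker g.1 →
    ∃ s : GMod.shift n U ⟶ E, s ≫ g = 𝟙 (GMod.shift n U)

/-- The structure of an affine highest weight category on `H`-gmod, i.e. an
affine quasi-hereditary structure on `H` (Kleshchev).  The proper costandard
objects are axiomatised through their homological characterisation. -/
structure AHW (A : GAlg k) (Idx : Type) [Fintype Idx] [PartialOrder Idx] :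
    Type 1 where
  /-- simple objects -/
  L : Idx → GMod A
  /-- projective covers -/
  P : Idx → GMod A
  /-- standard objects -/
  Δ : Idx → GMod A
  /-- proper costandard objects -/
  pco : Idx → GMod A
  noeth : IsNoetherianRing A.carrier
  laur : A.Laurentian
  simple : ∀ π, IsGSimple (L π)
  simple_complete : ∀ S : GMod A, IsGSimple S →
    ∃ (π : Idx) (d : ℤ), Nonempty (GIso S (GMod.shift d (L π)))
  simple_irred : ∀ (π σ : Idx) (d : ℤ),
    Nonempty (GIso (L π) (GMod.shift d (L σ))) → π = σ
  proj : ∀ π, GProjective (P π)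
  cover : ∀ π, ∃ p : P π ⟶ L π, Function.Surjective p.1 ∧
    ∀ W : Submodule A.carrier (P π).carrier, (P π).IsGSub W →
      W ⊔ LinearMap.ker p.1 = ⊤ → W = ⊤
  /-- `Δ(π) = P(π)/(Σ images of graded maps from P(σ), σ ≰ π)` -/
  std_def : ∀ π, ∃ dm : P π ⟶ Δ π, Function.Surjective dm.1 ∧
    LinearMap.ker dm.1 =
      ⨆ (p : Σ σ : Idx, (P σ).carrier →ₗ[A.carrier] (P π).carrier)
        (_ : ¬ p.1 ≤ π) (_ : ∃ d, p.2 ∈ ghomSet (P p.1) (P π) d),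
          LinearMap.range p.2
  /-- the kernel of `P(π) ↠ Δ(π)` is filtered by shifts of `Δ(σ)`, `σ > π` -/
  ker_filt : ∀ π, ∃ Φ : GFilt (P π), (∃ N, Φ.F N = ⊥) ∧
    SQIso (P π) (Φ.F 0) (Φ.F 1) (Δ π) ∧
    ∀ n : ℕ, 1 ≤ n →
      (Subsingleton (sqMod (P π) (Φ.F n) (Φ.F (n + 1))) ∨
        ∃ σ : Idx, π < σ ∧ ∃ d : ℤ,
          SQIso (P π) (Φ.F n) (Φ.F (n + 1)) (GMod.shift d (Δ σ)))
  /-- `B_π = end(Δ(π))` is a graded polynomial ring on homogeneous generators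
  of positive degree -/
  end_poly : ∀ π, ∃ (nv : ℕ) (dg : Fin nv → ℤ),
    (∀ i, 0 < dg i) ∧
    ∃ e : MvPolynomial (Fin nv) k →ₐ[k] Module.End A.carrier (Δ π).carrier,
      Function.Bijective e ∧
      ∀ i, (e (MvPolynomial.X i) :
        (Δ π).carrier →ₗ[A.carrier] (Δ π).carrier) ∈ ghomSet (Δ π) (Δ π) (dg i)
  /-- `hom(P(π), Δ(σ))` is a graded free `B_σ`-module of finite rank -/
  hom_free : ∀ π σ, ∃ (mr : ℕ)
    (b : Fin mr → ((P π).carrier →ₗ[A.carrier] (Δ σ).carrier))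
    (db : Fin mr → ℤ),
    (∀ i, b i ∈ ghomSet (P π) (Δ σ) (db i)) ∧
    Function.Bijective (fun c : Fin mr → Module.End A.carrier (Δ σ).carrier =>
      ∑ i, LinearMap.comp (c i : (Δ σ).carrier →ₗ[A.carrier] (Δ σ).carrier) (b i))
  /-- the proper costandard objects have finite length … -/
  pco_finlen : ∀ π, IsFiniteLength A.carrier (pco π).carrier
  /-- … and satisfy `hom(Δ(σ), ∇̄(π)) = δ_{σπ} k` concentrated in degree 0 … -/
  pco_hom : ∀ π, ∃ f₀ : (Δ π).carrier →ₗ[A.carrier] (pco π).carrier,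
    f₀ ∈ ghomSet (Δ π) (pco π) 0 ∧ f₀ ≠ 0 ∧
    (∀ (d : ℤ) (f : (Δ π).carrier →ₗ[A.carrier] (pco π).carrier),
      f ∈ ghomSet (Δ π) (pco π) d → ∃ c : k, f = c • f₀) ∧
    ∀ (σ : Idx) (d : ℤ) (f : (Δ σ).carrier →ₗ[A.carrier] (pco π).carrier),
      f ∈ ghomSet (Δ σ) (pco π) d → σ ≠ π → f = 0
  /-- … and `ext¹(Δ(σ), ∇̄(π)) = 0` -/
  pco_ext : ∀ π σ, Ext1Vanish (Δ σ) (pco π)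

variable {Idx : Type} [Fintype Idx] [PartialOrder Idx]

/-- `V` has a `Δ`-filtration. -/
def HasDFilt (S : AHW A Idx) (M : GMod A) : Prop :=
  ∃ Φ : GFilt M, FiltBy M Φ (Set.range S.Δ)

/-- `V` has a `∇̄`-filtration. -/
def HasPCFilt (S : AHW A Idx) (M : GMod A) : Prop :=
  ∃ Φ : GFilt M, FiltBy M Φ (Set.range S.pco)

/-- Tilting modules. -/
def IsTilting (S : AHW A Idx) (M : GMod A) : Prop :=
  HasDFilt S M ∧ HasPCFilt S M

/-- The multiplicity `(V : Δ(π))` of `Δ(π)` in a given `Δ`-filtration. -/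
noncomputable def dMult (S : AHW A Idx) {M : GMod A} (Φ : GFilt M) (π : Idx) : ℕ :=
  Set.ncard {n : ℕ | ∃ d : ℤ,
    SQIso M (Φ.F n) (Φ.F (n + 1)) (GMod.shift d (S.Δ π))}

/-- `V` admits a (finite) `Δ`-filtration with `(V:Δ(π)) = 1` and `(V:Δ(σ)) = 0`
for `σ ≰ π`. -/
def MultCond (S : AHW A Idx) (M : GMod A) (π : Idx) : Prop :=
  ∃ Φ : GFilt M, FiltBy M Φ (Set.range S.Δ) ∧ (∃ N, Φ.F N = ⊥) ∧
    dMult S Φ π = 1 ∧ ∀ σ : Idx, ¬ σ ≤ π → dMult S Φ σ = 0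

/-- Indecomposability (no nontrivial graded idempotent endomorphism). -/
def Indec (M : GMod A) : Prop :=
  Nontrivial M.carrier ∧
    ∀ e : M ⟶ M, e ≫ e = e → e.1 = 0 ∨ e.1 = LinearMap.id

/-- A short exact sequence in `H`-gmod. -/
def SES {X Y Z : GMod A} (f : X ⟶ Y) (g : Y ⟶ Z) : Prop :=
  Function.Injective f.1 ∧ Function.Surjective g.1 ∧
    LinearMap.range f.1 = LinearMap.ker g.1

section Proof

/-! ### Homogeneous components -/

section Components

variable {X : Type} [AddCommGroup X] [Module k X]

/-- The projection onto the `i`-th component of an internal grading. -/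
noncomputable def gpr (gr : ℤ → Submodule k X) (h : DirectSum.IsInternal gr) (i : ℤ) :
    X →ₗ[k] X :=
  (gr i).subtype ∘ₗ DirectSum.component k ℤ (fun i => gr i) i ∘ₗ
    (LinearEquiv.ofBijective (DirectSum.coeLinearMap gr) h).symm.toLinearMap

variable {gr : ℤ → Submodule k X} (h : DirectSum.IsInternal gr)

theorem gpr_mem (i : ℤ) (x : X) : gpr gr h i x ∈ gr i :=
  Subtype.property _

theorem gpr_of_mem {j : ℤ} {x : X} (hx : x ∈ gr j) (i : ℤ) :
    gpr gr h i x = if j = i then x else 0 := by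
  have e : (LinearEquiv.ofBijective (DirectSum.coeLinearMap gr) h).symm x =
      DirectSum.lof k ℤ (fun i => gr i) j ⟨x, hx⟩ := by
    rw [LinearEquiv.symm_apply_eq]
    exact (DirectSum.coeLinearMap_lof (A := gr) j ⟨x, hx⟩).symm
  simp only [gpr, LinearMap.comp_apply, LinearEquiv.coe_coe, e, DirectSum.component.of]
  split_ifs with hji
  · subst hji; rfl
  · rfl

theorem gpr_self {j : ℤ} {x : X} (hx : x ∈ gr j) : gpr gr h j x = x := by
  simp [gpr_of_mem h hx]

theorem gpr_ne {j i : ℤ} {x : X} (hx : x ∈ gr j) (hij : j ≠ i) : gpr gr h i x = 0 := by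
  simp [gpr_of_mem h hx, hij]

include h in
theorem gr_induction {p : X → Prop} (h0 : p 0) (hadd : ∀ x y, p x → p y → p (x + y))
    (hh : ∀ i, ∀ x ∈ gr i, p x) (x : X) : p x := by
  have ht : x ∈ ⨆ i, gr i := by
    rw [((DirectSum.isInternal_submodule_iff_iSupIndep_and_iSup_eq_top gr).mp h).2]; trivial
  exact Submodule.iSup_induction gr (motive := p) ht hh h0 hadd

/-- Every element is a finite sum of its homogeneous components. -/
theorem exists_sum_gpr (x : X) : ∃ s : Finset ℤ, ∀ t : Finset ℤ, s ⊆ t →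
    x = ∑ i ∈ t, gpr gr h i x := by
  classical
  refine gr_induction h (p := fun x => ∃ s : Finset ℤ, ∀ t : Finset ℤ, s ⊆ t →
    x = ∑ i ∈ t, gpr gr h i x) ⟨∅, by simp⟩ ?_ ?_ x
  · rintro x y ⟨s, hs⟩ ⟨t, ht⟩
    refine ⟨s ∪ t, fun u hu => ?_⟩
    simp only [map_add, Finset.sum_add_distrib]
    rw [← hs u (Finset.union_subset_left hu), ← ht u (Finset.union_subset_right hu)]
  · intro i x hx
    refine ⟨{i}, fun t ht => ?_⟩
    have hi : i ∈ t := ht (by simp)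
    simp only [gpr_of_mem h hx]
    simp [hi]

theorem mem_of_gpr_mem {W : AddSubmonoid X} {x : X} (hx : ∀ i, gpr gr h i x ∈ W) : x ∈ W := by
  obtain ⟨s, hs⟩ := exists_sum_gpr h x
  rw [hs s le_rfl]
  exact sum_mem fun i _ => hx i

theorem gpr_ext {x y : X} (hx : ∀ i, gpr gr h i x = gpr gr h i y) : x = y := by
  have : x - y ∈ (⊥ : AddSubmonoid X) :=
    mem_of_gpr_mem h fun i => by simp [map_sub, hx i]
  rwa [AddSubmonoid.mem_bot, sub_eq_zero] at this

/-- A family of subspaces admitting a compatible family of projections is a grading. -/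
theorem internal_of (gr : ℤ → Submodule k X) (p : ℤ → X →ₗ[k] X)
    (hself : ∀ i, ∀ x ∈ gr i, p i x = x) (hne : ∀ i j, ∀ x ∈ gr j, j ≠ i → p i x = 0)
    (hsup : ∀ x, x ∈ ⨆ i, gr i) : DirectSum.IsInternal gr := by
  rw [DirectSum.isInternal_submodule_iff_iSupIndep_and_iSup_eq_top]
  refine ⟨fun i => ?_, eq_top_iff.2 fun x _ => hsup x⟩
  rw [Submodule.disjoint_def]
  intro x hx hx'
  rw [← hself i x hx]
  have : (⨆ j, ⨆ (_ : j ≠ i), gr j) ≤ LinearMap.ker (p i) :=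
    iSup_le fun j => iSup_le fun hj y hy => hne i j y hy hj
  exact this hx'

end Components

namespace GMod

/-- The homogeneous component of degree `i` of an element of a graded module. -/
noncomputable def pr (M : GMod A) (i : ℤ) : M.carrier →ₗ[k] M.carrier :=
  gpr M.grading M.internal i

variable (M : GMod A)

theorem pr_mem (i : ℤ) (x : M.carrier) : M.pr i x ∈ M.grading i := gpr_mem _ _ _

theorem pr_self {i : ℤ} {x : M.carrier} (hx : x ∈ M.grading i) : M.pr i x = x := gpr_self _ hx

theorem pr_ne {i j : ℤ} {x : M.carrier} (hx : x ∈ M.grading j) (h : j ≠ i) : M.pr i x = 0 :=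
  gpr_ne _ hx h

theorem ind {p : M.carrier → Prop} (h0 : p 0) (hadd : ∀ x y, p x → p y → p (x + y))
    (hh : ∀ i, ∀ x ∈ M.grading i, p x) (x : M.carrier) : p x :=
  gr_induction M.internal h0 hadd hh x

theorem mem_of_pr {W : Submodule A.carrier M.carrier} {x : M.carrier}
    (hx : ∀ i, M.pr i x ∈ W) : x ∈ W :=
  mem_of_gpr_mem M.internal (W := W.toAddSubmonoid) hx

theorem pr_ext {x y : M.carrier} (hx : ∀ i, M.pr i x = M.pr i y) : x = y :=
  gpr_ext M.internal hx

/-- Homogeneous submodules, in terms of components. -/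
def Gr (W : Submodule A.carrier M.carrier) : Prop := ∀ x ∈ W, ∀ i, M.pr i x ∈ W

theorem isGSub_iff (W : Submodule A.carrier M.carrier) : M.IsGSub W ↔ M.Gr W := by
  constructor
  · intro h x hx i
    have hx' : x ∈ ⨆ i : ℤ, (W.restrictScalars k ⊓ M.grading i) := by
      rw [← h]; exact hx
    refine Submodule.iSup_induction _ (motive := fun x => M.pr i x ∈ W) hx' ?_ (by simp) ?_
    · rintro j y ⟨hy, hy'⟩
      by_cases hj : j = i
      · subst hj; rw [M.pr_self hy']; exact hy
      · rw [M.pr_ne hy' hj]; exact W.zero_mem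
    · intro x y hx hy; rw [map_add]; exact W.add_mem hx hy
  · intro h
    refine le_antisymm (fun x hx => ?_) (iSup_le fun i => inf_le_left)
    refine mem_of_gpr_mem M.internal
      (W := (⨆ i : ℤ, (W.restrictScalars k ⊓ M.grading i)).toAddSubmonoid) fun i => ?_
    exact Submodule.mem_iSup_of_mem i ⟨h x hx i, M.pr_mem i x⟩

variable {M}

theorem Gr.bot : M.Gr ⊥ := fun x hx i => by
  rw [Submodule.mem_bot] at hx; subst hx; simp

theorem Gr.top : M.Gr ⊤ := fun _ _ _ => trivial

theorem Gr.inf {W W' : Submodule A.carrier M.carrier} (h : M.Gr W) (h' : M.Gr W') :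
    M.Gr (W ⊓ W') := fun x hx i => ⟨h x hx.1 i, h' x hx.2 i⟩

theorem Gr.iInf {ι : Sort*} {W : ι → Submodule A.carrier M.carrier} (h : ∀ i, M.Gr (W i)) :
    M.Gr (⨅ i, W i) := fun x hx i => by
  simp only [Submodule.mem_iInf] at hx ⊢
  exact fun j => h j x (hx j) i

theorem Gr.sup {W W' : Submodule A.carrier M.carrier} (h : M.Gr W) (h' : M.Gr W') :
    M.Gr (W ⊔ W') := fun x hx i => by
  obtain ⟨y, hy, z, hz, rfl⟩ := Submodule.mem_sup.1 hx
  rw [map_add]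
  exact Submodule.add_mem_sup (h y hy i) (h' z hz i)

theorem pr_smul {i : ℤ} {a : A.carrier} (ha : a ∈ A.grading i) (x : M.carrier) (j : ℤ) :
    M.pr j (a • x) = a • M.pr (j - i) x := by
  revert j
  refine M.ind (p := fun x => ∀ j, M.pr j (a • x) = a • M.pr (j - i) x) (by simp) ?_ ?_ x
  · intro x y hx hy j
    simp [smul_add, hx, hy]
  · intro l x hx j
    by_cases h : l = j - i
    · subst h
      rw [M.pr_self hx, M.pr_self]
      have := M.smul_mem ha hx
      rwa [add_sub_cancel] at this
    · rw [M.pr_ne hx h, smul_zero, M.pr_ne (M.smul_mem ha hx)]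
      omega

theorem Gr.span {s : Set M.carrier} (hs : ∀ x ∈ s, ∃ i, x ∈ M.grading i) :
    M.Gr (Submodule.span A.carrier s) := by
  intro x hx
  induction hx using Submodule.span_induction with
  | mem x h =>
    intro i
    obtain ⟨j, hj⟩ := hs x h
    by_cases hji : j = i
    · subst hji; rw [M.pr_self hj]; exact Submodule.subset_span h
    · rw [M.pr_ne hj hji]; exact Submodule.zero_mem _
  | zero => intro i; simp
  | add x y _ _ hx hy => intro i; rw [map_add]; exact Submodule.add_mem _ (hx i) (hy i)
  | smul a x _ hx =>
    refine gr_induction A.internal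
      (p := fun a => ∀ i, M.pr i (a • x) ∈ Submodule.span A.carrier s) (by simp) ?_ ?_ a
    · intro a b ha hb i
      rw [add_smul, map_add]; exact Submodule.add_mem _ (ha i) (hb i)
    · intro j a ha i
      rw [pr_smul ha]
      exact Submodule.smul_mem _ _ (hx _)

end GMod

/-! ### Homogeneous maps -/

/-- A map defined on a submodule `W` of `M` which is homogeneous of degree `d`. -/
def HomOn (M : GMod A) (W : Submodule A.carrier M.carrier) (N : GMod A) (d : ℤ)
    (f : W →ₗ[A.carrier] N.carrier) : Prop :=
  ∀ (i : ℤ) (x : W), (x : M.carrier) ∈ M.grading i → f x ∈ N.grading (i + d)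

variable {M N : GMod A}

theorem ghom_pr {d : ℤ} {f : M.carrier →ₗ[A.carrier] N.carrier} (hf : f ∈ ghomSet M N d)
    (i : ℤ) (x : M.carrier) : f (M.pr i x) = N.pr (i + d) (f x) := by
  revert i
  refine M.ind (p := fun x => ∀ i, f (M.pr i x) = N.pr (i + d) (f x)) (by simp) ?_ ?_ x
  · intro x y hx hy i; simp [hx, hy]
  · intro j x hx i
    by_cases h : j = i
    · subst h; rw [M.pr_self hx, N.pr_self (hf j x hx)]
    · rw [M.pr_ne hx h, N.pr_ne (hf j x hx) (by omega), map_zero]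

theorem GMod.Gr.range {d : ℤ} {f : M.carrier →ₗ[A.carrier] N.carrier}
    (hf : f ∈ ghomSet M N d) : N.Gr (LinearMap.range f) := by
  rintro _ ⟨x, rfl⟩ i
  refine ⟨M.pr (i - d) x, ?_⟩
  rw [ghom_pr hf, sub_add_cancel]

theorem GMod.Gr.map {d : ℤ} {f : M.carrier →ₗ[A.carrier] N.carrier}
    (hf : f ∈ ghomSet M N d) {W : Submodule A.carrier M.carrier} (hW : M.Gr W) :
    N.Gr (W.map f) := by
  rintro _ ⟨x, hx, rfl⟩ i
  refine ⟨M.pr (i - d) x, hW x hx _, ?_⟩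
  rw [ghom_pr hf, sub_add_cancel]

theorem GMod.Gr.comap {d : ℤ} {f : M.carrier →ₗ[A.carrier] N.carrier}
    (hf : f ∈ ghomSet M N d) {W : Submodule A.carrier N.carrier} (hW : N.Gr W) :
    M.Gr (W.comap f) := by
  intro x hx i
  rw [Submodule.mem_comap, ghom_pr hf]
  exact hW _ hx _

theorem GMod.Gr.ker {d : ℤ} {f : M.carrier →ₗ[A.carrier] N.carrier}
    (hf : f ∈ ghomSet M N d) : M.Gr (LinearMap.ker f) :=
  GMod.Gr.comap hf GMod.Gr.bot

theorem homOn_comp {L : GMod A} {W : Submodule A.carrier M.carrier} {d e : ℤ}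
    {f : W →ₗ[A.carrier] N.carrier} (hf : HomOn M W N d f)
    {g : N.carrier →ₗ[A.carrier] L.carrier} (hg : g ∈ ghomSet N L e) :
    HomOn M W L (d + e) (g ∘ₗ f) := fun i x hx => by
  rw [← add_assoc]; exact hg _ _ (hf i x hx)

theorem ghom_comp {L : GMod A} {d e : ℤ}
    {f : M.carrier →ₗ[A.carrier] N.carrier} (hf : f ∈ ghomSet M N d)
    {g : N.carrier →ₗ[A.carrier] L.carrier} (hg : g ∈ ghomSet N L e) :
    g ∘ₗ f ∈ ghomSet M L (d + e) := fun i x hx => by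
  rw [← add_assoc]; exact hg _ _ (hf i x hx)

theorem ghom_sub {d : ℤ} {f g : M.carrier →ₗ[A.carrier] N.carrier} (hf : f ∈ ghomSet M N d)
    (hg : g ∈ ghomSet M N d) : f - g ∈ ghomSet M N d :=
  (ghomSub M N d).sub_mem hf hg

theorem ghom_add {d : ℤ} {f g : M.carrier →ₗ[A.carrier] N.carrier} (hf : f ∈ ghomSet M N d)
    (hg : g ∈ ghomSet M N d) : f + g ∈ ghomSet M N d :=
  (ghomSub M N d).add_mem hf hg

theorem ghom_smul {d : ℤ} (c : k) {f : M.carrier →ₗ[A.carrier] N.carrier}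
    (hf : f ∈ ghomSet M N d) : c • f ∈ ghomSet M N d :=
  (ghomSub M N d).smul_mem c hf

theorem ghom_zero {d : ℤ} : (0 : M.carrier →ₗ[A.carrier] N.carrier) ∈ ghomSet M N d :=
  (ghomSub M N d).zero_mem

/-- A nonzero map has at most one degree. -/
theorem ghom_eq_zero_of_ne {d e : ℤ} {f : M.carrier →ₗ[A.carrier] N.carrier}
    (hf : f ∈ ghomSet M N d) (hf' : f ∈ ghomSet M N e) (h : d ≠ e) : f = 0 := by
  ext x
  refine M.ind (p := fun x => f x = (0 : M.carrier →ₗ[A.carrier] N.carrier) x) (by simp) ?_ ?_ x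
  · intro x y hx hy; simp [hx, hy]
  · intro i x hx
    rw [← N.pr_self (hf i x hx), N.pr_ne (hf' i x hx) (by omega)]; rfl

/-- Factorisation of a linear map through a surjection. -/
theorem exists_factor {R X Y Z : Type} [Ring R] [AddCommGroup X] [AddCommGroup Y]
    [AddCommGroup Z] [Module R X] [Module R Y] [Module R Z] (p : X →ₗ[R] Y) (f : X →ₗ[R] Z)
    (hp : Function.Surjective p) (h : ∀ x, p x = 0 → f x = 0) :
    ∃ g : Y →ₗ[R] Z, ∀ x, g (p x) = f x := by
  refine ⟨(LinearMap.ker p).liftQ f (fun x hx => h x hx) ∘ₗ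
    (p.quotKerEquivOfSurjective hp).symm.toLinearMap, fun x => ?_⟩
  have : (p.quotKerEquivOfSurjective hp).symm (p x) = (LinearMap.ker p).mkQ x := by
    rw [LinearEquiv.symm_apply_eq]; rfl
  rw [LinearMap.comp_apply, LinearEquiv.coe_coe, this]
  exact Submodule.liftQ_apply _ _ _

/-! ### Constructions of graded modules -/

section Constructions

variable [IsNoetherianRing A.carrier]

theorem GMod.isNoeth (M : GMod A) : IsNoetherian A.carrier M.carrier := by
  have := M.fg; infer_instance

/-- A homogeneous submodule as a graded module. -/
@[reducible] noncomputable def GMod.sub (M : GMod A) (W : Submodule A.carrier M.carrier)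
    (hW : M.Gr W) : GMod A where
  carrier := W
  grading := fun i => (M.grading i).comap (W.subtype.restrictScalars k)
  internal := by
    refine internal_of _ (fun i =>
      ((M.pr i) ∘ₗ W.subtype.restrictScalars k).codRestrict (W.restrictScalars k)
        fun x => hW x x.2 i) ?_ ?_ ?_
    · intro i x hx
      exact Subtype.ext (M.pr_self hx)
    · intro i j x hx hij
      exact Subtype.ext (M.pr_ne hx hij)
    · intro x
      obtain ⟨s, hs⟩ := exists_sum_gpr M.internal (x : M.carrier)
      have : x = ∑ i ∈ s, (⟨M.pr i x, hW x x.2 i⟩ : W) := by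
        apply Subtype.ext
        rw [AddSubmonoidClass.coe_finsetSum]
        exact hs s le_rfl
      rw [this]
      exact sum_mem fun i _ => Submodule.mem_iSup_of_mem i (M.pr_mem i x)
  smul_mem := fun ha hx => M.smul_mem ha hx
  fg := by
    have := M.isNoeth
    infer_instance

omit [IsNoetherianRing A.carrier] in
/-- The quotient of a graded module by a homogeneous submodule. -/
@[reducible] noncomputable def GMod.quot (M : GMod A) (W : Submodule A.carrier M.carrier)
    (hW : M.Gr W) : GMod A where
  carrier := M.carrier ⧸ W
  grading := fun i => (M.grading i).map (W.mkQ.restrictScalars k)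
  internal := by
    refine internal_of _ (fun i => (W.restrictScalars k).liftQ
      (W.mkQ.restrictScalars k ∘ₗ M.pr i) (fun x hx => ?_)) ?_ ?_ ?_
    · exact (Submodule.Quotient.mk_eq_zero W).2 (hW x hx i)
    · rintro i _ ⟨x, hx, rfl⟩
      change W.mkQ (M.pr i x) = W.mkQ x
      rw [M.pr_self hx]
    · rintro i j _ ⟨x, hx, rfl⟩ hij
      change W.mkQ (M.pr i x) = 0
      rw [M.pr_ne hx hij, map_zero]
    · intro x
      obtain ⟨x, rfl⟩ := W.mkQ_surjective x
      obtain ⟨s, hs⟩ := exists_sum_gpr M.internal x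
      rw [hs s le_rfl, map_sum]
      exact sum_mem fun i _ => Submodule.mem_iSup_of_mem i ⟨_, M.pr_mem i x, rfl⟩
  smul_mem := by
    rintro i j a _ ha ⟨x, hx, rfl⟩
    exact ⟨a • x, M.smul_mem ha hx, by simp⟩
  fg := by
    have := M.fg
    infer_instance

omit [IsNoetherianRing A.carrier] in
/-- The direct sum `M ⊕ q^d N`. -/
@[reducible] noncomputable def GMod.prod (M N : GMod A) (d : ℤ) : GMod A where
  carrier := M.carrier × N.carrier
  grading := fun i => (M.grading i).prod (N.grading (i - d))
  internal := by
    refine internal_of _ (fun i => (M.pr i).prodMap (N.pr (i - d))) ?_ ?_ ?_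
    · rintro i ⟨x, y⟩ ⟨hx, hy⟩
      exact Prod.ext (M.pr_self hx) (N.pr_self hy)
    · rintro i j ⟨x, y⟩ ⟨hx, hy⟩ hij
      exact Prod.ext (M.pr_ne hx hij) (N.pr_ne hy (by omega))
    · rintro ⟨x, y⟩
      have : (x, y) = (x, (0 : N.carrier)) + ((0 : M.carrier), y) := by simp
      rw [this]
      refine add_mem ?_ ?_
      · refine M.ind (p := fun x => (x, (0 : N.carrier)) ∈ _) (zero_mem _) ?_ ?_ x
        · intro x y hx hy
          have e : (x + y, (0 : N.carrier)) = (x, 0) + (y, 0) := by simp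
          rw [e]; exact add_mem hx hy
        · intro i x hx
          exact Submodule.mem_iSup_of_mem i ⟨hx, zero_mem _⟩
      · refine N.ind (p := fun y => ((0 : M.carrier), y) ∈ _) (zero_mem _) ?_ ?_ y
        · intro x y hx hy
          have e : ((0 : M.carrier), x + y) = (0, x) + (0, y) := by simp
          rw [e]; exact add_mem hx hy
        · intro i x hx
          refine Submodule.mem_iSup_of_mem (i + d) ⟨zero_mem _, ?_⟩
          simpa using hx
  smul_mem := by
    rintro i j a ⟨x, y⟩ ha ⟨hx, hy⟩
    refine ⟨M.smul_mem ha hx, ?_⟩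
    have := N.smul_mem ha hy
    rwa [show i + (j - d) = i + j - d by ring] at this
  fg := by
    have := M.fg
    have := N.fg
    infer_instance

end Constructions


/-! ### Sections of filtrations and finite filtrations -/

/-- `W / W'` is isomorphic to `N`, by an isomorphism which shifts degrees by `d`. -/
def Sec (M : GMod A) (W W' : Submodule A.carrier M.carrier) (N : GMod A) (d : ℤ) : Prop :=
  W' ≤ W ∧ ∃ φ : W →ₗ[A.carrier] N.carrier, HomOn M W N d φ ∧ Function.Surjective φ ∧
    ∀ x : W, φ x = 0 ↔ (x : M.carrier) ∈ W'

/-- There is a finite chain of homogeneous submodules from `W'` up to `W` whose successive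
quotients are shifts of members of the family `Fam`. -/
inductive Ch (Fam : Set (GMod A)) (M : GMod A) (W' : Submodule A.carrier M.carrier) :
    Submodule A.carrier M.carrier → Prop
  | refl : M.Gr W' → Ch Fam M W' W'
  | step {W₁ W₂ : Submodule A.carrier M.carrier} {N : GMod A} {d : ℤ} :
      Ch Fam M W' W₁ → M.Gr W₂ → N ∈ Fam → Sec M W₂ W₁ N d → Ch Fam M W' W₂

section

variable {M N : GMod A}

theorem HomOn.pr {W : Submodule A.carrier M.carrier} (hW : M.Gr W) {d : ℤ}
    {f : W →ₗ[A.carrier] N.carrier} (hf : HomOn M W N d f) (i : ℤ) (x : W) :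
    f ⟨M.pr i x, hW x x.2 i⟩ = N.pr (i + d) (f x) := by
  obtain ⟨s, hs⟩ := exists_sum_gpr M.internal (x : M.carrier)
  have hx : x = ∑ j ∈ insert i s, (⟨M.pr j x, hW x x.2 j⟩ : W) := by
    apply Subtype.ext
    rw [AddSubmonoidClass.coe_finsetSum]
    exact hs _ (Finset.subset_insert _ _)
  conv_rhs => rw [hx, map_sum, map_sum]
  rw [Finset.sum_eq_single i, N.pr_self (hf i _ (M.pr_mem i x))]
  · intro j _ hj
    exact N.pr_ne (hf j _ (M.pr_mem j x)) (by omega)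
  · intro h; exact absurd (Finset.mem_insert_self _ _) h

theorem HomOn.gr_range {W : Submodule A.carrier M.carrier} (hW : M.Gr W) {d : ℤ}
    {f : W →ₗ[A.carrier] N.carrier} (hf : HomOn M W N d f) : N.Gr (LinearMap.range f) := by
  rintro _ ⟨x, rfl⟩ i
  refine ⟨⟨M.pr (i - d) x, hW x x.2 _⟩, ?_⟩
  rw [hf.pr hW, sub_add_cancel]

/-- Kernels of homogeneous maps on homogeneous submodules are homogeneous. -/
theorem HomOn.gr_ker {W : Submodule A.carrier M.carrier} (hW : M.Gr W) {d : ℤ}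
    {f : W →ₗ[A.carrier] N.carrier} (hf : HomOn M W N d f) :
    M.Gr ((LinearMap.ker f).map W.subtype) := by
  rintro _ ⟨x, hx, rfl⟩ i
  refine ⟨⟨M.pr i x, hW x x.2 _⟩, ?_, rfl⟩
  change f _ = 0
  rw [hf.pr hW, show f x = 0 from hx, map_zero]

theorem HomOn.restrict {W : Submodule A.carrier M.carrier} {d : ℤ}
    {f : W →ₗ[A.carrier] N.carrier} (hf : HomOn M W N d f)
    {W₁ : Submodule A.carrier M.carrier} (h : W₁ ≤ W) :
    HomOn M W₁ N d (f ∘ₗ Submodule.inclusion h) := fun i _ hx => hf i _ hx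

theorem homOn_of_ghom {d : ℤ} {f : M.carrier →ₗ[A.carrier] N.carrier} (hf : f ∈ ghomSet M N d)
    (W : Submodule A.carrier M.carrier) : HomOn M W N d (f ∘ₗ W.subtype) :=
  fun i _ hx => hf i _ hx

/-- Extending a map from `W` to `W + im g`. -/
theorem glue {P : GMod A} {W : Submodule A.carrier M.carrier} (hW : M.Gr W) {d e : ℤ}
    {φ : W →ₗ[A.carrier] N.carrier} (hφ : HomOn M W N d φ)
    {g : P.carrier →ₗ[A.carrier] M.carrier} (hg : g ∈ ghomSet P M e)
    {ψ : P.carrier →ₗ[A.carrier] N.carrier} (hψ : ψ ∈ ghomSet P N (e + d))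
    (H : ∀ p (hp : g p ∈ W), ψ p = φ ⟨g p, hp⟩)
    {U : Submodule A.carrier M.carrier} (hU : U = W ⊔ LinearMap.range g) :
    ∃ Φ : U →ₗ[A.carrier] N.carrier, HomOn M U N d Φ ∧
      (∀ w (hw : w ∈ W) (hw' : w ∈ U), Φ ⟨w, hw'⟩ = φ ⟨w, hw⟩) ∧
      ∀ p (hp : g p ∈ U), Φ ⟨g p, hp⟩ = ψ p := by
  subst hU
  let q : (W × P.carrier) →ₗ[A.carrier] ↥(W ⊔ LinearMap.range g) :=
    LinearMap.codRestrict _ (LinearMap.coprod W.subtype g) (fun x =>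
      Submodule.add_mem_sup x.1.2 ⟨x.2, rfl⟩)
  have hq : Function.Surjective q := by
    rintro ⟨x, hx⟩
    obtain ⟨w, hw, _, ⟨p, rfl⟩, rfl⟩ := Submodule.mem_sup.1 hx
    exact ⟨(⟨w, hw⟩, p), Subtype.ext rfl⟩
  obtain ⟨Φ, hΦ⟩ := exists_factor q (LinearMap.coprod φ ψ) hq (by
    rintro ⟨w, p⟩ h
    have h1 : (w : M.carrier) + g p = 0 := congrArg Subtype.val h
    have h2 : g p ∈ W := by
      rw [← neg_eq_of_add_eq_zero_right h1]; exact W.neg_mem w.2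
    change φ w + ψ p = 0
    rw [H p h2, ← map_add, show w + ⟨g p, h2⟩ = 0 from Subtype.ext h1, map_zero])
  have h1 : ∀ w (hw : w ∈ W), Φ ⟨w, Submodule.mem_sup_left hw⟩ = φ ⟨w, hw⟩ := by
    intro w hw
    have h := hΦ (⟨w, hw⟩, 0)
    rw [show q (⟨w, hw⟩, 0) = ⟨w, Submodule.mem_sup_left hw⟩ from
      Subtype.ext (by change w + g 0 = w; simp)] at h
    rw [h]; simp
  have h2 : ∀ p, Φ ⟨g p, Submodule.mem_sup_right ⟨p, rfl⟩⟩ = ψ p := by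
    intro p
    have h := hΦ (0, p)
    rw [show q (0, p) = ⟨g p, Submodule.mem_sup_right ⟨p, rfl⟩⟩ from
      Subtype.ext (by change ((0 : W) : M.carrier) + g p = g p; simp)] at h
    rw [h]; simp
  refine ⟨Φ, ?_, fun w hw _ => h1 w hw, fun p _ => h2 p⟩
  rintro i ⟨x, hx⟩ hxi
  obtain ⟨w, hw, _, ⟨p, rfl⟩, rfl⟩ := Submodule.mem_sup.1 hx
  have e1 : w + g p = M.pr i w + g (P.pr (i - e) p) := by
    rw [ghom_pr hg, sub_add_cancel, ← map_add]
    exact (M.pr_self hxi).symm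
  have e2 : (⟨w + g p, hx⟩ : ↥(W ⊔ LinearMap.range g)) =
      ⟨M.pr i w, Submodule.mem_sup_left (hW w hw i)⟩ +
        ⟨g (P.pr (i - e) p), Submodule.mem_sup_right ⟨_, rfl⟩⟩ := Subtype.ext e1
  rw [e2, map_add, h1 _ (hW w hw i), h2]
  refine add_mem (hφ i _ (M.pr_mem i w)) ?_
  have := hψ _ _ (P.pr_mem (i - e) p)
  rwa [show i - e + (e + d) = i + d by ring] at this

end

section Transfer

variable {M M' N : GMod A} {W W' W₁ W₂ X Y : Submodule A.carrier M.carrier} {d e : ℤ}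

theorem Sec.inf (h : Sec M W₂ W₁ N d) (hX : W₂ ≤ W₁ ⊔ X) : Sec M (W₂ ⊓ X) (W₁ ⊓ X) N d := by
  obtain ⟨hle, φ, hφ, hs, hk⟩ := h
  refine ⟨inf_le_inf_right _ hle, _, hφ.restrict inf_le_left, ?_, ?_⟩
  · intro y
    obtain ⟨w, rfl⟩ := hs y
    obtain ⟨w₁, hw₁, x, hx, hw⟩ := Submodule.mem_sup.1 (hX w.2)
    have hx2 : x ∈ W₂ := by
      have : x = w - w₁ := by rw [← hw]; abel
      rw [this]; exact W₂.sub_mem w.2 (hle hw₁)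
    refine ⟨⟨x, hx2, hx⟩, ?_⟩
    have : w = ⟨w₁, hle hw₁⟩ + ⟨x, hx2⟩ := Subtype.ext hw.symm
    rw [this, map_add, (hk ⟨w₁, hle hw₁⟩).2 hw₁, zero_add]
    rfl
  · rintro ⟨x, hx, hx'⟩
    exact (hk ⟨x, hx⟩).trans ⟨fun h => ⟨h, hx'⟩, fun h => h.1⟩

theorem Sec.comap (h : Sec M W₂ W₁ N d) {q : M'.carrier →ₗ[A.carrier] M.carrier}
    (hq : q ∈ ghomSet M' M e) (hr : W₂ ≤ LinearMap.range q) :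
    Sec M' (W₂.comap q) (W₁.comap q) N (e + d) := by
  obtain ⟨hle, φ, hφ, hs, hk⟩ := h
  refine ⟨Submodule.comap_mono hle,
    φ ∘ₗ (q ∘ₗ (W₂.comap q).subtype).codRestrict W₂ (fun x => x.2), ?_, ?_, ?_⟩
  · intro i x hx
    rw [← add_assoc]
    exact hφ _ _ (hq _ _ hx)
  · intro y
    obtain ⟨⟨w, hw⟩, rfl⟩ := hs y
    obtain ⟨x, rfl⟩ := hr hw
    exact ⟨⟨x, hw⟩, rfl⟩
  · rintro ⟨x, hx⟩
    exact hk ⟨q x, hx⟩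

theorem Sec.map (h : Sec M W₂ W₁ N d) (hW₂ : M.Gr W₂) {q : M.carrier →ₗ[A.carrier] M'.carrier}
    (hq : q ∈ ghomSet M M' e) (hr : ∀ x ∈ W₂, q x = 0 → x ∈ W₁) :
    Sec M' (W₂.map q) (W₁.map q) N (d - e) := by
  obtain ⟨hle, φ, hφ, hs, hk⟩ := h
  obtain ⟨g, hg⟩ := exists_factor (q.submoduleMap W₂) φ (q.submoduleMap_surjective W₂) (by
    rintro ⟨x, hx⟩ h
    exact (hk _).2 (hr x hx (congrArg Subtype.val h)))
  refine ⟨Submodule.map_mono hle, g, ?_, ?_, ?_⟩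
  · rintro i ⟨_, x, hx, rfl⟩ hi
    have e1 : (⟨q x, x, hx, rfl⟩ : W₂.map q) =
        q.submoduleMap W₂ ⟨M.pr (i - e) x, hW₂ x hx _⟩ := by
      apply Subtype.ext
      change q x = q (M.pr (i - e) x)
      rw [ghom_pr hq, sub_add_cancel]
      exact (M'.pr_self hi).symm
    rw [e1, hg]
    have := hφ (i - e) ⟨M.pr (i - e) x, hW₂ x hx _⟩ (M.pr_mem _ _)
    rwa [show i - e + d = i + (d - e) by ring] at this
  · intro y
    obtain ⟨w, rfl⟩ := hs y
    exact ⟨_, hg w⟩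
  · rintro ⟨_, x, hx, rfl⟩
    change g (q.submoduleMap W₂ ⟨x, hx⟩) = 0 ↔ _
    rw [hg, hk]
    constructor
    · exact fun h => ⟨x, h, rfl⟩
    · rintro ⟨y, hy, hyx⟩
      have : x - y ∈ W₁ := hr _ (W₂.sub_mem hx (hle hy)) (by rw [map_sub, sub_eq_zero]; exact hyx.symm)
      simpa using W₁.add_mem this hy

theorem Sec.sup [IsNoetherianRing A.carrier] (h : Sec M W₂ W₁ N d) (hW₂ : M.Gr W₂) (hY : M.Gr Y)
    (hX : W₂ ⊓ Y ≤ W₁) : Sec M (W₂ ⊔ Y) (W₁ ⊔ Y) N d := by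
  obtain ⟨hle, φ, hφ, hs, hk⟩ := h
  have hg : Y.subtype ∈ ghomSet (M.sub Y hY) M 0 := fun i x hx => by rw [add_zero]; exact hx
  obtain ⟨Φ, h1, h2, h3⟩ := glue hW₂ hφ hg (ψ := 0) ghom_zero (by
    intro p hp
    exact ((hk _).2 (hX ⟨hp, p.2⟩)).symm) (U := W₂ ⊔ Y) (by rw [Y.range_subtype])
  refine ⟨sup_le_sup_right hle _, Φ, h1, ?_, ?_⟩
  · intro y
    obtain ⟨w, rfl⟩ := hs y
    exact ⟨_, h2 w w.2 (Submodule.mem_sup_left w.2)⟩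
  · rintro ⟨x, hx⟩
    obtain ⟨w, hw, y, hy, rfl⟩ := Submodule.mem_sup.1 hx
    have e1 : (⟨w + y, hx⟩ : ↥(W₂ ⊔ Y)) = ⟨w, Submodule.mem_sup_left hw⟩ +
      ⟨y, Submodule.mem_sup_right hy⟩ := rfl
    have h3' : Φ ⟨y, Submodule.mem_sup_right hy⟩ = 0 := h3 ⟨y, hy⟩ (Submodule.mem_sup_right hy)
    rw [e1, map_add, h2 w hw, h3', add_zero, hk]
    constructor
    · intro h; exact Submodule.add_mem_sup h hy
    · intro h
      obtain ⟨w', hw', y', hy', h'⟩ := Submodule.mem_sup.1 h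
      have : w - w' ∈ W₁ := hX ⟨W₂.sub_mem hw (hle hw'), by
        have : w - w' = y' - y := by rw [sub_eq_sub_iff_add_eq_add]; simpa [add_comm] using h'.symm
        rw [this]; exact Y.sub_mem hy' hy⟩
      simpa using W₁.add_mem this hw'

end Transfer

section ChTransfer

variable {M M' N : GMod A} {W W' W₁ W₂ X Y : Submodule A.carrier M.carrier} {d e : ℤ}
  {Fam Fam' : Set (GMod A)}

theorem Ch.le (h : Ch Fam M W' W) : W' ≤ W := by
  induction h with
  | refl _ => exact le_rfl
  | step _ _ _ h ih => exact ih.trans h.1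

theorem Ch.gr (h : Ch Fam M W' W) : M.Gr W := by
  cases h <;> assumption

theorem Ch.gr' (h : Ch Fam M W' W) : M.Gr W' := by
  induction h with
  | refl _ => assumption
  | step _ _ _ h ih => exact ih

theorem Ch.mono (h : Ch Fam M W' W) (hF : Fam ⊆ Fam') : Ch Fam' M W' W := by
  induction h with
  | refl h => exact .refl h
  | step _ hg hN hs ih => exact .step ih hg (hF hN) hs

theorem Ch.trans (h : Ch Fam M W' W) (h' : Ch Fam M W W₁) : Ch Fam M W' W₁ := by
  induction h' with
  | refl _ => exact h
  | step _ hg hN hs ih => exact .step ih hg hN hs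

theorem Ch.inf (h : Ch Fam M W' W) (hX : M.Gr X) (hW : W ≤ W' ⊔ X) :
    Ch Fam M (W' ⊓ X) (W ⊓ X) := by
  induction h with
  | refl h => exact .refl (h.inf hX)
  | step h hg hN hs ih =>
    exact .step (ih (hs.1.trans hW)) (hg.inf hX) hN
      (hs.inf (hW.trans (sup_le_sup_right h.le _)))

theorem Ch.sup [IsNoetherianRing A.carrier] (h : Ch Fam M W' W) (hY : M.Gr Y)
    (hW : W ⊓ Y ≤ W') : Ch Fam M (W' ⊔ Y) (W ⊔ Y) := by
  induction h with
  | refl h => exact .refl (h.sup hY)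
  | step h hg hN hs ih =>
    exact .step (ih ((inf_le_inf_right _ hs.1).trans hW)) (hg.sup hY) hN
      (hs.sup hg hY (hW.trans h.le))

theorem Ch.comap (h : Ch Fam M W' W) {q : M'.carrier →ₗ[A.carrier] M.carrier}
    (hq : q ∈ ghomSet M' M e) (hr : W ≤ LinearMap.range q) :
    Ch Fam M' (W'.comap q) (W.comap q) := by
  induction h with
  | refl h => exact .refl (h.comap hq)
  | step h hg hN hs ih => exact .step (ih (hs.1.trans hr)) (hg.comap hq) hN (hs.comap hq hr)

theorem Ch.map (h : Ch Fam M W' W) {q : M.carrier →ₗ[A.carrier] M'.carrier}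
    (hq : q ∈ ghomSet M M' e) (hr : ∀ x ∈ W, q x = 0 → x ∈ W') :
    Ch Fam M' (W'.map q) (W.map q) := by
  induction h with
  | refl h => exact .refl (h.map hq)
  | step h hg hN hs ih =>
    exact .step (ih fun x hx => hr x (hs.1 hx)) (hg.map hq) hN
      (hs.map hg hq fun x hx h0 => h.le (hr x hx h0))

end ChTransfer

section SQ

variable {M N : GMod A} {W W' : Submodule A.carrier M.carrier}

theorem Sec.of_sqIso {n : ℤ} (hle : W' ≤ W) (h : SQIso M W W' (GMod.shift n N)) :
    Sec M W W' N (-n) := by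
  obtain ⟨e, he⟩ := h
  refine ⟨hle, e.toLinearMap ∘ₗ (W'.comap W.subtype).mkQ, ?_, ?_, ?_⟩
  · intro i x hx
    have : (e ((W'.comap W.subtype).mkQ x) : N.carrier) ∈ (GMod.shift n N).grading i := by
      rw [← he i]
      exact ⟨_, ⟨x, hx, rfl⟩, rfl⟩
    exact this
  · exact e.surjective.comp (Submodule.mkQ_surjective _)
  · intro x
    change e _ = 0 ↔ _
    rw [LinearEquiv.map_eq_zero_iff]
    exact Submodule.Quotient.mk_eq_zero _

theorem Sec.of_sqIso' (hle : W' ≤ W) (h : SQIso M W W' N) : Sec M W W' N 0 := by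
  obtain ⟨e, he⟩ := h
  refine ⟨hle, e.toLinearMap ∘ₗ (W'.comap W.subtype).mkQ, ?_, ?_, ?_⟩
  · intro i x hx
    rw [add_zero, ← he i]
    exact ⟨_, ⟨x, hx, rfl⟩, rfl⟩
  · exact e.surjective.comp (Submodule.mkQ_surjective _)
  · intro x
    change e _ = 0 ↔ _
    rw [LinearEquiv.map_eq_zero_iff]
    exact Submodule.Quotient.mk_eq_zero _

theorem Sec.sqIso {d : ℤ} (hW : M.Gr W) (h : Sec M W W' N d) :
    SQIso M W W' (GMod.shift (-d) N) := by
  obtain ⟨hle, φ, hφ, hs, hk⟩ := h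
  have hker : W'.comap W.subtype = LinearMap.ker φ := by
    ext x; exact (hk x).symm
  let e : (sqMod M W W') ≃ₗ[A.carrier] N.carrier :=
    (Submodule.quotEquivOfEq _ _ hker).trans (φ.quotKerEquivOfSurjective hs)
  have he : ∀ x : W, e ((W'.comap W.subtype).mkQ x) = φ x := fun x => rfl
  refine ⟨e, fun i => le_antisymm ?_ ?_⟩
  · rintro _ ⟨_, ⟨x, hx, rfl⟩, rfl⟩
    change φ x ∈ N.grading (i - -d)
    rw [sub_neg_eq_add]
    exact hφ i x hx
  · intro y hy
    change y ∈ N.grading (i - -d) at hy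
    rw [sub_neg_eq_add] at hy
    obtain ⟨x, rfl⟩ := hs (y : N.carrier)
    refine ⟨_, ⟨⟨M.pr i x, hW x x.2 i⟩, M.pr_mem i x, rfl⟩, ?_⟩
    change φ _ = φ x
    exact (hφ.pr hW i x).trans (N.pr_self hy)

end SQ


/-! ### Projectives and standard modules -/

section Lifting

variable [IsNoetherianRing A.carrier] {M N P : GMod A}

theorem sub_incl {W : Submodule A.carrier M.carrier} (hW : M.Gr W) :
    W.subtype ∈ ghomSet (M.sub W hW) M 0 := fun i x hx => by rw [add_zero]; exact hx

omit [IsNoetherianRing A.carrier] in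
theorem quot_mk {W : Submodule A.carrier M.carrier} (hW : M.Gr W) :
    W.mkQ ∈ ghomSet M (M.quot W hW) 0 := fun i x hx => by rw [add_zero]; exact ⟨x, hx, rfl⟩

/-- Lifting homogeneous maps of arbitrary degree from a projective through a map which is only
defined on a submodule. -/
theorem proj_lift (hP : GProjective P) {W : Submodule A.carrier M.carrier} (hW : M.Gr W)
    {c d e : ℤ} (hc : c + d = e) {φ : W →ₗ[A.carrier] N.carrier} (hφ : HomOn M W N d φ)
    {h : P.carrier →ₗ[A.carrier] N.carrier} (hh : h ∈ ghomSet P N e)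
    (hr : ∀ x, ∃ w, φ w = h x) :
    ∃ l : P.carrier →ₗ[A.carrier] M.carrier, l ∈ ghomSet P M c ∧ (∀ x, l x ∈ W) ∧
      ∀ x (hx : l x ∈ W), φ ⟨l x, hx⟩ = h x := by
  have hR := hφ.gr_range hW
  let X : GMod A := GMod.shift (-c) (M.sub W hW)
  let Y : GMod A := GMod.shift (-e) (N.sub _ hR)
  let g : X ⟶ Y := ⟨φ.rangeRestrict, fun i x hx => by
    change φ x ∈ N.grading (i - -e)
    have := hφ _ x hx
    rwa [show i - -c + d = i - -e by omega] at this⟩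
  let h' : P ⟶ Y := ⟨h.codRestrict (LinearMap.range φ) (fun x => hr x), fun i x hx => by
    change h x ∈ N.grading (i - -e)
    rw [sub_neg_eq_add]; exact hh i x hx⟩
  obtain ⟨l, hl⟩ := hP X Y g h' φ.surjective_rangeRestrict
  refine ⟨W.subtype ∘ₗ l.1, fun i x hx => ?_, fun x => (l.1 x).2, fun x _ => ?_⟩
  · rw [← sub_neg_eq_add]
    exact l.2 i x hx
  · have h1 : (l ≫ g).1 x = h'.1 x := by rw [hl]
    exact congrArg Subtype.val h1

theorem proj_lift' (hP : GProjective P) {c d e : ℤ} (hc : c + d = e)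
    {g : M.carrier →ₗ[A.carrier] N.carrier} (hg : g ∈ ghomSet M N d)
    {h : P.carrier →ₗ[A.carrier] N.carrier} (hh : h ∈ ghomSet P N e)
    (hr : ∀ x, ∃ w, g w = h x) :
    ∃ l : P.carrier →ₗ[A.carrier] M.carrier, l ∈ ghomSet P M c ∧ ∀ x, g (l x) = h x := by
  obtain ⟨l, h1, _, h3⟩ := proj_lift hP GMod.Gr.top hc (homOn_of_ghom hg ⊤) hh (fun x => by
    obtain ⟨w, hw⟩ := hr x
    exact ⟨⟨w, trivial⟩, hw⟩)
  exact ⟨l, h1, fun x => h3 x trivial⟩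

end Lifting

namespace AHW

variable [IsNoetherianRing A.carrier] (S : AHW A Idx) {M N : GMod A}

/-- Strict inclusions of homogeneous submodules are detected by the projectives. -/
theorem exists_hom {W W' : Submodule A.carrier M.carrier} (hW : M.Gr W) (hW' : M.Gr W')
    (hlt : W' < W) : ∃ τ d, ∃ g ∈ ghomSet (S.P τ) M d, (∀ x, g x ∈ W) ∧ ∃ x, g x ∉ W' := by
  have := M.isNoeth
  obtain ⟨W₁, ⟨h1, h2, h3⟩, hmax⟩ := (wellFounded_gt (α := Submodule A.carrier M.carrier)).has_min
    {X | M.Gr X ∧ W' ≤ X ∧ X < W} ⟨W', hW', le_rfl, hlt⟩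
  have hC : (M.sub W hW).Gr (W₁.comap W.subtype) := GMod.Gr.comap (sub_incl hW) h1
  let T : GMod A := (M.sub W hW).quot (W₁.comap W.subtype) hC
  let q : W →ₗ[A.carrier] T.carrier := (W₁.comap W.subtype).mkQ
  have hq : q ∈ ghomSet (M.sub W hW) T 0 := quot_mk hC
  have hq0 : ∀ x : W, q x = 0 ↔ (x : M.carrier) ∈ W₁ :=
    fun x => Submodule.Quotient.mk_eq_zero _
  have hqs : Function.Surjective q := Submodule.mkQ_surjective _
  have hT : IsGSimple T := by
    refine ⟨?_, fun Z hZ => ?_⟩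
    · obtain ⟨x, hx, hx'⟩ := SetLike.exists_of_lt h3
      exact ⟨⟨q ⟨x, hx⟩, 0, fun h => hx' ((hq0 _).1 h)⟩⟩
    · rw [GMod.isGSub_iff] at hZ
      have hX : M.Gr ((Z.comap q).map W.subtype) :=
        GMod.Gr.map (sub_incl hW) (GMod.Gr.comap hq hZ)
      have hXW : (Z.comap q).map W.subtype ≤ W := Submodule.map_subtype_le _ _
      have hWX : W₁ ≤ (Z.comap q).map W.subtype := fun x hx =>
        ⟨⟨x, h3.le hx⟩, by
          change q _ ∈ Z
          rw [(hq0 _).2 hx]; exact Z.zero_mem, rfl⟩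
      rcases eq_or_lt_of_le hXW with h | h
      · right
        rw [eq_top_iff]
        intro y _
        obtain ⟨w, rfl⟩ := hqs y
        obtain ⟨w', hw', hww⟩ := (h.symm ▸ w.2 : (w : M.carrier) ∈ (Z.comap q).map W.subtype)
        rwa [show w' = w from Subtype.ext hww] at hw'
      · left
        have heq : W₁ = (Z.comap q).map W.subtype := by
          by_contra hne
          exact hmax _ ⟨hX, h2.trans hWX, h⟩ (lt_of_le_of_ne hWX hne)
        rw [eq_bot_iff]
        intro y hy
        obtain ⟨w, rfl⟩ := hqs y
        exact (hq0 _).2 (heq ▸ ⟨w, hy, rfl⟩)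
  obtain ⟨π, d, ⟨e⟩⟩ := S.simple_complete T hT
  obtain ⟨p, hp, -⟩ := S.cover π
  let ee : (S.L π).carrier →ₗ[A.carrier] T.carrier := e.e.symm.toLinearMap
  obtain ⟨l, hl, hlW, hlq⟩ := proj_lift (M := M) (N := T) (S.proj π) hW (c := d) (d := 0) (e := d)
    (add_zero d) (φ := q) (fun i x hx => hq i x hx)
    (h := ee ∘ₗ p.1) (fun i x hx => by
      refine e.mem' _ _ ?_
      change p.1 x ∈ (S.L π).grading (i + d - d)
      rw [add_sub_cancel_right]
      exact p.2 i x hx) (fun x => hqs _)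
  refine ⟨π, d, l, hl, hlW, ?_⟩
  by_contra! hcon
  obtain ⟨y, hy⟩ := (S.simple π).1.exists_pair_ne
  obtain ⟨y', hy⟩ := hy
  have hz : ∀ y : (S.L π).carrier, y = 0 := by
    intro y
    obtain ⟨x, rfl⟩ := hp y
    have h := hlq x (hlW x)
    rw [(hq0 _).2 (h2 (hcon x))] at h
    exact (LinearEquiv.map_eq_zero_iff e.e.symm).1 h.symm
  exact hy ((hz y).trans (hz y').symm)

omit [IsNoetherianRing A.carrier] in
/-- `Δ(π)` is a local module. -/
theorem std_local (π : Idx) {W₁ W₂ : Submodule A.carrier (S.Δ π).carrier}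
    (h₁ : (S.Δ π).Gr W₁) (h₂ : (S.Δ π).Gr W₂) (h : W₁ ⊔ W₂ = ⊤) : W₁ = ⊤ ∨ W₂ = ⊤ := by
  obtain ⟨dm, hdm, -⟩ := S.std_def π
  obtain ⟨p, hp, hcov⟩ := S.cover π
  have hdm' : dm.1 ∈ ghomSet (S.P π) (S.Δ π) 0 := fun i x hx => by
    rw [add_zero]; exact dm.2 i x hx
  have hp' : p.1 ∈ ghomSet (S.P π) (S.L π) 0 := fun i x hx => by
    rw [add_zero]; exact p.2 i x hx
  have key : ∀ W, (S.Δ π).Gr W → W ≠ ⊤ → W.comap dm.1 ≤ LinearMap.ker p.1 := by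
    intro W hW hne
    have hX := GMod.Gr.comap hdm' hW
    have hXne : W.comap dm.1 ≠ ⊤ := by
      intro h
      apply hne
      rw [eq_top_iff]
      intro y _
      obtain ⟨x, rfl⟩ := hdm y
      exact (h.symm ▸ trivial : x ∈ W.comap dm.1)
    rcases (S.simple π).2 ((W.comap dm.1).map p.1)
      (((S.L π).isGSub_iff _).2 (GMod.Gr.map hp' hX)) with h | h
    · intro x hx
      exact (Submodule.mem_bot _).1 (h ▸ Submodule.mem_map_of_mem hx)
    · exfalso
      refine hXne (hcov _ (((S.P π).isGSub_iff _).2 hX) ?_)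
      rw [eq_top_iff]
      intro x _
      obtain ⟨y, hy, hyx⟩ := (h.symm ▸ trivial : p.1 x ∈ (W.comap dm.1).map p.1)
      rw [← add_sub_cancel y x]
      exact Submodule.add_mem_sup hy (by
        change p.1 _ = 0
        rw [map_sub, hyx, sub_self])
  by_contra! hcon
  have k1 := key _ h₁ hcon.1
  have k2 := key _ h₂ hcon.2
  have hz : ∀ y : (S.L π).carrier, y = 0 := by
    intro y
    obtain ⟨x, rfl⟩ := hp y
    obtain ⟨w₁, hw₁, w₂, hw₂, hw⟩ := Submodule.mem_sup.1 (h.symm ▸ trivial : dm.1 x ∈ W₁ ⊔ W₂)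
    obtain ⟨x₁, rfl⟩ := hdm w₁
    have : x = x₁ + (x - x₁) := by abel
    rw [this, map_add, show p.1 x₁ = 0 from k1 hw₁, show p.1 (x - x₁) = 0 from k2 (by
      change dm.1 (x - x₁) ∈ W₂
      rw [map_sub, ← hw, add_sub_cancel_left]; exact hw₂), add_zero]
  obtain ⟨y, y', hy⟩ := (S.simple π).1.exists_pair_ne
  exact hy ((hz y).trans (hz y').symm)

theorem hom_std_zero {τ π : Idx} (h : ¬ τ ≤ π) {d : ℤ}
    {f : (S.P τ).carrier →ₗ[A.carrier] (S.Δ π).carrier} (hf : f ∈ ghomSet (S.P τ) (S.Δ π) d) :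
    f = 0 := by
  obtain ⟨dm, hdm, hker⟩ := S.std_def π
  have hdm' : dm.1 ∈ ghomSet (S.P π) (S.Δ π) 0 := fun i x hx => by
    rw [add_zero]; exact dm.2 i x hx
  obtain ⟨l, hl, hl'⟩ := proj_lift' (S.proj τ) (add_zero d) hdm' hf (fun x => hdm _)
  ext x
  rw [← hl' x]
  have : l x ∈ LinearMap.ker dm.1 := by
    rw [hker]
    refine Submodule.mem_iSup_of_mem ⟨τ, l⟩ ?_
    exact Submodule.mem_iSup_of_mem h (Submodule.mem_iSup_of_mem ⟨d, hl⟩ ⟨x, rfl⟩)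
  exact this

omit [IsNoetherianRing A.carrier] in
theorem ch_of_filt {Fam : Set (GMod A)} (Φ : GFilt M) (a : ℕ)
    (h : ∀ n, a ≤ n → Subsingleton (sqMod M (Φ.F n) (Φ.F (n + 1))) ∨
      ∃ N ∈ Fam, ∃ d : ℤ, SQIso M (Φ.F n) (Φ.F (n + 1)) (GMod.shift d N)) (m : ℕ) :
    Ch Fam M (Φ.F (a + m)) (Φ.F a) := by
  have hg : ∀ n, M.Gr (Φ.F n) := fun n => (M.isGSub_iff _).1 (Φ.graded n)
  induction m with
  | zero => exact .refl (hg _)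
  | succ m ih =>
    refine Ch.trans ?_ ih
    change Ch Fam M (Φ.F (a + m + 1)) _
    rcases h (a + m) (by omega) with h | ⟨N, hN, d, h⟩
    · have : Φ.F (a + m) ≤ Φ.F (a + m + 1) := by
        rw [Submodule.Quotient.subsingleton_iff, Submodule.comap_subtype_eq_top] at h
        exact h
      rw [le_antisymm this (Φ.anti _)]
      exact .refl (hg _)
    · exact .step (.refl (hg _)) (hg _) hN (Sec.of_sqIso (Φ.anti _) h)

omit [IsNoetherianRing A.carrier] in
theorem exists_δ (π : Idx) : ∃ δ : (S.P π).carrier →ₗ[A.carrier] (S.Δ π).carrier,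
    δ ∈ ghomSet (S.P π) (S.Δ π) 0 ∧ Function.Surjective δ ∧
    Ch (S.Δ '' {σ | π < σ}) (S.P π) ⊥ (LinearMap.ker δ) := by
  obtain ⟨Φ, ⟨n, hn⟩, h0, h1⟩ := S.ker_filt π
  obtain ⟨-, φ, hφ, hs, hk⟩ := Sec.of_sqIso' (Φ.anti 0) h0
  let i : (S.P π).carrier →ₗ[A.carrier] Φ.F 0 :=
    LinearMap.codRestrict _ LinearMap.id (fun x => Φ.first.symm ▸ trivial)
  refine ⟨φ ∘ₗ i, fun j x hx => hφ j _ hx, fun y => ?_, ?_⟩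
  · obtain ⟨x, rfl⟩ := hs y
    exact ⟨x.1, rfl⟩
  · have e1 : LinearMap.ker (φ ∘ₗ i) = Φ.F 1 := by
      ext x; exact hk (i x)
    have hanti : Antitone Φ.F := antitone_nat_of_succ_le Φ.anti
    have e2 : Φ.F (1 + n) = ⊥ := by
      rw [eq_bot_iff, ← hn]; exact hanti (by omega)
    rw [e1, ← e2]
    refine ch_of_filt Φ 1 (fun m hm => ?_) n
    rcases h1 m hm with h | ⟨σ, hσ, d, h⟩
    · exact .inl h
    · exact .inr ⟨_, ⟨σ, hσ, rfl⟩, d, h⟩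

/-- The surjection `P(π) → Δ(π)` whose kernel is filtered by larger standard modules. -/
noncomputable def δ (π : Idx) : (S.P π).carrier →ₗ[A.carrier] (S.Δ π).carrier :=
  (S.exists_δ π).choose

/-- The kernel of `P(π) → Δ(π)`. -/
noncomputable def K (π : Idx) : Submodule A.carrier (S.P π).carrier := LinearMap.ker (S.δ π)

end AHW

namespace AHW

variable (S : AHW A Idx) {M N : GMod A}

theorem δ_mem (π : Idx) : S.δ π ∈ ghomSet (S.P π) (S.Δ π) 0 := (S.exists_δ π).choose_spec.1

theorem δ_surj (π : Idx) : Function.Surjective (S.δ π) := (S.exists_δ π).choose_spec.2.1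

theorem K_ch (π : Idx) : Ch (S.Δ '' {σ | π < σ}) (S.P π) ⊥ (S.K π) :=
  (S.exists_δ π).choose_spec.2.2

theorem K_gr (π : Idx) : (S.P π).Gr (S.K π) := GMod.Gr.ker (S.δ_mem π)

theorem mem_K {π : Idx} {x : (S.P π).carrier} : x ∈ S.K π ↔ S.δ π x = 0 := Iff.rfl

theorem P_ch (π : Idx) : Ch (S.Δ '' {σ | π ≤ σ}) (S.P π) ⊥ ⊤ := by
  refine .step (N := S.Δ π) (d := 0)
    ((S.K_ch π).mono (Set.image_mono fun σ hσ => le_of_lt hσ)) GMod.Gr.top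
    ⟨π, le_rfl, rfl⟩ ⟨le_top, S.δ π ∘ₗ (⊤ : Submodule A.carrier (S.P π).carrier).subtype,
      homOn_of_ghom (S.δ_mem π) _, ?_, fun x => Iff.rfl⟩
  intro y
  obtain ⟨x, rfl⟩ := S.δ_surj π y
  exact ⟨⟨x, trivial⟩, rfl⟩

/-- All homogeneous maps `P(τ) → W` land in `X`. -/
def HL (S : AHW A Idx) (M : GMod A) (τ : Idx) (W X : Submodule A.carrier M.carrier) : Prop :=
  ∀ (d : ℤ) (g : (S.P τ).carrier →ₗ[A.carrier] M.carrier), g ∈ ghomSet (S.P τ) M d →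
    (∀ x, g x ∈ W) → ∀ x, g x ∈ X

variable {S}

theorem HL.mono {τ : Idx} {W W' X X' : Submodule A.carrier M.carrier} (h : S.HL M τ W X)
    (hW : W' ≤ W) (hX : X ≤ X') : S.HL M τ W' X' :=
  fun d g hg hgW x => hX (h d g hg (fun x => hW (hgW x)) x)

/-- There are no maps `P(τ) → N`. -/
def HZ (S : AHW A Idx) (τ : Idx) (N : GMod A) : Prop :=
  ∀ (d : ℤ) (g : (S.P τ).carrier →ₗ[A.carrier] N.carrier), g ∈ ghomSet (S.P τ) N d → g = 0

variable [IsNoetherianRing A.carrier]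

/-- A module filtered by standard modules is generated by images of the corresponding
projectives. -/
theorem ch_gen {Λ : Set Idx} {W₁ W₂ X : Submodule A.carrier M.carrier}
    (h : Ch (S.Δ '' Λ) M W₁ W₂) (hX : W₁ ≤ X) (hL : ∀ τ ∈ Λ, S.HL M τ W₂ X) : W₂ ≤ X := by
  induction h with
  | refl _ => exact hX
  | step h hg hN hs ih =>
    obtain ⟨σ, hσ, rfl⟩ := hN
    obtain ⟨hle, φ, hφ, hsu, hk⟩ := hs
    have ih := ih fun τ hτ => (hL τ hτ).mono hle le_rfl
    obtain ⟨l, hl, hlW, hlφ⟩ := proj_lift (S.proj σ) hg (neg_add_cancel _) hφ (S.δ_mem σ)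
      (fun x => hsu _)
    intro w hw
    obtain ⟨p, hp⟩ := S.δ_surj σ (φ ⟨w, hw⟩)
    have h1 := (hk (⟨w, hw⟩ - ⟨l p, hlW p⟩)).1 (by rw [map_sub, hlφ, hp, sub_self])
    have h2 := X.add_mem (ih h1) (hL σ hσ _ l hl hlW p)
    simpa using h2

theorem factor {π : Idx} {W U : Submodule A.carrier M.carrier} {d : ℤ}
    {g : (S.P π).carrier →ₗ[A.carrier] M.carrier} (hg : g ∈ ghomSet (S.P π) M d)
    (hgU : ∀ x, g x ∈ U) (h : ∀ τ, π < τ → S.HL M τ U W) : ∀ x ∈ S.K π, g x ∈ W := by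
  have := ch_gen (X := W.comap g) (S.K_ch π) bot_le (fun τ hτ e f hf _ x =>
    h τ hτ _ (g ∘ₗ f) (ghom_comp hf hg) (fun x => hgU _) x)
  exact this

theorem K_hom_zero {π : Idx} (h : ∀ τ, π < τ → S.HZ τ N) {d : ℤ}
    {f : S.K π →ₗ[A.carrier] N.carrier} (hf : HomOn (S.P π) (S.K π) N d f) : f = 0 := by
  have := ch_gen (X := (LinearMap.ker f).map (S.K π).subtype) (S.K_ch π) bot_le
    (fun τ hτ e g hg hgK x => by
      refine ⟨⟨g x, hgK x⟩, ?_, rfl⟩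
      have h0 : f ∘ₗ g.codRestrict _ hgK = 0 := h τ hτ (e + d) _ (fun i x hx => by
        rw [← add_assoc]
        exact hf _ _ (hg i x hx))
      exact LinearMap.congr_fun h0 x)
  ext x
  obtain ⟨y, hy, hyx⟩ := this x.2
  rw [← show y = x from Subtype.ext hyx]
  exact hy

theorem hz_std {τ π : Idx} (h : ¬ τ ≤ π) : S.HZ τ (S.Δ π) := fun _ _ hf => S.hom_std_zero h hf

variable (S)

omit [IsNoetherianRing A.carrier] in
theorem std_nontrivial (π : Idx) : ∃ x, S.δ π x ≠ 0 := by
  obtain ⟨f₀, -, h, -⟩ := S.pco_hom π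
  by_contra! hcon
  apply h
  ext y
  obtain ⟨x, rfl⟩ := S.δ_surj π y
  rw [hcon x, map_zero, map_zero]

omit [IsNoetherianRing A.carrier] in
/-- Homogeneous endomorphisms of `Δ(π)` have nonnegative degree, and those of degree `0` are
scalars. -/
theorem end_std (π : Idx) {t : ℤ} {b : (S.Δ π).carrier →ₗ[A.carrier] (S.Δ π).carrier}
    (hb : b ∈ ghomSet (S.Δ π) (S.Δ π) t) :
    (t < 0 → b = 0) ∧ (t = 0 → ∃ c : k, b = c • LinearMap.id) := by
  obtain ⟨nv, dg, hdg, e, he, hX⟩ := S.end_poly π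
  have key : ∀ q : MvPolynomial (Fin nv) k, ∃ c : k, ∀ (i : ℤ) (x : (S.Δ π).carrier),
      x ∈ (S.Δ π).grading i → (S.Δ π).pr i (e q x) = c • x ∧
        ∀ t : ℤ, t < 0 → (S.Δ π).pr (i + t) (e q x) = 0 := by
    intro q
    induction q using MvPolynomial.induction_on with
    | C a =>
      refine ⟨a, fun i x hx => ?_⟩
      have h : e (MvPolynomial.C a) x = a • x := by
        rw [← MvPolynomial.algebraMap_eq, AlgHom.commutes]; rfl
      have h' : a • x ∈ (S.Δ π).grading i := Submodule.smul_mem _ a hx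
      rw [h]
      exact ⟨(S.Δ π).pr_self h', fun t ht => (S.Δ π).pr_ne h' (by omega)⟩
    | add p q hp hq =>
      obtain ⟨c, hc⟩ := hp
      obtain ⟨c', hc'⟩ := hq
      refine ⟨c + c', fun i x hx => ⟨?_, fun t ht => ?_⟩⟩
      · rw [map_add, LinearMap.add_apply, map_add, (hc i x hx).1, (hc' i x hx).1, add_smul]
      · rw [map_add, LinearMap.add_apply, map_add, (hc i x hx).2 t ht, (hc' i x hx).2 t ht,
          add_zero]
    | mul_X p n hp =>
      obtain ⟨c, hc⟩ := hp
      refine ⟨0, fun i x hx => ?_⟩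
      have h1 := hX n i x hx
      have h2 := (hc _ _ h1).2
      have h3 : e (p * MvPolynomial.X n) x = e p (e (MvPolynomial.X n) x) := by
        rw [map_mul]; rfl
      rw [h3]
      have := hdg n
      refine ⟨?_, fun t ht => ?_⟩
      · have := h2 (- dg n) (by omega)
        rw [add_neg_cancel_right] at this
        rw [this, zero_smul]
      · have := h2 (t - dg n) (by omega)
        rwa [show i + dg n + (t - dg n) = i + t by ring] at this
  obtain ⟨q, hq⟩ := he.2 b
  obtain ⟨c, hc⟩ := key q
  rw [hq] at hc
  constructor
  · intro ht
    ext x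
    refine (S.Δ π).ind (p := fun x => b x = (0 : _ →ₗ[A.carrier] (S.Δ π).carrier) x) (by simp) ?_ ?_ x
    · intro x y hx hy; simp [hx, hy]
    · intro i x hx
      rw [← (S.Δ π).pr_self (hb i x hx), (hc i x hx).2 t ht]; rfl
  · rintro rfl
    refine ⟨c, ?_⟩
    ext x
    refine (S.Δ π).ind (p := fun x => b x = (c • (LinearMap.id : _ →ₗ[A.carrier] (S.Δ π).carrier)) x)
      (by simp) ?_ ?_ x
    · intro x y hx hy; simp only [map_add, hx, hy]
    · intro i x hx
      have := hb i x hx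
      rw [add_zero] at this
      rw [← (S.Δ π).pr_self this, (hc i x hx).1]; rfl

end AHW


/-! ### Vanishing of extensions -/

section

variable {M N : GMod A}

theorem ghom_inj_mem {d : ℤ} {f : M.carrier →ₗ[A.carrier] N.carrier} (hf : f ∈ ghomSet M N d)
    (hi : Function.Injective f) {i : ℤ} {x : M.carrier} (hx : f x ∈ N.grading (i + d)) :
    x ∈ M.grading i := by
  have : M.pr i x = x := hi (by rw [ghom_pr hf, N.pr_self hx])
  rw [← this]; exact M.pr_mem i x

/-- A homogeneous map into the image of a homogeneous injection factors through it. -/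
theorem exists_lift_inj {P : GMod A} {c d e : ℤ} (hc : c + e = d)
    {f : M.carrier →ₗ[A.carrier] N.carrier} (hf : f ∈ ghomSet M N e)
    (hi : Function.Injective f) {W : Submodule A.carrier P.carrier}
    {u : W →ₗ[A.carrier] N.carrier} (hu : HomOn P W N d u)
    (hr : ∀ x, u x ∈ LinearMap.range f) :
    ∃ h : W →ₗ[A.carrier] M.carrier, HomOn P W M c h ∧ ∀ x, f (h x) = u x := by
  let h : W →ₗ[A.carrier] M.carrier := (LinearEquiv.ofInjective f hi).symm.toLinearMap ∘ₗ
    u.codRestrict _ hr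
  have hh : ∀ x, f (h x) = u x := fun x =>
    congrArg Subtype.val ((LinearEquiv.ofInjective f hi).apply_symm_apply ⟨u x, hr x⟩)
  refine ⟨h, fun i x hx => ghom_inj_mem hf hi ?_, hh⟩
  rw [hh, add_assoc, hc]
  exact hu i x hx

theorem exists_lift_inj' {P : GMod A} {c d e : ℤ} (hc : c + e = d)
    {f : M.carrier →ₗ[A.carrier] N.carrier} (hf : f ∈ ghomSet M N e)
    (hi : Function.Injective f)
    {u : P.carrier →ₗ[A.carrier] N.carrier} (hu : u ∈ ghomSet P N d)
    (hr : ∀ x, u x ∈ LinearMap.range f) :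
    ∃ h : P.carrier →ₗ[A.carrier] M.carrier, h ∈ ghomSet P M c ∧ ∀ x, f (h x) = u x := by
  obtain ⟨h, hh, hfh⟩ := exists_lift_inj hc hf hi (homOn_of_ghom hu ⊤) (fun x => hr x)
  exact ⟨h ∘ₗ LinearMap.codRestrict ⊤ LinearMap.id (fun _ => trivial),
    fun i x hx => hh i _ hx, fun x => hfh _⟩

end

namespace AHW

variable (S : AHW A Idx) {M N : GMod A}

/-- Every homogeneous map `K(π) → U` extends to `P(π)`; this says that
`ext¹(Δ(π), U)` vanishes. -/
def GoodAt (π : Idx) (N : GMod A) (U : Submodule A.carrier N.carrier) : Prop :=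
  ∀ (d : ℤ) (f : S.K π →ₗ[A.carrier] N.carrier), HomOn (S.P π) (S.K π) N d f →
    (∀ x, f x ∈ U) → ∃ h : (S.P π).carrier →ₗ[A.carrier] N.carrier, h ∈ ghomSet (S.P π) N d ∧
      (∀ x, h x ∈ U) ∧ ∀ x (hx : x ∈ S.K π), h x = f ⟨x, hx⟩

/-- The extension groups `ext¹(Δ(π), U)` vanish for all `π`. -/
def Good (N : GMod A) (U : Submodule A.carrier N.carrier) : Prop := ∀ π, S.GoodAt π N U

/-- The extension of a shift of `Δ(π)` by `M` obtained as the pushout of `P(π)` along a map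
`K(π) → M`. -/
theorem exists_pushout {π : Idx} {e : ℤ} {f : S.K π →ₗ[A.carrier] M.carrier}
    (hf : HomOn (S.P π) (S.K π) M e f) :
    ∃ (E : GMod A) (ι : M.carrier →ₗ[A.carrier] E.carrier), ι ∈ ghomSet M E 0 ∧
      Function.Injective ι ∧
      ∃ g : (S.P π).carrier →ₗ[A.carrier] E.carrier, g ∈ ghomSet (S.P π) E e ∧
        (∀ x (hx : x ∈ S.K π), g x = ι (f ⟨x, hx⟩)) ∧
        ∃ φ : E.carrier →ₗ[A.carrier] (S.Δ π).carrier, φ ∈ ghomSet E (S.Δ π) (-e) ∧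
          Function.Surjective φ ∧ (∀ x, φ x = 0 ↔ x ∈ LinearMap.range ι) ∧
          ∀ x, φ (g x) = S.δ π x := by
  let X : GMod A := M.prod (S.P π) e
  let r : S.K π →ₗ[A.carrier] X.carrier := LinearMap.prod f (-(S.K π).subtype)
  have hprX : ∀ i (x : X.carrier), X.pr i x = (M.pr i x.1, (S.P π).pr (i - e) x.2) := by
    intro i x
    refine X.ind (p := fun x => X.pr i x = (M.pr i x.1, (S.P π).pr (i - e) x.2)) ?_ ?_ ?_ x
    · exact (map_zero _).trans (Prod.ext (map_zero _).symm (map_zero _).symm)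
    · intro x y hx hy
      rw [map_add, hx, hy]
      exact Prod.ext (map_add (M.pr i) x.1 y.1).symm (map_add ((S.P π).pr (i - e)) x.2 y.2).symm
    · rintro j x hx
      by_cases h : j = i
      · subst h
        rw [X.pr_self hx]
        exact Prod.ext (M.pr_self hx.1).symm ((S.P π).pr_self hx.2).symm
      · rw [X.pr_ne hx h, M.pr_ne hx.1 h, (S.P π).pr_ne hx.2 (by omega)]; rfl
  have hR : X.Gr (LinearMap.range r) := by
    rintro _ ⟨x, rfl⟩ i
    refine ⟨⟨(S.P π).pr (i - e) x, S.K_gr π x x.2 _⟩, ?_⟩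
    rw [hprX]
    refine Prod.ext ?_ ?_
    · refine (hf.pr (S.K_gr π) (i - e) x).trans ?_
      rw [sub_add_cancel]; rfl
    · change -(S.P π).pr (i - e) x = (S.P π).pr (i - e) (-(x : (S.P π).carrier))
      rw [map_neg]
  let E : GMod A := X.quot (LinearMap.range r) hR
  let q : X.carrier →ₗ[A.carrier] E.carrier := (LinearMap.range r).mkQ
  have hq0 : ∀ x, q x = 0 ↔ x ∈ LinearMap.range r := fun x => Submodule.Quotient.mk_eq_zero _
  have hq : q ∈ ghomSet X E 0 := quot_mk hR
  have hqs : Function.Surjective q := Submodule.mkQ_surjective _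
  let ι : M.carrier →ₗ[A.carrier] E.carrier := q ∘ₗ LinearMap.inl _ _ _
  let g : (S.P π).carrier →ₗ[A.carrier] E.carrier := q ∘ₗ LinearMap.inr _ _ _
  obtain ⟨φ, hφ⟩ := exists_factor q (S.δ π ∘ₗ LinearMap.snd _ _ _) hqs (by
    intro x hx
    obtain ⟨y, rfl⟩ := (hq0 x).1 hx
    change S.δ π (-(y : (S.P π).carrier)) = 0
    rw [map_neg, S.mem_K.1 y.2, neg_zero])
  refine ⟨E, ι, ?_, ?_, g, ?_, ?_, φ, ?_, ?_, ?_, fun x => hφ (0, x)⟩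
  · intro i x hx
    exact hq i _ ⟨hx, zero_mem _⟩
  · rw [injective_iff_map_eq_zero]
    intro x hx
    obtain ⟨y, hy⟩ := (hq0 _).1 hx
    have h1 : f y = x := congrArg Prod.fst hy
    have h2 : -(y : (S.P π).carrier) = 0 := congrArg Prod.snd hy
    rw [← h1, show y = 0 from Subtype.ext (neg_eq_zero.1 h2), map_zero]
  · intro i x hx
    have h := hq (i + e) ((0 : M.carrier), x) ⟨zero_mem _, by
      rw [add_sub_cancel_right]; exact hx⟩
    rwa [add_zero] at h
  · intro x hx
    rw [← sub_eq_zero]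
    change q (0, x) - q (f ⟨x, hx⟩, 0) = 0
    rw [← map_sub, hq0]
    refine ⟨-⟨x, hx⟩, ?_⟩
    refine Prod.ext ?_ ?_
    · change f (-⟨x, hx⟩) = 0 - f ⟨x, hx⟩
      rw [map_neg, zero_sub]
    · change - -x = x - 0
      rw [neg_neg, sub_zero]
  · rintro i _ ⟨x, hx, rfl⟩
    change φ (q x) ∈ _
    rw [hφ, ← sub_eq_add_neg]
    have := S.δ_mem π _ _ hx.2
    rwa [add_zero] at this
  · intro y
    obtain ⟨x, rfl⟩ := S.δ_surj π y
    exact ⟨q (0, x), hφ (0, x)⟩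
  · intro y
    obtain ⟨x, rfl⟩ := hqs y
    change φ (q x) = 0 ↔ q x ∈ _
    rw [hφ]
    constructor
    · intro h
      have hxK : x.2 ∈ S.K π := h
      refine ⟨x.1 + f ⟨x.2, hxK⟩, ?_⟩
      rw [← sub_eq_zero]
      change q (x.1 + f ⟨x.2, hxK⟩, 0) - q x = 0
      rw [← map_sub, hq0]
      refine ⟨⟨x.2, hxK⟩, Prod.ext ?_ ?_⟩
      · change f ⟨x.2, hxK⟩ = x.1 + f ⟨x.2, hxK⟩ - x.1
        abel
      · change -x.2 = 0 - x.2
        rw [zero_sub]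
    · rintro ⟨m, hm⟩
      have : q (x - (m, 0)) = 0 := by
        rw [map_sub, ← hm]; exact sub_self _
      obtain ⟨y, hy⟩ := (hq0 _).1 this
      have h2 : -(y : (S.P π).carrier) = x.2 - 0 := congrArg Prod.snd hy
      change S.δ π x.2 = 0
      rw [sub_zero] at h2
      rw [← h2, map_neg, S.mem_K.1 y.2, neg_zero]

theorem good_pco (π : Idx) : S.Good (S.pco π) ⊤ := by
  intro σ d f hf _
  obtain ⟨E, ι, hι, hinj, g, hg, hgf, φ, hφ, hs, hk, hφg⟩ := S.exists_pushout hf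
  obtain ⟨s, hs'⟩ := S.pco_ext π σ d E
    ⟨ι, fun i x hx => by simpa using hι i x hx⟩
    ⟨φ, fun i x hx => by
      change φ x ∈ (S.Δ σ).grading (i - d)
      rw [sub_eq_add_neg]; exact hφ i x hx⟩ hinj hs (by
      ext x; exact (hk x).symm)
  let s1 : (S.Δ σ).carrier →ₗ[A.carrier] E.carrier := s.1
  have hs1 : ∀ y, φ (s1 y) = y := fun y => congrArg (fun t => t.1 y) hs'
  have hs1d : s1 ∈ ghomSet (S.Δ σ) E d := fun i x hx =>
    s.2 (i + d) x (by
      change x ∈ (S.Δ σ).grading (i + d - d)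
      rwa [add_sub_cancel_right])
  have hg' : g - s1 ∘ₗ S.δ σ ∈ ghomSet (S.P σ) E d := ghom_sub hg (by
    have := ghom_comp (S.δ_mem σ) hs1d
    rwa [zero_add] at this)
  obtain ⟨h, hh, hιh⟩ := exists_lift_inj' (add_zero d) hι hinj hg' (fun x => by
    rw [← hk]
    change φ (g x - s1 (S.δ σ x)) = 0
    rw [map_sub, hφg, hs1, sub_self])
  refine ⟨h, hh, fun _ => trivial, fun x hx => hinj ?_⟩
  rw [hιh, ← hgf]
  change g x - s1 (S.δ σ x) = g x
  rw [S.mem_K.1 hx, map_zero, sub_zero]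

variable {S} {W W₁ : Submodule A.carrier M.carrier} {d t : ℤ}

variable [IsNoetherianRing A.carrier]

/-- Maps into `N` extend along `W₁ ≤ W` when `W / W₁` is a shift of `Δ(τ)` and
`ext¹(Δ(τ), N) = 0`. -/
theorem GoodAt.extend {τ : Idx} (hN : S.GoodAt τ N ⊤) (hW : M.Gr W) (hW₁ : M.Gr W₁)
    (h : Sec M W W₁ (S.Δ τ) d) {ψ : W₁ →ₗ[A.carrier] N.carrier} (hψ : HomOn M W₁ N t ψ) :
    ∃ Ψ : W →ₗ[A.carrier] N.carrier, HomOn M W N t Ψ ∧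
      ∀ x (hx : x ∈ W₁) (hx' : x ∈ W), Ψ ⟨x, hx'⟩ = ψ ⟨x, hx⟩ := by
  obtain ⟨hle, φ, hφ, hs, hk⟩ := h
  obtain ⟨l, hl, hlW, hlφ⟩ := proj_lift (S.proj τ) hW (neg_add_cancel d) hφ (S.δ_mem τ)
    (fun x => hs _)
  have hlK : ∀ x, l x ∈ W₁ ↔ x ∈ S.K τ := fun x => by
    rw [S.mem_K, ← hlφ x (hlW x), hk]
  obtain ⟨h, hh, -, hhx⟩ := hN (-d + t)
    (ψ ∘ₗ (l ∘ₗ (S.K τ).subtype).codRestrict W₁ (fun x => (hlK x).2 x.2)) (fun i x hx => by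
      rw [← add_assoc]
      exact hψ _ _ (hl i _ hx)) (fun _ => trivial)
  obtain ⟨Ψ, h1, h2, -⟩ := glue hW₁ hψ hl hh (fun p hp => hhx p ((hlK p).1 hp)) (U := W) (by
    refine le_antisymm (fun w hw => ?_) (sup_le hle ?_)
    · obtain ⟨p, hp⟩ := S.δ_surj τ (φ ⟨w, hw⟩)
      have h1 := (hk (⟨w, hw⟩ - ⟨l p, hlW p⟩)).1 (by rw [map_sub, hlφ, hp, sub_self])
      have h2 := Submodule.add_mem_sup (T := LinearMap.range l) h1 ⟨p, rfl⟩
      simpa using h2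
    · rintro _ ⟨x, rfl⟩; exact hlW x)
  exact ⟨Ψ, h1, h2⟩

theorem extend_ch {Λ : Set Idx} (hN : ∀ τ ∈ Λ, S.GoodAt τ N ⊤) (h : Ch (S.Δ '' Λ) M W₁ W)
    {ψ : W₁ →ₗ[A.carrier] N.carrier} (hψ : HomOn M W₁ N t ψ) :
    ∃ Ψ : W →ₗ[A.carrier] N.carrier, HomOn M W N t Ψ ∧
      ∀ x (hx : x ∈ W₁) (hx' : x ∈ W), Ψ ⟨x, hx'⟩ = ψ ⟨x, hx⟩ := by
  induction h with
  | refl _ => exact ⟨ψ, hψ, fun x hx hx' => rfl⟩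
  | step h hg hτ hs ih =>
    obtain ⟨τ, hτ, rfl⟩ := hτ
    obtain ⟨Ψ, h1, h2⟩ := ih
    obtain ⟨Ψ', h1', h2'⟩ := (hN τ hτ).extend hg h.gr hs h1
    refine ⟨Ψ', h1', fun x hx hx' => ?_⟩
    rw [h2' x (h.le hx), h2]

theorem GoodAt.sub_iff {π : Idx} {U : Submodule A.carrier N.carrier} (hU : N.Gr U) :
    S.GoodAt π (N.sub U hU) ⊤ ↔ S.GoodAt π N U := by
  constructor
  · intro h d f hf hfU
    obtain ⟨g, hg, -, hgf⟩ := h d (f.codRestrict U hfU) (fun i x hx => hf i x hx)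
      (fun _ => trivial)
    exact ⟨U.subtype ∘ₗ g, fun i x hx => hg i x hx, fun x => (g x).2, fun x hx =>
      congrArg Subtype.val (hgf x hx)⟩
  · intro h d f hf _
    obtain ⟨g, hg, hgU, hgf⟩ := h d (U.subtype ∘ₗ f) (fun i x hx => hf i x hx)
      (fun x => (f x).2)
    exact ⟨g.codRestrict U hgU, fun i x hx => hg i x hx, fun _ => trivial, fun x hx =>
      Subtype.ext (hgf x hx)⟩

theorem Good.sub_iff {U : Submodule A.carrier N.carrier} (hU : N.Gr U) :
    S.Good (N.sub U hU) ⊤ ↔ S.Good N U := forall_congr' fun _ => GoodAt.sub_iff hU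

end AHW

theorem Sec.of_ghom {M N : GMod A} {W : Submodule A.carrier M.carrier} {d : ℤ}
    {φ : M.carrier →ₗ[A.carrier] N.carrier} (hφ : φ ∈ ghomSet M N d)
    (hs : Function.Surjective φ) (hk : ∀ x, φ x = 0 ↔ x ∈ W) : Sec M ⊤ W N d :=
  ⟨le_top, φ ∘ₗ Submodule.subtype _, homOn_of_ghom hφ _, fun y => by
    obtain ⟨x, rfl⟩ := hs y
    exact ⟨⟨x, trivial⟩, rfl⟩, fun x => hk x⟩


/-! ### Finiteness -/

section Finiteness

theorem GMod.exists_gens (M : GMod A) : ∃ s : Finset M.carrier,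
    (∀ x ∈ s, ∃ i, x ∈ M.grading i) ∧ Submodule.span A.carrier (s : Set M.carrier) = ⊤ := by
  classical
  obtain ⟨s, hs⟩ := M.fg.fg_top
  choose t ht using fun x : M.carrier => exists_sum_gpr M.internal x
  refine ⟨s.biUnion fun x => (t x).image fun i => M.pr i x, ?_, ?_⟩
  · intro x hx
    simp only [Finset.mem_biUnion, Finset.mem_image] at hx
    obtain ⟨y, -, i, -, rfl⟩ := hx
    exact ⟨i, M.pr_mem i y⟩
  · rw [eq_top_iff, ← hs, Submodule.span_le]
    intro x hx
    rw [SetLike.mem_coe, ht x (t x) le_rfl]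
    refine sum_mem fun i hi => Submodule.subset_span ?_
    simp only [Finset.coe_biUnion, Set.mem_iUnion]
    exact ⟨x, hx, Finset.mem_coe.2 (Finset.mem_image_of_mem _ hi)⟩

theorem GMod.exists_gens' (M : GMod A) : ∃ (s : Finset M.carrier) (e : M.carrier → ℤ),
    (∀ x ∈ s, x ∈ M.grading (e x)) ∧
    Submodule.span A.carrier (s : Set M.carrier) = ⊤ := by
  classical
  obtain ⟨s, h1, h2⟩ := M.exists_gens
  refine ⟨s, fun x => if h : ∃ i, x ∈ M.grading i then h.choose else 0, fun x hx => ?_, h2⟩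
  have h := h1 x hx
  simp only [dif_pos h]
  exact h.choose_spec

/-- The homogeneous components in terms of homogeneous generators. -/
theorem GMod.grading_le (M : GMod A) {s : Finset M.carrier} {e : M.carrier → ℤ}
    (he : ∀ x ∈ s, x ∈ M.grading (e x)) (hs : Submodule.span A.carrier (s : Set M.carrier) = ⊤)
    (i : ℤ) : M.grading i ≤ ⨆ x : s, (A.grading (i - e x)).map
      ((LinearMap.toSpanSingleton A.carrier M.carrier x.1).restrictScalars k) := by
  have key : ∀ x ∈ Submodule.span A.carrier (s : Set M.carrier), ∀ i,
      M.pr i x ∈ ⨆ x : s, (A.grading (i - e x)).map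
        ((LinearMap.toSpanSingleton A.carrier M.carrier x.1).restrictScalars k) := by
    intro x hx
    induction hx using Submodule.span_induction with
    | mem x h =>
      intro i
      by_cases hi : e x = i
      · rw [← hi, M.pr_self (he x h)]
        refine Submodule.mem_iSup_of_mem ⟨x, h⟩ ⟨1, ?_, ?_⟩
        · rw [sub_self]; exact A.one_mem
        · simp
      · rw [M.pr_ne (he x h) hi]; exact zero_mem _
    | zero => intro i; rw [map_zero]; exact zero_mem _
    | add x y _ _ hx hy => intro i; rw [map_add]; exact add_mem (hx i) (hy i)
    | smul a x _ hx =>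
      refine gr_induction A.internal (p := fun a => ∀ i, M.pr i (a • x) ∈
        ⨆ x : s, (A.grading (i - e x)).map
          ((LinearMap.toSpanSingleton A.carrier M.carrier x.1).restrictScalars k)) ?_ ?_ ?_ a
      · intro i; rw [zero_smul, map_zero]; exact zero_mem _
      · intro a b ha hb i
        rw [add_smul, map_add]; exact add_mem (ha i) (hb i)
      · intro j a ha i
        rw [GMod.pr_smul ha]
        have := hx (i - j)
        refine Submodule.iSup_induction _ (motive := fun y => a • y ∈
          ⨆ x : s, (A.grading (i - e x)).map
            ((LinearMap.toSpanSingleton A.carrier M.carrier x.1).restrictScalars k)) this ?_ ?_ ?_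
        · rintro y _ ⟨b, hb, rfl⟩
          refine Submodule.mem_iSup_of_mem y ⟨a * b, ?_, ?_⟩
          · have := A.mul_mem ha hb
            rwa [show j + (i - j - e y) = i - e y by ring] at this
          · simp [mul_smul]
        · rw [smul_zero]; exact zero_mem _
        · intro y z hy hz; rw [smul_add]; exact add_mem hy hz
  intro x hx
  rw [← M.pr_self hx]
  exact key x (hs ▸ trivial) i

theorem GMod.finite_grading (hA : A.Laurentian) (M : GMod A) (i : ℤ) :
    FiniteDimensional k (M.grading i) := by
  obtain ⟨s, e, he, hs⟩ := M.exists_gens'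
  have := hA.2
  exact Submodule.finiteDimensional_of_le (M.grading_le he hs i)

theorem GMod.bounded_below (hA : A.Laurentian) (M : GMod A) :
    ∃ N : ℤ, ∀ n < N, M.grading n = ⊥ := by
  classical
  obtain ⟨s, e, he, hs⟩ := M.exists_gens'
  obtain ⟨a, ha⟩ := hA.1
  obtain ⟨b, hb⟩ := (s.image e).bddBelow
  refine ⟨a + b, fun n hn => ?_⟩
  rw [eq_bot_iff]
  refine (M.grading_le he hs n).trans (iSup_le fun x => ?_)
  have : b ≤ e x := hb (by simpa using ⟨x.1, x.2, rfl⟩)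
  rw [ha _ (by omega), Submodule.map_bot]

variable {M N : GMod A}

/-- A map is determined by its values on generators. -/
theorem hom_ext_gens {s : Finset M.carrier}
    (hs : Submodule.span A.carrier (s : Set M.carrier) = ⊤)
    {f g : M.carrier →ₗ[A.carrier] N.carrier} (h : ∀ x ∈ s, f x = g x) : f = g :=
  LinearMap.ext_on hs h

theorem ghomSub_finite (hA : A.Laurentian) (M N : GMod A) (d : ℤ) :
    FiniteDimensional k (ghomSub M N d) := by
  obtain ⟨s, e, he, hs⟩ := M.exists_gens'
  have := N.finite_grading hA
  let ev : ghomSub M N d →ₗ[k] ((x : s) → N.grading (e x + d)) :=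
    { toFun := fun f x => ⟨f.1 x, f.2 _ _ (he x x.2)⟩
      map_add' := fun f g => rfl
      map_smul' := fun c f => rfl }
  refine FiniteDimensional.of_injective ev fun f g h => Subtype.ext (hom_ext_gens hs ?_)
  intro x hx
  exact congrArg Subtype.val (congrFun h ⟨x, hx⟩)

theorem ghom_bounded_below (hA : A.Laurentian) (M N : GMod A) :
    ∃ D : ℤ, ∀ d < D, ∀ f ∈ ghomSet M N d, f = 0 := by
  classical
  obtain ⟨s, e, he, hs⟩ := M.exists_gens'
  obtain ⟨a, ha⟩ := N.bounded_below hA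
  obtain ⟨b, hb⟩ := (s.image e).bddAbove
  refine ⟨a - b, fun d hd f hf => hom_ext_gens hs fun x hx => ?_⟩
  have h1 : e x ≤ b := hb (by simpa using ⟨x, hx, rfl⟩)
  have h2 := hf _ _ (he x hx)
  rw [ha _ (by omega)] at h2
  simpa using h2

theorem GMod.bounded_above (hA : A.Laurentian) [IsArtinian A.carrier M.carrier] :
    ∃ N : ℤ, ∀ n ≥ N, M.grading n = ⊥ := by
  obtain ⟨a, ha⟩ := hA.1
  let G : ℕ → Submodule A.carrier M.carrier := fun n =>
    Submodule.span A.carrier {x | ∃ i : ℤ, (n : ℤ) ≤ i ∧ x ∈ M.grading i}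
  have hanti : Antitone G := fun m n hmn => Submodule.span_mono (by
    rintro x ⟨i, hi, hx⟩
    exact ⟨i, by omega, hx⟩)
  have hlow' : ∀ n, ∀ x ∈ G n, ∀ b : A.carrier, ∀ i : ℤ, i < n + a → M.pr i (b • x) = 0 := by
    intro n x hx
    induction hx using Submodule.span_induction with
    | mem x h =>
      obtain ⟨j, hj, hx⟩ := h
      intro b
      refine gr_induction A.internal (p := fun b => ∀ i : ℤ, i < n + a → M.pr i (b • x) = 0)
        ?_ ?_ ?_ b
      · intro i _; rw [zero_smul, map_zero]
      · intro b c hb hc i hi; rw [add_smul, map_add, hb i hi, hc i hi, add_zero]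
      · intro l b hb i hi
        by_cases hla : l < a
        · rw [ha l hla, Submodule.mem_bot] at hb
          rw [hb, zero_smul, map_zero]
        · exact M.pr_ne (M.smul_mem hb hx) (by omega)
    | zero => intro b i _; rw [smul_zero, map_zero]
    | add x y _ _ hx hy => intro b i hi; rw [smul_add, map_add, hx b i hi, hy b i hi, add_zero]
    | smul c x hxG hx => intro b i hi; rw [← mul_smul]; exact hx _ i hi
  have hlow : ∀ n, ∀ x ∈ G n, ∀ i : ℤ, i < n + a → M.pr i x = 0 := by
    intro n x hx i hi
    simpa using hlow' n x hx 1 i hi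
  obtain ⟨n, hn⟩ := IsArtinian.monotone_stabilizes (R := A.carrier) (M := M.carrier) ⟨fun n => OrderDual.toDual (G n), hanti⟩
  refine ⟨n, fun i hi => ?_⟩
  rw [eq_bot_iff]
  intro x hx
  have h1 : x ∈ G n := Submodule.subset_span ⟨i, hi, hx⟩
  have h2 : ∀ m ≥ n, x ∈ G m := fun m hm => by
    have h3 : G n = G m := hn m hm
    rw [← h3]; exact h1
  rw [Submodule.mem_bot, ← M.pr_self hx]
  have h3 := h2 (max n (i - a + 1).toNat) (le_max_left _ _)
  refine hlow _ x h3 i ?_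
  have := Int.self_le_toNat (i - a + 1)
  have := le_max_right n (i - a + 1).toNat
  omega

end Finiteness


/-! ### Standard filtrations are finite -/

/-- A finite chain written as a descending sequence that is eventually constant. -/
theorem Ch.exists_seq {Fam : Set (GMod A)} {M : GMod A} {W' W : Submodule A.carrier M.carrier}
    (h : Ch Fam M W' W) : ∃ (n : ℕ) (F : ℕ → Submodule A.carrier M.carrier), F 0 = W ∧
      (∀ m, n ≤ m → F m = W') ∧ (∀ m, M.Gr (F m)) ∧
      ∀ m, F (m + 1) = F m ∨ ∃ N ∈ Fam, ∃ d, Sec M (F m) (F (m + 1)) N d := by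
  induction h with
  | refl h => exact ⟨0, fun _ => W', rfl, fun _ _ => rfl, fun _ => h, fun _ => Or.inl rfl⟩
  | @step W₁ W₂ N d h hg hN hS ih =>
    obtain ⟨n, F, h0, hn, hF, hs⟩ := ih
    refine ⟨n + 1, fun m => Nat.casesOn m W₂ F, rfl, ?_, ?_, ?_⟩
    · rintro (_ | m) hm
      · omega
      · exact hn m (by omega)
    · rintro (_ | m)
      · exact hg
      · exact hF m
    · rintro (_ | m)
      · refine Or.inr ⟨N, hN, d, ?_⟩
        change Sec M W₂ (F 0) N d
        rw [h0]; exact hS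
      · exact hs m

/-- A descending sequence with the prescribed sections is a filtration. -/
theorem filtBy_of_seq {Fam : Set (GMod A)} {M : GMod A}
    {F : ℕ → Submodule A.carrier M.carrier} (h0 : F 0 = ⊤) (hF : ∀ m, M.Gr (F m))
    (hs : ∀ m, F (m + 1) = F m ∨ ∃ N ∈ Fam, ∃ d, Sec M (F m) (F (m + 1)) N d)
    (hsep : ∀ x : M.carrier, (∀ n, x ∈ F n) → x = 0) : ∃ Φ : GFilt M, FiltBy M Φ Fam := by
  refine ⟨⟨F, h0, fun n => ?_, fun n => (M.isGSub_iff _).2 (hF n), hsep⟩, fun n => ?_⟩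
  · rcases hs n with h | ⟨N, _, d, h⟩
    · exact h.le
    · exact h.1
  · rcases hs n with h | ⟨N, hN, d, h⟩
    · left
      rw [Submodule.Quotient.subsingleton_iff, eq_top_iff]
      rintro ⟨x, hx⟩ -
      change x ∈ F (n + 1)
      rw [h]; exact hx
    · exact Or.inr ⟨N, hN, -d, h.sqIso (hF n)⟩

theorem Ch.filtBy {Fam : Set (GMod A)} {M : GMod A} (h : Ch Fam M ⊥ ⊤) :
    ∃ Φ : GFilt M, FiltBy M Φ Fam := by
  obtain ⟨n, F, h0, hn, hF, hs⟩ := h.exists_seq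
  refine filtBy_of_seq h0 hF hs fun x hx => ?_
  have := hx n
  rw [hn n le_rfl] at this
  simpa using this

/-- Infinitely many finite chains, one below the other, form a filtration. -/
theorem filtBy_of_chains {Fam : Set (GMod A)} {M : GMod A}
    {Y : ℕ → Submodule A.carrier M.carrier} (h0 : Y 0 = ⊤)
    (hY : ∀ j, Ch Fam M (Y (j + 1)) (Y j))
    (hsep : ∀ x : M.carrier, (∀ n, x ∈ Y n) → x = 0) : ∃ Φ : GFilt M, FiltBy M Φ Fam := by
  choose n F hF0 hn hF hs using fun j => (hY j).exists_seq
  -- the state `(j, t)` points at the `t`-th term of the `j`-th chain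
  let st : ℕ → ℕ × ℕ := fun m => Nat.rec (0, 0)
    (fun _ p => if p.2 < n p.1 then (p.1, p.2 + 1) else (p.1 + 1, 0)) m
  have hst : ∀ m, st (m + 1) =
    if (st m).2 < n (st m).1 then ((st m).1, (st m).2 + 1) else ((st m).1 + 1, 0) := fun m => rfl
  have hreach : ∀ j, ∃ m, st m = (j, 0) := by
    intro j
    induction j with
    | zero => exact ⟨0, rfl⟩
    | succ j ih =>
      obtain ⟨m, hm⟩ := ih
      have : ∀ t, t ≤ n j → st (m + t) = (j, t) := by
        intro t
        induction t with
        | zero => intro _; exact hm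
        | succ t iht =>
          intro ht
          rw [← add_assoc, hst, iht (by omega)]
          simp only
          rw [if_pos (by omega)]
      refine ⟨m + n j + 1, ?_⟩
      rw [hst, this _ le_rfl]
      simp
  refine filtBy_of_seq (F := fun m => F (st m).1 (st m).2) ?_ (fun m => hF _ _) ?_ ?_
  · exact (hF0 0).trans h0
  · intro m
    simp only [hst]
    split_ifs with h
    · exact hs _ _
    · left
      simp only
      rw [hF0, hn _ _ (not_lt.1 h)]
  · intro x hx
    refine hsep x fun j => ?_
    obtain ⟨m, hm⟩ := hreach j
    have := hx m
    simp only [hm, hF0] at this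
    exact this

namespace AHW

variable (S : AHW A Idx) {M N : GMod A}

theorem pco_finite (π : Idx) : Module.Finite k (S.pco π).carrier := by
  have := (isFiniteLength_iff_isNoetherian_isArtinian.1 (S.pco_finlen π)).2
  obtain ⟨a, ha⟩ := (S.pco π).bounded_below S.laur
  obtain ⟨b, hb⟩ := (S.pco π).bounded_above S.laur
  have hf := (S.pco π).finite_grading S.laur
  have : (⊤ : Submodule k (S.pco π).carrier) ≤
      ⨆ i : Finset.Ico a b, (S.pco π).grading i := by
    intro x _
    refine (S.pco π).ind (p := fun x => x ∈ ⨆ i : Finset.Ico a b, (S.pco π).grading i)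
      (zero_mem _) (fun x y hx hy => add_mem hx hy) ?_ x
    intro i x hx
    by_cases h1 : i < a
    · rw [ha i h1, Submodule.mem_bot] at hx
      rw [hx]; exact zero_mem _
    by_cases h2 : b ≤ i
    · rw [hb i h2, Submodule.mem_bot] at hx
      rw [hx]; exact zero_mem _
    exact Submodule.mem_iSup_of_mem (⟨i, Finset.mem_Ico.2 ⟨by omega, by omega⟩⟩ :
      Finset.Ico a b) hx
  have h2 := Submodule.finiteDimensional_of_le this
  exact Module.Finite.of_surjective (⊤ : Submodule k (S.pco π).carrier).subtype
    fun x => ⟨⟨x, trivial⟩, rfl⟩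

theorem hom_pco_finite (M : GMod A) (π : Idx) :
    Module.Finite k (M.carrier →ₗ[A.carrier] (S.pco π).carrier) := by
  obtain ⟨s, hs⟩ := M.fg.fg_top
  have := S.pco_finite π
  let ev : (M.carrier →ₗ[A.carrier] (S.pco π).carrier) →ₗ[k] (s → (S.pco π).carrier) :=
    { toFun := fun f x => f x.1
      map_add' := fun f g => rfl
      map_smul' := fun c f => rfl }
  refine FiniteDimensional.of_injective ev fun f g h => hom_ext_gens hs ?_
  intro x hx
  exact congrFun h ⟨x, hx⟩

variable [IsNoetherianRing A.carrier]

/-- Since the spaces `hom(M, ∇̄(π))` are finite dimensional, every standard filtration is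
finite: a section `Δ(π)` contributes a new map `M → ∇̄(π)`. -/
theorem ch_of_hasDFilt (h : HasDFilt S M) : Ch (S.Δ '' Set.univ) M ⊥ ⊤ := by
  classical
  obtain ⟨Φ, hΦ⟩ := h
  have hanti : Antitone Φ.F := antitone_nat_of_succ_le Φ.anti
  have hGr : ∀ n, M.Gr (Φ.F n) := fun n => (M.isGSub_iff _).1 (Φ.graded n)
  rw [FiltBy, ← Set.image_univ] at hΦ
  let H : ℕ →o Submodule k (Π π, M.carrier →ₗ[A.carrier] (S.pco π).carrier) :=
    ⟨fun n => ⟨⟨⟨{ψ | ∀ π, ∀ x ∈ Φ.F n, ψ π x = 0}, fun ha hb π x hx => by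
      simp [ha π x hx, hb π x hx]⟩, fun _ _ _ => rfl⟩, fun c ψ hψ π x hx => by
      simp [hψ π x hx]⟩, fun m n hmn ψ hψ π x hx => hψ π x (hanti hmn hx)⟩
  have := S.hom_pco_finite M
  have hst : ∃ n, ∀ m ≥ n, ∀ ψ : (Π π, M.carrier →ₗ[A.carrier] (S.pco π).carrier),
      (∀ π, ∀ x ∈ Φ.F m, ψ π x = 0) → ∀ π, ∀ x ∈ Φ.F n, ψ π x = 0 := by
    obtain ⟨n, hn⟩ := monotone_stabilizes_iff_noetherian.2 (inferInstance :
      IsNoetherian k (Π π, M.carrier →ₗ[A.carrier] (S.pco π).carrier)) H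
    refine ⟨n, fun m hm ψ hψ => ?_⟩
    have h1 : ψ ∈ H m := hψ
    rw [← hn m hm] at h1
    exact h1
  obtain ⟨n, hn⟩ := hst
  have hconst : ∀ m, Φ.F (n + m) = Φ.F n := by
    intro m
    induction m with
    | zero => rfl
    | succ m ih =>
      rw [← ih]
      refine le_antisymm (Φ.anti _) ?_
      rcases hΦ (n + m) with h | ⟨_, ⟨π, -, rfl⟩, d, h⟩
      · rw [Submodule.Quotient.subsingleton_iff, eq_top_iff] at h
        intro x hx
        exact h (show (⟨x, hx⟩ : Φ.F (n + m)) ∈ ⊤ from trivial)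
      · exfalso
        obtain ⟨-, φ, hφ, hsurj, hk⟩ := Sec.of_sqIso (Φ.anti _) h
        obtain ⟨f₀, hf₀, hne, -⟩ := S.pco_hom π
        have hch := ch_of_filt Φ 0 (fun n _ => hΦ n) (n + m)
        rw [zero_add] at hch
        obtain ⟨Ψ, hΨ, hext⟩ := extend_ch (fun τ _ => S.good_pco π τ) hch (homOn_comp hφ hf₀)
        have htop : ∀ x, x ∈ Φ.F 0 := fun x => by rw [Φ.first]; trivial
        have key := hn (n + (m + 1)) (by omega) (Pi.single π
          (Ψ ∘ₗ LinearMap.codRestrict (Φ.F 0) LinearMap.id htop)) ?_ π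
        · apply hne
          refine LinearMap.ext fun y => ?_
          obtain ⟨w, rfl⟩ := hsurj y
          have h1 := key w (ih.le w.2)
          rw [Pi.single_eq_same] at h1
          have h2 := hext w w.2 (htop _)
          exact h2.symm.trans h1
        · intro σ x hx
          by_cases hσ : σ = π
          · subst hσ
            rw [Pi.single_eq_same]
            have hx' := Φ.anti (n + m) hx
            have h2 := hext x hx' (htop _)
            refine h2.trans ?_
            change f₀ (φ ⟨x, hx'⟩) = 0
            rw [(hk ⟨x, hx'⟩).2 hx, map_zero]
          · rw [Pi.single_eq_of_ne hσ]; rfl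
  have hbot : Φ.F n = ⊥ := by
    rw [eq_bot_iff]
    intro x hx
    refine (Submodule.mem_bot _).2 (Φ.separated x fun m => ?_)
    exact hanti (Nat.le_add_left m n) (hconst m ▸ hx)
  have := ch_of_filt Φ 0 (fun n _ => hΦ n) n
  rwa [zero_add, hbot, Φ.first] at this

theorem hasDFilt_iff : HasDFilt S M ↔ Ch (S.Δ '' Set.univ) M ⊥ ⊤ := by
  refine ⟨S.ch_of_hasDFilt, fun h => ?_⟩
  rw [Set.image_univ] at h
  exact h.filtBy

end AHW


/-! ### Maps to proper costandard modules -/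

/-- Maximal elements of nonempty subsets of a finite poset. -/
theorem exists_max (p : Idx → Prop) (h : ∃ i, p i) : ∃ i, p i ∧ ∀ j, i < j → ¬ p j := by
  obtain ⟨i, hi⟩ := (Set.toFinite {i | p i}).exists_maximal h
  exact ⟨i, hi.prop, fun j hij hj => hi.not_gt hj hij⟩

theorem HomOn.factor {M N L : GMod A} {W : Submodule A.carrier M.carrier} (hW : M.Gr W)
    {d e : ℤ} {φ : W →ₗ[A.carrier] N.carrier} (hφ : HomOn M W N d φ)
    (hs : Function.Surjective φ) {u : W →ₗ[A.carrier] L.carrier} (hu : HomOn M W L e u)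
    (hk : ∀ x, φ x = 0 → u x = 0) :
    ∃ g ∈ ghomSet N L (e - d), ∀ x, g (φ x) = u x := by
  obtain ⟨g, hg⟩ := exists_factor φ u hs hk
  refine ⟨g, fun i y hy => ?_, hg⟩
  obtain ⟨w, rfl⟩ := hs y
  have h1 := hφ.pr hW (i - d) w
  rw [sub_add_cancel, N.pr_self hy] at h1
  rw [← h1, hg]
  have := hu (i - d) ⟨M.pr (i - d) w, hW w w.2 _⟩ (M.pr_mem _ _)
  rwa [show i - d + e = i + (e - d) by ring] at this

theorem ghom_factor {M N L : GMod A}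
    {d e : ℤ} {φ : M.carrier →ₗ[A.carrier] N.carrier} (hφ : φ ∈ ghomSet M N d)
    (hs : Function.Surjective φ) {u : M.carrier →ₗ[A.carrier] L.carrier} (hu : u ∈ ghomSet M L e)
    (hk : ∀ x, φ x = 0 → u x = 0) :
    ∃ g ∈ ghomSet N L (e - d), ∀ x, g (φ x) = u x := by
  obtain ⟨g, hg⟩ := exists_factor φ u hs hk
  refine ⟨g, fun i y hy => ?_, hg⟩
  obtain ⟨w, rfl⟩ := hs y
  have h1 := ghom_pr hφ (i - d) w
  rw [sub_add_cancel, N.pr_self hy] at h1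
  rw [← h1, hg]
  have := hu (i - d) _ (M.pr_mem (i - d) w)
  rwa [show i - d + e = i + (e - d) by ring] at this

namespace AHW

variable (S : AHW A Idx) {M N E : GMod A}

/-- The nonzero map `Δ(π) → ∇̄(π)`. -/
noncomputable def f₀ (π : Idx) : (S.Δ π).carrier →ₗ[A.carrier] (S.pco π).carrier :=
  (S.pco_hom π).choose

theorem f₀_mem (π : Idx) : S.f₀ π ∈ ghomSet (S.Δ π) (S.pco π) 0 := (S.pco_hom π).choose_spec.1

theorem f₀_ne (π : Idx) : S.f₀ π ≠ 0 := (S.pco_hom π).choose_spec.2.1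

/-- The composition `P(π) → Δ(π) → ∇̄(π)`. -/
noncomputable def γ (π : Idx) : (S.P π).carrier →ₗ[A.carrier] (S.pco π).carrier :=
  S.f₀ π ∘ₗ S.δ π

theorem γ_mem (π : Idx) : S.γ π ∈ ghomSet (S.P π) (S.pco π) 0 :=
  ghom_comp (S.δ_mem π) (S.f₀_mem π)

theorem γ_ne (π : Idx) : S.γ π ≠ 0 := fun h => S.f₀_ne π (LinearMap.ext fun y => by
  obtain ⟨x, rfl⟩ := S.δ_surj π y
  exact LinearMap.congr_fun h x)

variable {S}

theorem std_pco {σ π : Idx} {d : ℤ} {f : (S.Δ σ).carrier →ₗ[A.carrier] (S.pco π).carrier}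
    (hf : f ∈ ghomSet (S.Δ σ) (S.pco π) d) (hne : σ ≠ π) : f = 0 :=
  (S.pco_hom π).choose_spec.2.2.2 σ d f hf hne

theorem std_pco_self {π : Idx} {d : ℤ} {f : (S.Δ π).carrier →ₗ[A.carrier] (S.pco π).carrier}
    (hf : f ∈ ghomSet (S.Δ π) (S.pco π) d) : ∃ c : k, f = c • S.f₀ π ∧ (d ≠ 0 → c = 0) := by
  by_cases hd : d = 0
  · obtain ⟨c, hc⟩ := (S.pco_hom π).choose_spec.2.2.1 d f hf
    exact ⟨c, hc, fun h => (h hd).elim⟩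
  · obtain ⟨c, hc⟩ := (S.pco_hom π).choose_spec.2.2.1 d f hf
    have h0 := ghom_eq_zero_of_ne hf (hc ▸ ghom_smul c (S.f₀_mem π)) hd
    exact ⟨0, by rw [h0, zero_smul], fun _ => rfl⟩

theorem ch_pco_zero {Λ : Set Idx} {π : Idx} {W : Submodule A.carrier M.carrier}
    (h : Ch (S.Δ '' Λ) M ⊥ W) (hπ : π ∉ Λ) {d : ℤ} {u : W →ₗ[A.carrier] (S.pco π).carrier}
    (hu : HomOn M W (S.pco π) d u) : u = 0 := by
  induction h with
  | refl h =>
    ext ⟨x, hx⟩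
    obtain rfl : x = 0 := hx
    exact map_zero u
  | @step W₁ W₂ N e h hg hN hs ih =>
    obtain ⟨σ, hσ, rfl⟩ := hN
    obtain ⟨hle, φ, hφ, hsurj, hk⟩ := hs
    have h1 := ih (hu.restrict hle)
    obtain ⟨g, hg', hgu⟩ := hφ.factor hg hsurj hu fun x hx => by
      have := LinearMap.congr_fun h1 ⟨x, (hk x).1 hx⟩
      exact this
    have h2 : g = 0 := std_pco hg' (by rintro rfl; exact hπ hσ)
    ext x
    rw [← hgu, h2]; rfl

theorem K_pco_zero {π : Idx} {d : ℤ} {u : S.K π →ₗ[A.carrier] (S.pco π).carrier}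
    (hu : HomOn (S.P π) (S.K π) (S.pco π) d u) : u = 0 :=
  ch_pco_zero (S.K_ch π) (fun h => lt_irrefl π h) hu

theorem P_pco {π : Idx} {d : ℤ} {u : (S.P π).carrier →ₗ[A.carrier] (S.pco π).carrier}
    (hu : u ∈ ghomSet (S.P π) (S.pco π) d) :
    ∃ c : k, u = c • S.γ π ∧ (d ≠ 0 → c = 0) := by
  have h0 := K_pco_zero (homOn_of_ghom hu (S.K π))
  obtain ⟨g, hg, hgu⟩ := ghom_factor (S.δ_mem π) (S.δ_surj π) hu fun x hx =>
    LinearMap.congr_fun h0 ⟨x, hx⟩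
  obtain ⟨c, hc, hd⟩ := std_pco_self hg
  refine ⟨c, LinearMap.ext fun x => ?_, fun h => hd (by simpa using h)⟩
  rw [← hgu, hc]; rfl

variable [IsNoetherianRing A.carrier]

omit [IsNoetherianRing A.carrier] in
theorem hz_pco {τ π : Idx} (h : ¬ τ ≤ π) : S.HZ τ (S.pco π) := by
  intro d f hf
  have h0 := ch_pco_zero (S.P_ch τ) (fun h' => h h') (homOn_of_ghom hf ⊤)
  ext x
  exact LinearMap.congr_fun h0 ⟨x, trivial⟩

/-- Every nonzero map to `∇̄(π)` is detected by a map from `P(π)`. -/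
theorem detect_pco {π : Idx} {W : Submodule A.carrier M.carrier} (hW : M.Gr W) {d : ℤ}
    {f : W →ₗ[A.carrier] (S.pco π).carrier} (hf : HomOn M W (S.pco π) d f) (hne : f ≠ 0) :
    ∃ g ∈ ghomSet (S.P π) M (-d), ∃ hg : ∀ x, g x ∈ W,
      ∃ c : k, c ≠ 0 ∧ ∀ x, f ⟨g x, hg x⟩ = c • S.γ π x := by
  let W' := (LinearMap.ker f).map W.subtype
  have hW'le : W' ≤ W := by rintro _ ⟨x, -, rfl⟩; exact x.2
  have memW' : ∀ x (hx : x ∈ W), x ∈ W' ↔ f ⟨x, hx⟩ = 0 := by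
    intro x hx
    constructor
    · rintro ⟨y, hy, rfl⟩; exact hy
    · intro h; exact ⟨⟨x, hx⟩, h, rfl⟩
  have hlt : W' < W := by
    refine lt_of_le_of_ne hW'le fun h => hne (LinearMap.ext fun x => ?_)
    exact (memW' _ x.2).1 (h.ge x.2)
  have hW' : M.Gr W' := hf.gr_ker hW
  obtain ⟨τ, ⟨d', g, hg, hgW, x₀, hx₀⟩, hmax⟩ := exists_max (fun τ => ∃ d, ∃ g ∈ ghomSet (S.P τ) M d,
    (∀ x, g x ∈ W) ∧ ∃ x, g x ∉ W') (S.exists_hom hW hW' hlt)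
  have hK := factor hg hgW (W := W') fun τ' hτ' e h hh hhW x => by
    by_contra hcon
    exact hmax τ' hτ' ⟨e, h, hh, hhW, x, hcon⟩
  have hfg : f ∘ₗ g.codRestrict W hgW ∈ ghomSet (S.P τ) (S.pco π) (d' + d) := fun i x hx => by
    rw [← add_assoc]
    exact hf _ _ (hg i x hx)
  have hne' : f ∘ₗ g.codRestrict W hgW ≠ 0 := fun h =>
    hx₀ ((memW' _ (hgW x₀)).2 (LinearMap.congr_fun h x₀))
  obtain ⟨w, hw, hwu⟩ := ghom_factor (S.δ_mem τ) (S.δ_surj τ) hfg fun x hx =>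
    (memW' _ (hgW x)).1 (hK x hx)
  have hτ : τ = π := by
    by_contra hcon
    have h0 := std_pco hw hcon
    exact hne' (LinearMap.ext fun x => by rw [← hwu, h0]; rfl)
  subst hτ
  obtain ⟨c, hc, hcd⟩ := P_pco hfg
  have hc0 : c ≠ 0 := by rintro rfl; exact hne' (by rw [hc, zero_smul])
  have hd : d' = -d := by
    by_contra h
    exact hc0 (hcd (by omega))
  exact ⟨g, hd ▸ hg, hgW, c, hc0, fun x => LinearMap.congr_fun hc x⟩

theorem kill_K {π : Idx} (h : ∀ τ, π < τ → S.HZ τ N) {d : ℤ}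
    {f : (S.P π).carrier →ₗ[A.carrier] N.carrier} (hf : f ∈ ghomSet (S.P π) N d) :
    ∀ x ∈ S.K π, f x = 0 := fun x hx =>
  LinearMap.congr_fun (K_hom_zero h (homOn_of_ghom hf (S.K π))) ⟨x, hx⟩

/-- A map `P(π) → P(π)` of degree `t ≤ 0` is a scalar modulo `K(π)`, the scalar being zero
unless `t = 0`. -/
theorem end_P {π : Idx} {t : ℤ} (ht : t ≤ 0) {h : (S.P π).carrier →ₗ[A.carrier] (S.P π).carrier}
    (hh : h ∈ ghomSet (S.P π) (S.P π) t) :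
    ∃ c : k, (∀ x, h x - c • x ∈ S.K π) ∧ (t ≠ 0 → c = 0) := by
  have h1 : S.δ π ∘ₗ h ∈ ghomSet (S.P π) (S.Δ π) (t + 0) := ghom_comp hh (S.δ_mem π)
  obtain ⟨b, hb, hbu⟩ := ghom_factor (S.δ_mem π) (S.δ_surj π) h1
    (kill_K (fun τ hτ => hz_std hτ.not_ge) h1)
  rw [add_zero, sub_zero] at hb
  have h2 := S.end_std π hb
  have key : ∀ c : k, b = c • LinearMap.id → ∀ x, h x - c • x ∈ S.K π := by
    intro c hc x
    rw [mem_K, map_sub, LinearMap.map_smul_of_tower, sub_eq_zero]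
    have := hbu x
    rw [hc] at this
    exact this.symm
  rcases ht.lt_or_eq with h | h
  · exact ⟨0, key 0 (by rw [h2.1 h, zero_smul]), fun _ => rfl⟩
  · obtain ⟨c, hc⟩ := h2.2 h
    exact ⟨c, key c hc, fun h' => (h' h).elim⟩

end AHW


/-! ### Extending maps to a proper costandard module -/

namespace AHW

variable {S : AHW A Idx} {M N E : GMod A} [IsNoetherianRing A.carrier]

theorem exists_max_hom {W : Submodule A.carrier E.carrier} (hW : E.Gr W) (hlt : W < ⊤) :
    ∃ σ d, ∃ g ∈ ghomSet (S.P σ) E d, (∃ x, g x ∉ W) ∧ ∀ x ∈ S.K σ, g x ∈ W := by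
  obtain ⟨σ, ⟨d, g, hg, x, hx⟩, hmax⟩ := exists_max
    (fun τ => ∃ d, ∃ g ∈ ghomSet (S.P τ) E d, ∃ x, g x ∉ W) (by
      obtain ⟨τ, d, g, hg, -, h⟩ := S.exists_hom GMod.Gr.top hW hlt
      exact ⟨τ, d, g, hg, h⟩)
  refine ⟨σ, d, g, hg, ⟨x, hx⟩, factor hg (U := ⊤) (fun _ => trivial) ?_⟩
  intro τ hτ e h hh _ y
  by_contra hcon
  exact hmax τ hτ ⟨e, h, hh, y, hcon⟩

/-- If `π` is maximal among the weights of `E`, a nonzero map `P(π) → E` of minimal degree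
survives in a map from `E` to `∇̄(π)`. -/
theorem exists_to_pco {π : Idx} (hE : ∀ τ, π < τ → S.HZ τ E) {d : ℤ}
    (hs : ∀ s < d, ∀ f ∈ ghomSet (S.P π) E s, f = 0)
    {f : (S.P π).carrier →ₗ[A.carrier] E.carrier} (hf : f ∈ ghomSet (S.P π) E d) (hne : f ≠ 0) :
    ∃ φ ∈ ghomSet E (S.pco π) (-d), ∀ x, φ (f x) = S.γ π x := by
  have hfK := kill_K hE hf
  -- `γ` vanishes on the kernel of `f`
  have hker : ∀ x, f x = 0 → S.γ π x = 0 := by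
    by_contra! hcon
    obtain ⟨x₀, h0, hx0⟩ := hcon
    obtain ⟨h, hh, hker, c, hc, hγ⟩ := detect_pco (GMod.Gr.ker hf)
      (homOn_of_ghom (S.γ_mem π) (LinearMap.ker f))
      (fun h => hx0 (LinearMap.congr_fun h ⟨x₀, h0⟩))
    rw [neg_zero] at hh
    obtain ⟨b, hb, -⟩ := end_P le_rfl hh
    have hb0 : b ≠ 0 := by
      rintro rfl
      apply S.γ_ne π
      ext x
      have h1 := hγ x
      have h2 := hb x
      rw [zero_smul, sub_zero] at h2
      have h3 : S.γ π (h x) = 0 := by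
        change S.f₀ π (S.δ π (h x)) = 0
        rw [show S.δ π (h x) = 0 from h2, map_zero]
      have h4 : c • S.γ π x = 0 := h1.symm.trans h3
      exact (smul_eq_zero.1 h4).resolve_left hc
    apply hne
    ext x
    have h2 := hfK _ (hb x)
    rw [map_sub, LinearMap.map_smul_of_tower, show f (h x) = 0 from hker x, zero_sub,
      neg_eq_zero] at h2
    exact (smul_eq_zero.1 h2).resolve_left hb0
  obtain ⟨φ', hφ'⟩ := exists_factor f.rangeRestrict (S.γ π) f.surjective_rangeRestrict
    (fun x hx => hker x (congrArg Subtype.val hx))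
  have hφ'd : HomOn E (LinearMap.range f) (S.pco π) (-d) φ' := by
    rintro i ⟨y, x, rfl⟩ hy
    have h1 : f x = f ((S.P π).pr (i - d) x) := by
      rw [ghom_pr hf, sub_add_cancel, E.pr_self hy]
    have h2 : (⟨f x, x, rfl⟩ : LinearMap.range f) = f.rangeRestrict ((S.P π).pr (i - d) x) :=
      Subtype.ext h1
    rw [h2, hφ']
    have := S.γ_mem π (i - d) _ ((S.P π).pr_mem (i - d) x)
    rwa [add_zero] at this
  let Q : Submodule A.carrier E.carrier → Prop := fun W => E.Gr W ∧
    ∃ hr : LinearMap.range f ≤ W, ∃ φ : W →ₗ[A.carrier] (S.pco π).carrier,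
      HomOn E W (S.pco π) (-d) φ ∧ ∀ x, φ ⟨f x, hr ⟨x, rfl⟩⟩ = S.γ π x
  have := E.isNoeth
  obtain ⟨W, ⟨hW, hr, φ, hφ, hφf⟩, hmax⟩ := set_has_maximal_iff_noetherian.2 this {W | Q W}
    ⟨LinearMap.range f, GMod.Gr.range hf, le_rfl, φ', hφ'd, fun x => hφ' x⟩
  by_cases hWt : W = ⊤
  · subst hWt
    refine ⟨φ ∘ₗ LinearMap.codRestrict ⊤ LinearMap.id (fun _ => trivial),
      fun i x hx => hφ i ⟨x, trivial⟩ hx, hφf⟩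
  exfalso
  obtain ⟨σ, c, g, hg, ⟨x₀, hx₀⟩, hK⟩ := exists_max_hom (S := S) hW (lt_top_iff_ne_top.2 hWt)
  suffices H : ∃ ψ ∈ ghomSet (S.P σ) (S.pco π) (c + -d), ∀ p (hp : g p ∈ W), ψ p = φ ⟨g p, hp⟩ by
    obtain ⟨ψ, hψ, H⟩ := H
    obtain ⟨Φ, hΦ, hΦ1, -⟩ := glue hW hφ hg hψ H rfl
    refine hmax (W ⊔ LinearMap.range g) ⟨hW.sup (GMod.Gr.range hg), hr.trans le_sup_left, Φ, hΦ,
      fun x => (hΦ1 _ (hr ⟨x, rfl⟩) _).trans (hφf x)⟩ (lt_of_le_of_ne le_sup_left fun h => hx₀ ?_)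
    rw [h]
    exact le_sup_right (a := W) ⟨x₀, rfl⟩
  -- the map to be extended, on the preimage `R` of `W`
  let R := W.comap g
  have hR : (S.P σ).Gr R := hW.comap hg
  let θ : R →ₗ[A.carrier] (S.pco π).carrier :=
    φ ∘ₗ (g ∘ₗ R.subtype).codRestrict W fun x => x.2
  have hθ : HomOn (S.P σ) R (S.pco π) (c + -d) θ := fun i x hx => by
    rw [← add_assoc]
    exact hφ _ _ (hg i x hx)
  by_cases hσ : σ = π
  · subst hσ
    refine ⟨0, ghom_zero, ?_⟩
    suffices h : θ = 0 by
      intro p hp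
      exact (LinearMap.congr_fun h ⟨p, hp⟩).symm
    by_contra hθ0
    have hcd : d ≤ c := by
      by_contra hcon
      have h1 := hs c (by omega) g hg
      exact hx₀ (by rw [h1]; exact zero_mem _)
    obtain ⟨h, hh, hhR, a, ha, hγ⟩ := detect_pco hR hθ hθ0
    obtain ⟨b, hb, -⟩ := end_P (by omega) hh
    have hgb : ∀ x, g (h x) = b • g x := fun x => by
      have := kill_K hE hg _ (hb x)
      rwa [map_sub, LinearMap.map_smul_of_tower, sub_eq_zero] at this
    have hb0 : b ≠ 0 := by
      rintro rfl
      apply S.γ_ne σ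
      ext x
      have h1 := hγ x
      have h2 : θ ⟨h x, hhR x⟩ = 0 := by
        change φ ⟨g (h x), _⟩ = 0
        have : (⟨g (h x), hhR x⟩ : W) = 0 := Subtype.ext ((hgb x).trans (zero_smul _ _))
        rw [this, map_zero]
      rw [h2] at h1
      exact (smul_eq_zero.1 h1.symm).resolve_left ha
    apply hx₀
    have h1 : g (h x₀) ∈ W := hhR x₀
    rw [hgb] at h1
    have h2 := (W.restrictScalars k).smul_mem b⁻¹ h1
    rwa [smul_smul, inv_mul_cancel₀ hb0, one_smul] at h2
  · obtain ⟨ψ, hψ, -, hψK⟩ := S.good_pco π σ (c + -d) _ (hθ.restrict (W₁ := S.K σ) hK)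
      (fun _ => trivial)
    refine ⟨ψ, hψ, ?_⟩
    let η : R →ₗ[A.carrier] (S.pco π).carrier := θ - ψ ∘ₗ R.subtype
    suffices h : η = 0 by
      intro p hp
      have h1 := LinearMap.congr_fun h ⟨p, hp⟩
      exact (sub_eq_zero.1 h1).symm
    have hη : HomOn (S.P σ) R (S.pco π) (c + -d) η := fun i x hx =>
      Submodule.sub_mem _ (hθ i x hx) (hψ i x hx)
    by_contra hη0
    obtain ⟨h, hh, hhR, a, ha, hγ⟩ := detect_pco hR hη hη0
    by_cases hle : π ≤ σ
    · have h1 := hE σ (lt_of_le_of_ne hle (Ne.symm hσ)) c g hg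
      exact hx₀ (by rw [h1]; exact zero_mem _)
    · apply S.γ_ne π
      ext x
      have h1 := LinearMap.congr_fun (S.hom_std_zero hle (ghom_comp hh (S.δ_mem σ))) x
      have h2 := hψK (h x) h1
      have h3 : η ⟨h x, hhR x⟩ = 0 := sub_eq_zero.2 h2.symm
      have h4 := hγ x
      rw [h3] at h4
      exact (smul_eq_zero.1 h4.symm).resolve_left ha

/-- In the situation of `exists_to_pco`, if the groups `ext¹(Δ(σ), E)` vanish, then every map
from a submodule of a projective module with standard filtration to `∇̄(π)` lifts to `E`. -/
theorem lift_pco {Λ : Set Idx} {π : Idx} (hgood : S.Good E ⊤) {d : ℤ}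
    {φ : E.carrier →ₗ[A.carrier] (S.pco π).carrier} (hφ : φ ∈ ghomSet E (S.pco π) (-d))
    {f : (S.Δ π).carrier →ₗ[A.carrier] E.carrier} (hf : f ∈ ghomSet (S.Δ π) E d)
    (hφf : ∀ x, φ (f x) = S.f₀ π x) {W : Submodule A.carrier M.carrier}
    (hW : Ch (S.Δ '' Λ) M ⊥ W) {t : ℤ} {u : W →ₗ[A.carrier] (S.pco π).carrier}
    (hu : HomOn M W (S.pco π) t u) :
    ∃ v : W →ₗ[A.carrier] E.carrier, HomOn M W E (t + d) v ∧ ∀ x, φ (v x) = u x := by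
  induction hW with
  | refl h =>
    refine ⟨0, fun i x _ => zero_mem _, ?_⟩
    rintro ⟨x, hx⟩
    obtain rfl : x = 0 := hx
    rw [LinearMap.zero_apply, map_zero]
    exact (map_zero u).symm
  | @step W₁ W₂ N e h hg hN hs ih =>
    obtain ⟨σ, hσ, rfl⟩ := hN
    obtain ⟨hle, q, hq, hsurj, hk⟩ := hs
    obtain ⟨v₁, hv₁, hv₁u⟩ := ih (hu.restrict hle)
    obtain ⟨v₂, hv₂, hext⟩ := GoodAt.extend (hgood σ) hg h.gr ⟨hle, q, hq, hsurj, hk⟩ hv₁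
    have hw' : HomOn M W₂ (S.pco π) t (u - φ ∘ₗ v₂) := fun i x hx =>
      Submodule.sub_mem _ (hu i x hx) (by
        have := hφ _ _ (hv₂ i x hx)
        rwa [show i + (t + d) + -d = i + t by ring] at this)
    obtain ⟨w, hw, hwu⟩ := hq.factor hg hsurj hw' fun x hx => by
      have h1 := hv₁u ⟨x, (hk x).1 hx⟩
      rw [← hext x ((hk x).1 hx) x.2] at h1
      exact sub_eq_zero.2 h1.symm
    by_cases hσπ : σ = π
    · subst hσπ
      obtain ⟨c, hc, hc0⟩ := std_pco_self hw
      refine ⟨v₂ + c • (f ∘ₗ q), fun i x hx => Submodule.add_mem _ (hv₂ i x hx) ?_, fun x => ?_⟩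
      · by_cases hte : t - e = 0
        · have := hf _ _ (hq i x hx)
          rw [show i + e + d = i + (t + d) by omega] at this
          exact Submodule.smul_mem _ c this
        · rw [hc0 hte, zero_smul]; exact zero_mem _
      · have h1 := hwu x
        rw [hc] at h1
        rw [LinearMap.add_apply, map_add, LinearMap.smul_apply, LinearMap.map_smul_of_tower]
        change φ (v₂ x) + c • φ (f (q x)) = u x
        rw [hφf]
        have h2 : c • S.f₀ σ (q x) = u x - φ (v₂ x) := h1
        rw [h2]; abel
    · have h0 := std_pco hw hσπ
      refine ⟨v₂, hv₂, fun x => ?_⟩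
      have h1 := hwu x
      rw [h0] at h1
      exact (sub_eq_zero.1 h1.symm).symm

theorem to_pco_surj {π : Idx} (hgood : S.Good E ⊤) {d : ℤ}
    {φ : E.carrier →ₗ[A.carrier] (S.pco π).carrier} (hφ : φ ∈ ghomSet E (S.pco π) (-d))
    {f : (S.Δ π).carrier →ₗ[A.carrier] E.carrier} (hf : f ∈ ghomSet (S.Δ π) E d)
    (hφf : ∀ x, φ (f x) = S.f₀ π x) : Function.Surjective φ := by
  by_contra hcon
  rw [← LinearMap.range_eq_top] at hcon
  obtain ⟨τ, e, g, hg, -, x, hx⟩ := S.exists_hom GMod.Gr.top (GMod.Gr.range hφ)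
    (lt_top_iff_ne_top.2 hcon)
  obtain ⟨v, -, hv⟩ := lift_pco hgood hφ hf hφf (S.P_ch τ) (homOn_of_ghom hg ⊤)
  exact hx ⟨v ⟨x, trivial⟩, hv ⟨x, trivial⟩⟩

omit [IsNoetherianRing A.carrier] in
theorem good_ker {π : Idx} (hgood : S.Good E ⊤) {d : ℤ}
    {φ : E.carrier →ₗ[A.carrier] (S.pco π).carrier} (hφ : φ ∈ ghomSet E (S.pco π) (-d))
    {f : (S.Δ π).carrier →ₗ[A.carrier] E.carrier} (hf : f ∈ ghomSet (S.Δ π) E d)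
    (hφf : ∀ x, φ (f x) = S.f₀ π x) : S.Good E (LinearMap.ker φ) := by
  intro σ t u hu hker
  obtain ⟨h, hh, -, hhu⟩ := hgood σ t u hu fun _ => trivial
  have hφh : φ ∘ₗ h ∈ ghomSet (S.P σ) (S.pco π) (t + -d) := ghom_comp hh hφ
  obtain ⟨w, hw, hwu⟩ := ghom_factor (S.δ_mem σ) (S.δ_surj σ) hφh fun x hx => by
    change φ (h x) = 0
    rw [hhu x hx]
    exact hker ⟨x, hx⟩
  by_cases hσπ : σ = π
  · subst hσπ
    obtain ⟨c, hc, hc0⟩ := std_pco_self hw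
    refine ⟨h - c • (f ∘ₗ S.δ σ), ghom_sub hh ?_, fun x => ?_, fun x hx => ?_⟩
    · by_cases htd : t = d
      · subst htd
        have := ghom_comp (S.δ_mem σ) hf
        rw [zero_add] at this
        exact ghom_smul c this
      · rw [hc0 (by omega), zero_smul]; exact ghom_zero
    · have h1 := hwu x
      rw [hc] at h1
      have h2 : c • S.f₀ σ (S.δ σ x) = φ (h x) := h1
      rw [LinearMap.mem_ker, LinearMap.sub_apply, map_sub, LinearMap.smul_apply,
        LinearMap.map_smul_of_tower]
      change φ (h x) - c • φ (f (S.δ σ x)) = 0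
      rw [hφf, h2, sub_self]
    · have h3 : S.δ σ x = 0 := hx
      change h x - c • f (S.δ σ x) = _
      rw [h3, map_zero, smul_zero, sub_zero, hhu x hx]
  · have h0 := std_pco hw hσπ
    refine ⟨h, hh, fun x => ?_, hhu⟩
    have h1 := hwu x
    rw [h0] at h1
    exact h1.symm

/-- A module with vanishing `ext¹(Δ(σ), –)`, whose maps from `P(π)` of minimal degree `d` are
nonzero with `π` maximal, has a quotient `∇̄(π)` with kernel of the same kind, and not every map
`P(π) → E` of degree `d` lands in the kernel. -/
theorem exists_pco_quot {π : Idx} (hgood : S.Good E ⊤) (hE : ∀ τ, π < τ → S.HZ τ E) {d : ℤ}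
    (hs : ∀ s < d, ∀ f ∈ ghomSet (S.P π) E s, f = 0)
    {f : (S.P π).carrier →ₗ[A.carrier] E.carrier} (hf : f ∈ ghomSet (S.P π) E d) (hne : f ≠ 0) :
    ∃ W, E.Gr W ∧ S.Good E W ∧ Ch (Set.range S.pco) E W ⊤ ∧ ∃ x, f x ∉ W := by
  obtain ⟨φ, hφ, hφf⟩ := exists_to_pco hE hs hf hne
  obtain ⟨f', hf', hf'f⟩ := ghom_factor (S.δ_mem π) (S.δ_surj π) hf (kill_K hE hf)
  rw [sub_zero] at hf'
  have h1 : ∀ x, φ (f' x) = S.f₀ π x := fun x => by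
    obtain ⟨x, rfl⟩ := S.δ_surj π x
    rw [hf'f, hφf]; rfl
  have hgr : E.Gr (LinearMap.ker φ) := GMod.Gr.ker hφ
  refine ⟨LinearMap.ker φ, hgr, good_ker hgood hφ hf' h1, ?_, ?_⟩
  · exact Ch.step (Ch.refl hgr) GMod.Gr.top ⟨π, rfl⟩
      (Sec.of_ghom hφ (to_pco_surj hgood hφ hf' h1) fun x => Iff.rfl)
  · by_contra! hcon
    apply S.γ_ne π
    ext x
    rw [← hφf]
    exact hcon x

end AHW


/-! ### Vanishing of extensions gives a proper costandard filtration -/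

namespace AHW

variable {S : AHW A Idx} {M N E : GMod A} [IsNoetherianRing A.carrier]

omit [IsNoetherianRing A.carrier] in
theorem Good.map_inj {X : GMod A} {W : Submodule A.carrier X.carrier} (h : S.Good X W)
    {ι : X.carrier →ₗ[A.carrier] E.carrier} (hι : ι ∈ ghomSet X E 0)
    (hi : Function.Injective ι) : S.Good E (W.map ι) := by
  intro σ t u hu hr
  obtain ⟨v, hv, hvu⟩ := exists_lift_inj (c := t) (add_zero t) hι hi hu fun x => by
    obtain ⟨y, -, hy⟩ := hr x
    exact ⟨y, hy⟩
  obtain ⟨g, hg, hgW, hgv⟩ := h σ t v hv fun x => by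
    obtain ⟨y, hy, hyx⟩ := hr x
    rw [← hvu] at hyx
    rwa [← hi hyx]
  refine ⟨ι ∘ₗ g, ?_, fun x => ⟨g x, hgW x, rfl⟩, fun x hx => ?_⟩
  · have := ghom_comp hg hι
    rwa [add_zero] at this
  · rw [LinearMap.comp_apply, hgv x hx, hvu]

/-- A map from a projective module to a sum of submodules is a sum of maps. -/
theorem split_hom {σ : Idx} {W X : Submodule A.carrier E.carrier} (hW : E.Gr W) (hX : E.Gr X)
    {t : ℤ} {h : (S.P σ).carrier →ₗ[A.carrier] E.carrier} (hh : h ∈ ghomSet (S.P σ) E t)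
    (hr : ∀ x, h x ∈ W ⊔ X) : ∃ l ∈ ghomSet (S.P σ) E t, (∀ x, l x ∈ W) ∧ ∀ x, h x - l x ∈ X := by
  have hq := quot_mk hX
  have h1 := ghom_comp hh hq
  obtain ⟨l, hl, hlW, hlh⟩ := proj_lift (S.proj σ) hW (c := t) rfl (homOn_of_ghom hq W) h1
    fun x => by
      obtain ⟨w, hw, y, hy, hwy⟩ := Submodule.mem_sup.1 (hr x)
      refine ⟨⟨w, hw⟩, ?_⟩
      change X.mkQ w = X.mkQ (h x)
      rw [← hwy, map_add, (Submodule.Quotient.mk_eq_zero X).2 hy |> (show X.mkQ y = 0 from ·),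
        add_zero]
  refine ⟨l, hl, hlW, fun x => ?_⟩
  have h2 : X.mkQ (l x) = X.mkQ (h x) := hlh x (hlW x)
  exact (Submodule.Quotient.eq X).1 h2.symm

/-- The submodules `U` of `E` with `ext¹(Δ(σ), U) = 0` and a finite proper costandard
filtration of `E/U`. -/
def Adm (S : AHW A Idx) (E : GMod A) (U : Submodule A.carrier E.carrier) : Prop :=
  E.Gr U ∧ S.Good E U ∧ Ch (Set.range S.pco) E U ⊤

/-- Transporting an admissible submodule along `U ↪ E`. -/
theorem adm_sub {U : Submodule A.carrier E.carrier} (hU : E.Gr U)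
    {W : Submodule A.carrier (E.sub U hU).carrier} (hW : S.Adm (E.sub U hU) W) :
    E.Gr (W.map U.subtype) ∧ S.Good E (W.map U.subtype) ∧
      Ch (Set.range S.pco) E (W.map U.subtype) U := by
  refine ⟨hW.1.map (sub_incl hU), hW.2.1.map_inj (sub_incl hU) U.injective_subtype, ?_⟩
  have := hW.2.2.map (sub_incl hU) (fun x _ hx => by
    have : x = 0 := U.injective_subtype hx
    rw [this]; exact zero_mem _)
  have h2 : (⊤ : Submodule A.carrier (E.sub U hU).carrier).map U.subtype = U :=
    U.map_subtype_top
  rwa [h2] at this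

theorem adm_sub' {U : Submodule A.carrier E.carrier} (hU : S.Adm E U)
    {W : Submodule A.carrier (E.sub U hU.1).carrier} (hW : S.Adm (E.sub U hU.1) W) :
    S.Adm E (W.map U.subtype) :=
  let h := adm_sub hU.1 hW
  ⟨h.1, h.2.1, h.2.2.trans hU.2.2⟩

/-- One more degree of maps from `P(π)` can be removed. -/
theorem remove_degree {π : Idx} (hE : ∀ τ, π < τ → S.HZ τ E) {d : ℤ}
    {U : Submodule A.carrier E.carrier} (hU : S.Adm E U)
    (hs : ∀ s < d, ∀ f ∈ ghomSet (S.P π) E s, (∀ x, f x ∈ U) → f = 0) :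
    ∃ U' ≤ U, S.Adm E U' ∧ ∀ s ≤ d, ∀ f ∈ ghomSet (S.P π) E s, (∀ x, f x ∈ U') → f = 0 := by
  let F : Submodule A.carrier E.carrier → Submodule k (ghomSub (S.P π) E d) := fun U' =>
    { carrier := {f | ∀ x, f.1 x ∈ U'}
      add_mem' := fun hf hg x => U'.add_mem (hf x) (hg x)
      zero_mem' := fun x => U'.zero_mem
      smul_mem' := fun c f hf x => (U'.restrictScalars k).smul_mem c (hf x) }
  have := ghomSub_finite S.laur (S.P π) E d
  obtain ⟨_, ⟨U', ⟨hle, hadm⟩, rfl⟩, hmin⟩ := IsArtinian.set_has_minimal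
    (F '' {U' | U' ≤ U ∧ S.Adm E U'}) ⟨_, U, ⟨le_rfl, hU⟩, rfl⟩
  refine ⟨U', hle, hadm, fun s hsd f hf hfU => ?_⟩
  rcases hsd.lt_or_eq with h | rfl
  · exact hs s h f hf fun x => hle (hfU x)
  by_contra hne
  have hgr := hadm.1
  have hgood : S.Good (E.sub U' hgr) ⊤ := (Good.sub_iff hgr).2 hadm.2.1
  obtain ⟨W, hW1, hW2, hW3, x, hx⟩ := exists_pco_quot (E := E.sub U' hgr) (π := π) (d := s) hgood
    (fun τ hτ e g hg => by
      have := hE τ hτ _ _ (ghom_comp hg (sub_incl hgr))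
      ext x
      exact LinearMap.congr_fun this x)
    (fun e he g hg => by
      have h1 := ghom_comp hg (sub_incl hgr)
      rw [add_zero] at h1
      have := hs e he _ h1 (fun x => hle (g x).2)
      ext x
      exact LinearMap.congr_fun this x)
    (f := f.codRestrict U' hfU) hf (fun h => hne (LinearMap.ext fun x =>
      congrArg Subtype.val (LinearMap.congr_fun h x)))
  have hW : S.Adm (E.sub U' hgr) W := ⟨hW1, hW2, hW3⟩
  have hW'le : W.map U'.subtype ≤ U' := by rintro _ ⟨y, -, rfl⟩; exact y.2
  refine hmin _ ⟨W.map U'.subtype, ⟨hW'le.trans hle, adm_sub' hadm hW⟩, rfl⟩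
    (lt_of_le_of_ne (fun g hg y => hW'le (hg y)) fun heq => ?_)
  have h1 : (⟨f, hf⟩ : ghomSub (S.P π) E s) ∈ F U' := hfU
  rw [← heq] at h1
  obtain ⟨y, hy, hyx⟩ := h1 x
  have : y = f.codRestrict U' hfU x := Subtype.ext hyx
  exact hx (this ▸ hy)

theorem remove_degrees {π : Idx} (hE : ∀ τ, π < τ → S.HZ τ E) (j : ℤ)
    {U : Submodule A.carrier E.carrier} (hU : S.Adm E U) :
    ∃ U' ≤ U, S.Adm E U' ∧ ∀ s ≤ j, ∀ f ∈ ghomSet (S.P π) E s, (∀ x, f x ∈ U') → f = 0 := by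
  obtain ⟨D, hD⟩ := ghom_bounded_below S.laur (S.P π) E
  have key : ∀ n : ℕ, ∃ U' ≤ U, S.Adm E U' ∧
      ∀ s < D + n, ∀ f ∈ ghomSet (S.P π) E s, (∀ x, f x ∈ U') → f = 0 := by
    intro n
    induction n with
    | zero => exact ⟨U, le_rfl, hU, fun s hs f hf _ => hD s (by simpa using hs) f hf⟩
    | succ n ih =>
      obtain ⟨U', hle, hadm, h⟩ := ih
      obtain ⟨U'', hle', hadm', h'⟩ := remove_degree hE hadm h
      exact ⟨U'', hle'.trans hle, hadm', fun s hs => h' s (by push_cast at hs; omega)⟩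
  obtain ⟨U', hle, hadm, h⟩ := key (j + 1 - D).toNat
  exact ⟨U', hle, hadm, fun s hs => h s (by have := Int.self_le_toNat (j + 1 - D); omega)⟩

omit [IsNoetherianRing A.carrier] in
theorem ch_pco_bound {W' W : Submodule A.carrier E.carrier}
    (h : Ch (Set.range S.pco) E W' W) : ∃ D : ℤ, ∀ i > D, ∀ x ∈ W, x ∈ E.grading i → x ∈ W' := by
  induction h with
  | refl h => exact ⟨0, fun _ _ x hx _ => hx⟩
  | @step W₁ W₂ N d h hg hN hs ih =>
    obtain ⟨π, rfl⟩ := hN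
    obtain ⟨hle, φ, hφ, -, hk⟩ := hs
    obtain ⟨D, hD⟩ := ih
    have := (isFiniteLength_iff_isNoetherian_isArtinian.1 (S.pco_finlen π)).2
    obtain ⟨b, hb⟩ := (S.pco π).bounded_above S.laur
    refine ⟨max D (b - d), fun i hi x hx hxi => hD i (lt_of_le_of_lt (le_max_left _ _) hi) x ?_ hxi⟩
    have h1 := hφ i ⟨x, hx⟩ hxi
    rw [hb _ (by have := le_max_right D (b - d); omega), Submodule.mem_bot] at h1
    exact (hk _).1 h1

omit [IsNoetherianRing A.carrier] in
theorem stab {X : Type} [AddCommGroup X] [Module k X] [FiniteDimensional k X]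
    {Z : ℕ → Submodule k X} (hZ : Antitone Z) : ∃ n, ∀ m ≥ n, Z m = Z n := by
  obtain ⟨n, hn⟩ := IsArtinian.monotone_stabilizes (R := k) (M := X)
    ⟨fun n => OrderDual.toDual (Z n), hZ⟩
  exact ⟨n, fun m hm => (hn m hm).symm⟩

omit [IsNoetherianRing A.carrier] in
/-- A descending intersection of submodules with vanishing `ext¹(Δ(σ), –)` has the same
property, as spaces of homogeneous maps are finite dimensional. -/
theorem good_iInf {U : ℕ → Submodule A.carrier E.carrier} (hanti : Antitone U)
    (hU : ∀ j, S.Good E (U j)) : S.Good E (⨅ j, U j) := by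
  intro σ t u hu hr
  have hr' : ∀ j x, u x ∈ U j := fun j x => iInf_le U j (hr x)
  choose h hh hhU hhu using fun j => hU j σ t u hu (hr' j)
  let Z : ℕ → Submodule k (ghomSub (S.P σ) E t) := fun j =>
    { carrier := {f | (∀ x, f.1 x ∈ U j) ∧ ∀ x ∈ S.K σ, f.1 x = 0}
      add_mem' := fun {f g} hf hg => ⟨fun x => (U j).add_mem (hf.1 x) (hg.1 x), fun x hx => by
        change f.1 x + g.1 x = 0
        rw [hf.2 x hx, hg.2 x hx, add_zero]⟩
      zero_mem' := ⟨fun x => (U j).zero_mem, fun _ _ => rfl⟩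
      smul_mem' := fun c f hf => ⟨fun x => ((U j).restrictScalars k).smul_mem c (hf.1 x),
        fun x hx => by
          change c • f.1 x = 0
          rw [hf.2 x hx, smul_zero]⟩ }
  have := ghomSub_finite S.laur (S.P σ) E t
  obtain ⟨n, hn⟩ := stab (Z := Z) fun i j hij f hf => ⟨fun x => hanti hij (hf.1 x), hf.2⟩
  refine ⟨h n, hh n, fun x => ?_, hhu n⟩
  rw [Submodule.mem_iInf]
  intro j
  rcases le_total j n with hj | hj
  · exact hanti hj (hhU n x)
  · have h1 : (⟨h n - h j, ghom_sub (hh n) (hh j)⟩ : ghomSub (S.P σ) E t) ∈ Z n :=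
      ⟨fun x => sub_mem (hhU n x) (hanti hj (hhU j x)), fun x hx => by
        change h n x - h j x = 0
        rw [hhu n x hx, hhu j x hx, sub_self]⟩
    rw [← hn j hj] at h1
    have h2 : h n x - h j x ∈ U j := h1.1 x
    have := add_mem h2 (hhU j x)
    rwa [sub_add_cancel] at this

omit [IsNoetherianRing A.carrier] in
theorem stab_degrees {U : ℕ → Submodule A.carrier E.carrier} (hA : A.Laurentian)
    (hanti : Antitone U) (D : ℤ) :
    ∃ j, ∀ i < D, ∀ x ∈ U j, x ∈ E.grading i → x ∈ ⨅ j, U j := by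
  obtain ⟨a, ha⟩ := E.bounded_below hA
  have h1 : ∀ i : ℤ, ∃ n, ∀ m ≥ n, ∀ x ∈ U n, x ∈ E.grading i → x ∈ U m := by
    intro i
    have := E.finite_grading hA i
    obtain ⟨n, hn⟩ := stab (X := E.grading i)
      (Z := fun n => ((U n).restrictScalars k).comap (E.grading i).subtype)
      fun m n hmn x hx => hanti hmn hx
    refine ⟨n, fun m hm x hx hxi => ?_⟩
    have h2 : (⟨x, hxi⟩ : E.grading i) ∈ ((U n).restrictScalars k).comap (E.grading i).subtype := hx
    rw [← hn m hm] at h2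
    exact h2
  choose n hn using h1
  refine ⟨(Finset.Ico a D).sup n, fun i hi x hx hxi => ?_⟩
  by_cases hia : i < a
  · rw [ha i hia, Submodule.mem_bot] at hxi
    rw [hxi]; exact zero_mem _
  have hle : n i ≤ (Finset.Ico a D).sup n :=
    Finset.le_sup (f := n) (Finset.mem_Ico.2 ⟨by omega, hi⟩)
  rw [Submodule.mem_iInf]
  intro j
  rcases le_total j (n i) with hj | hj
  · exact hanti (hj.trans hle) hx
  · exact hn i j hj x (hanti hle hx) hxi

omit [IsNoetherianRing A.carrier] in
/-- The submodule generated by the components of `U` of large degree lives in large degrees. -/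
theorem span_high {a : ℤ} (ha : ∀ n < a, A.grading n = ⊥) (U : Submodule A.carrier E.carrier)
    (D : ℤ) : ∀ x ∈ Submodule.span A.carrier {x | x ∈ U ∧ ∃ i ≥ D, x ∈ E.grading i},
      ∀ i < D + a, E.pr i x = 0 := by
  have key : ∀ x ∈ Submodule.span A.carrier {x | x ∈ U ∧ ∃ i ≥ D, x ∈ E.grading i},
      ∀ b : A.carrier, ∀ i < D + a, E.pr i (b • x) = 0 := by
    intro x hx
    induction hx using Submodule.span_induction with
    | mem x h =>
      obtain ⟨-, j, hj, hx⟩ := h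
      intro b
      refine gr_induction A.internal (p := fun b => ∀ i < D + a, E.pr i (b • x) = 0)
        ?_ ?_ ?_ b
      · intro i _; rw [zero_smul, map_zero]
      · intro b c hb hc i hi; rw [add_smul, map_add, hb i hi, hc i hi, add_zero]
      · intro l b hb i hi
        by_cases hla : l < a
        · rw [ha l hla, Submodule.mem_bot] at hb
          rw [hb, zero_smul, map_zero]
        · exact E.pr_ne (E.smul_mem hb hx) (by omega)
    | zero => intro b i _; rw [smul_zero, map_zero]
    | add x y _ _ hx hy => intro b i hi; rw [smul_add, map_add, hx b i hi, hy b i hi, add_zero]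
    | smul c x _ hx => intro b i hi; rw [← mul_smul]; exact hx _ i hi
  intro x hx i hi
  simpa using key x hx 1 i hi

theorem exists_adm_deep (n : ℕ) : ∀ (E : GMod A), S.Good E ⊤ →
    Set.ncard {τ | ¬ S.HZ τ E} ≤ n → ∀ m : ℤ,
    ∃ Y, S.Adm E Y ∧ ∀ i ≤ m, ∀ x ∈ Y, x ∈ E.grading i → x = 0 := by
  induction n with
  | zero =>
    intro E hgood hn m
    have h0 : {τ | ¬ S.HZ τ E} = ∅ := (Set.ncard_eq_zero (Set.toFinite _)).1 (by omega)
    refine ⟨⊤, ⟨GMod.Gr.top, hgood, Ch.refl GMod.Gr.top⟩, fun i _ x _ _ => ?_⟩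
    by_contra hx
    obtain ⟨τ, d, g, hg, -, y, hy⟩ := S.exists_hom (M := E) GMod.Gr.top GMod.Gr.bot
      (lt_top_iff_ne_top.2 fun h => hx (by
        have : x ∈ (⊤ : Submodule A.carrier E.carrier) := trivial
        rw [← h] at this
        exact this))
    have : τ ∈ {τ | ¬ S.HZ τ E} := fun h => hy (by rw [h d g hg]; exact zero_mem _)
    rw [h0] at this
    exact this
  | succ n ih =>
    intro E hgood hn m
    by_cases hex : ∃ τ, ¬ S.HZ τ E
    swap
    · push Not at hex
      exact ih E hgood (by
        rw [show {τ | ¬ S.HZ τ E} = ∅ from Set.eq_empty_of_forall_notMem fun τ h => h (hex τ)]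
        simp) m
    obtain ⟨π, hπ, hmax⟩ := exists_max _ hex
    replace hmax : ∀ τ, π < τ → S.HZ τ E := fun τ h => not_not.1 (hmax τ h)
    have htop : S.Adm E ⊤ := ⟨GMod.Gr.top, hgood, Ch.refl GMod.Gr.top⟩
    -- the descending sequence of admissible submodules
    choose nx hnxle hnxadm hnx using fun (j : ℕ) (U : {U // S.Adm E U}) =>
      remove_degrees hmax (j : ℤ) U.2
    let V : ℕ → {U // S.Adm E U} := fun j => Nat.rec ⟨⊤, htop⟩
      (fun j U => ⟨nx j U, hnxadm j U⟩) j
    have hVs : ∀ j, V (j + 1) = ⟨nx j (V j), hnxadm j (V j)⟩ := fun j => rfl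
    let U : ℕ → Submodule A.carrier E.carrier := fun j => (V j).1
    have hanti : Antitone U := antitone_nat_of_succ_le fun j => hnxle j (V j)
    have hadm : ∀ j, S.Adm E (U j) := fun j => (V j).2
    have hkill : ∀ j : ℕ, ∀ s ≤ (j : ℤ), ∀ f ∈ ghomSet (S.P π) E s,
      (∀ x, f x ∈ U (j + 1)) → f = 0 := fun j => hnx j (V j)
    let E' := ⨅ j, U j
    have hE'gr : E.Gr E' := GMod.Gr.iInf fun j => (hadm j).1
    have hE'good : S.Good E E' := good_iInf hanti fun j => (hadm j).2.1
    obtain ⟨K', hK', hK'm⟩ := ih (E.sub E' hE'gr) ((Good.sub_iff hE'gr).2 hE'good) (by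
      have hlt : {τ | ¬ S.HZ τ (E.sub E' hE'gr)} ⊂ {τ | ¬ S.HZ τ E} := by
        refine (Set.ssubset_iff_of_subset ?_).2 ⟨π, hπ, ?_⟩
        · intro τ hτ h
          refine hτ fun e g hg => ?_
          have := h _ _ (ghom_comp hg (sub_incl hE'gr))
          ext x
          exact LinearMap.congr_fun this x
        · intro h
          refine h fun e g hg => ?_
          have h1 := ghom_comp hg (sub_incl hE'gr)
          rw [add_zero] at h1
          have := hkill e.toNat e (Int.self_le_toNat e) _ h1 fun x => by
            have := (g x).2
            exact (iInf_le U (e.toNat + 1)) this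
          ext x
          exact LinearMap.congr_fun this x
      have := Set.ncard_lt_ncard hlt (Set.toFinite _)
      omega) m
    obtain ⟨hKgr, hKgood, hKch⟩ := adm_sub hE'gr hK'
    set K := K'.map E'.subtype with hKdef
    have hKm : ∀ i ≤ m, ∀ x ∈ K, x ∈ E.grading i → x = 0 := by
      rintro i hi _ ⟨x, hx, rfl⟩ hxi
      have := hK'm i hi x hx hxi
      rw [this]; exact map_zero _
    have hKE' : K ≤ E' := hKch.le
    obtain ⟨D, hD⟩ := ch_pco_bound hKch
    obtain ⟨a, ha⟩ := S.laur.1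
    obtain ⟨j, hj⟩ := stab_degrees (E := E) S.laur hanti (max D m + 1 - a)
    have hE'U : E' ≤ U j := iInf_le U j
    let B := Submodule.span A.carrier
      {x | x ∈ U j ∧ ∃ i ≥ max D m + 1 - a, x ∈ E.grading i}
    have hBgr : E.Gr B := GMod.Gr.span fun x hx => hx.2.imp fun i h => h.2
    have hBlow : ∀ x ∈ B, ∀ i ≤ max D m, E.pr i x = 0 := fun x hx i hi =>
      span_high ha (U j) _ x hx i (by omega)
    have hBU : B ≤ U j := Submodule.span_le.2 fun x hx => hx.1
    have hYgr : E.Gr (K ⊔ B) := hKgr.sup hBgr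
    have hYlow : ∀ i ≤ max D m, ∀ x ∈ K ⊔ B, x ∈ E.grading i → x ∈ K := by
      intro i hi x hx hxi
      obtain ⟨y, hy, z, hz, rfl⟩ := Submodule.mem_sup.1 hx
      rw [← E.pr_self hxi, map_add, hBlow z hz i hi, add_zero]
      exact hKgr y hy i
    have hsup : E' ⊔ (K ⊔ B) = U j := by
      refine le_antisymm (sup_le hE'U (sup_le (hKE'.trans hE'U) hBU)) fun x hx => ?_
      refine E.mem_of_pr fun i => ?_
      have hxi := (hadm j).1 x hx i
      by_cases hi : i < max D m + 1 - a
      · exact Submodule.mem_sup_left (hj i hi _ hxi (E.pr_mem i x))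
      · exact Submodule.mem_sup_right (Submodule.mem_sup_right
          (Submodule.subset_span ⟨hxi, i, by omega, E.pr_mem i x⟩))
    have hinf : E' ⊓ (K ⊔ B) ≤ K := by
      intro x hx
      refine E.mem_of_pr fun i => ?_
      by_cases hi : i ≤ max D m
      · exact hYlow i hi _ (hYgr x hx.2 i) (E.pr_mem i x)
      · exact hD i (by have := le_max_left D m; omega) _ (hE'gr x hx.1 i) (E.pr_mem i x)
    refine ⟨K ⊔ B, ⟨hYgr, ?_, ?_⟩, fun i hi x hx hxi =>
      hKm i hi x (hYlow i (hi.trans (le_max_right _ _)) x hx hxi) hxi⟩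
    · intro σ t u hu hr
      obtain ⟨h, hh, hhU, hhu⟩ := (hadm j).2.1 σ t u hu fun x =>
        sup_le (hKE'.trans hE'U) hBU (hr x)
      obtain ⟨h1, hh1, hh1E, hh2⟩ := split_hom (S := S) hE'gr hYgr hh fun x => by
        rw [hsup]; exact hhU x
      obtain ⟨h3, hh3, hh3K, hh3u⟩ := hKgood σ t _ (homOn_of_ghom hh1 (S.K σ)) fun x =>
        hinf ⟨hh1E x, by
          have := sub_mem (hr x) (hh2 x)
          rw [hhu x x.2] at this
          simpa using this⟩
      refine ⟨h - h1 + h3, ghom_add (ghom_sub hh hh1) hh3, fun x =>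
        add_mem (hh2 x) (Submodule.mem_sup_left (hh3K x)), fun x hx => ?_⟩
      rw [LinearMap.add_apply, LinearMap.sub_apply, hhu x hx, hh3u x hx]
      exact sub_add_cancel _ _
    · have := hKch.sup hYgr hinf
      rw [hsup, ← sup_assoc, sup_idem] at this
      exact this.trans (hadm j).2.2

/-- A module with `ext¹(Δ(σ), E) = 0` for all `σ` has a proper costandard filtration. -/
theorem hasPCFilt_of_good (hE : S.Good E ⊤) : HasPCFilt S E := by
  have step : ∀ (m : ℕ) (U : {U // S.Adm E U}), ∃ Y : {U // S.Adm E U},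
      Ch (Set.range S.pco) E Y.1 U.1 ∧ ∀ i ≤ (m : ℤ), ∀ x ∈ Y.1, x ∈ E.grading i → x = 0 := by
    intro m U
    obtain ⟨W, hW, hWm⟩ := exists_adm_deep _ (E.sub U.1 U.2.1)
      ((Good.sub_iff U.2.1).2 U.2.2.1) le_rfl m
    refine ⟨⟨_, adm_sub' U.2 hW⟩, (adm_sub U.2.1 hW).2.2, ?_⟩
    rintro i hi _ ⟨x, hx, rfl⟩ hxi
    have := hWm i hi x hx hxi
    rw [this]; exact map_zero _
  choose nx hnx hnxm using step
  let V : ℕ → {U // S.Adm E U} := fun j => Nat.rec ⟨⊤, GMod.Gr.top, hE, Ch.refl GMod.Gr.top⟩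
    (fun j U => nx j U) j
  refine filtBy_of_chains (Y := fun j => (V j).1) rfl (fun j => hnx j (V j)) fun x hx => ?_
  refine E.pr_ext fun i => ?_
  rw [map_zero]
  exact hnxm i.toNat (V i.toNat) i (Int.self_le_toNat i) _
    ((nx i.toNat (V i.toNat)).2.1 x (hx (i.toNat + 1)) i) (E.pr_mem i x)

end AHW


/-! ### Consequences of property `(♠)` -/

section Spade

/-- The left regular module. -/
def regMod (A : GAlg k) : GMod A where
  carrier := A.carrier
  grading := A.grading
  internal := A.internal
  smul_mem := fun ha hx => A.mul_mem ha hx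
  fg := Module.Finite.self _

/-- A left Noetherian Laurentian algebra with property `(♠)` is a Noetherian module over its
centre: a graded Nakayama argument shows that it is finite over the subalgebra generated by
finitely many homogeneous central elements of positive degree. -/
theorem spade_noeth [IsNoetherianRing A.carrier] (hA : A.Laurentian) (h : A.Spade) :
    IsNoetherian (Subalgebra.center k A.carrier) A.carrier := by
  classical
  obtain ⟨Z, hZ, hneg, h0, -, hcent, s, hs⟩ := h
  obtain ⟨⟨D, hD⟩, -⟩ := hA
  let R := regMod A
  let G : Set A.carrier := {z | ∃ i : ℤ, 0 < i ∧ z ∈ Z i}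
  obtain ⟨t, htG, hspan⟩ := (Submodule.fg_span_iff_fg_span_finset_subset (R := A.carrier) G).1
    (IsNoetherian.noetherian _)
  have hcen : ∀ z ∈ t, z ∈ Subalgebra.center k A.carrier := by
    intro z hz
    obtain ⟨i, -, hi⟩ := htG hz
    exact Subalgebra.mem_center_iff.2 fun b => (hcent i z hi b).symm
  let T : Set (Subalgebra.center k A.carrier) := {c | c.1 ∈ t}
  have hT : T.Finite := t.finite_toSet.preimage Subtype.val_injective.injOn
  let B := Algebra.adjoin k T
  have hB : IsNoetherianRing B := by
    have : Algebra.FiniteType k B :=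
      by
      have h1 := Subalgebra.fg_adjoin_finset (R := k) hT.toFinset
      rw [hT.coe_toFinset] at h1
      exact (Subalgebra.fg_iff_finiteType B).1 h1
    exact Algebra.FiniteType.isNoetherianRing k B
  let X : Set A.carrier := {x | ∃ u ∈ s, ∃ i, x = R.pr i u}
  have hX : X.Finite := by
    choose f hf using fun u : A.carrier => exists_sum_gpr A.internal u
    have hsub : X ⊆ (s.biUnion fun u => (f u).image fun i => R.pr i u : Finset A.carrier) ∪ {0} := by
      rintro x ⟨u, hu, i, rfl⟩
      by_cases hi : i ∈ f u
      · left
        exact Finset.mem_coe.2 (Finset.mem_biUnion.2 ⟨u, hu, Finset.mem_image_of_mem _ hi⟩)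
      · right
        have h1 := hf u (f u) le_rfl
        have h2 : R.pr i u = R.pr i (∑ j ∈ f u, R.pr j u) := congrArg (R.pr i) h1
        rw [map_sum, Finset.sum_eq_zero] at h2
        · exact h2
        · intro j hj
          exact R.pr_ne (R.pr_mem j u) fun hji => hi (hji ▸ hj)
    exact ((Finset.finite_toSet _).union (Set.finite_singleton 0)).subset hsub
  let N : Submodule B A.carrier := Submodule.span B X
  have hzN : ∀ z ∈ t, ∀ x ∈ N, z * x ∈ N := by
    intro z hz x hx
    exact N.smul_mem (⟨⟨z, hcen z hz⟩, Algebra.subset_adjoin hz⟩ : B) hx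
  have key : ∀ n : ℕ, ∀ i : ℤ, i < D + n → ∀ a : A.carrier, R.pr i a ∈ N := by
    intro n
    induction n with
    | zero =>
      intro i hi a
      have h1 : R.pr i a ∈ A.grading i := R.pr_mem i a
      rw [hD i (by simpa using hi)] at h1
      have h2 : R.pr i a = 0 := (Submodule.mem_bot k).1 h1
      exact (congrArg (· ∈ N) h2).mpr (zero_mem _)
    | succ n ih =>
      intro i hi a
      have ht : ∀ x ∈ Submodule.span A.carrier (t : Set A.carrier), R.pr i x ∈ N := by
        intro x hx
        obtain ⟨f, -, rfl⟩ := Submodule.mem_span_finset.1 hx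
        refine (congrArg (· ∈ N) (map_sum (R.pr i) _ _)).mpr (sum_mem fun z hz => ?_)
        obtain ⟨d, hd, hzd⟩ := htG hz
        have h1 : f z • z = z • f z := (hcent d z hzd (f z)).symm
        rw [h1]
        have h2 := R.pr_smul (hZ d hzd) (f z) i
        refine (congrArg (· ∈ N) h2).mpr (hzN z hz _ (ih _ ?_ _))
        push_cast at hi
        omega
      have ha : a ∈ AddSubgroup.closure
          {x : A.carrier | ∃ i : ℤ, ∃ z ∈ Z i, ∃ t ∈ s, x = z * t} := by rw [hs]; trivial
      induction ha using AddSubgroup.closure_induction with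
      | mem x hx =>
        obtain ⟨j, z, hz, u, hu, rfl⟩ := hx
        rcases lt_trichotomy j 0 with hj | rfl | hj
        · rw [hneg j hj, Submodule.mem_bot] at hz
          rw [hz, zero_mul]
          exact (congrArg (· ∈ N) (map_zero (R.pr i))).mpr (zero_mem _)
        · rw [h0] at hz
          obtain ⟨c, rfl⟩ := Submodule.mem_span_singleton.1 hz
          rw [smul_mul_assoc, one_mul]
          refine (congrArg (· ∈ N) (map_smul (R.pr i) c u)).mpr ?_
          exact N.smul_of_tower_mem c (Submodule.subset_span ⟨u, hu, i, rfl⟩)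
        · refine ht _ ?_
          rw [hcent j z hz u, ← hspan]
          exact Submodule.smul_mem _ u (Submodule.subset_span ⟨j, hj, hz⟩)
      | zero => exact (congrArg (· ∈ N) (map_zero (R.pr i))).mpr (zero_mem _)
      | add x y _ _ hx hy =>
        exact (congrArg (· ∈ N) (map_add (R.pr i) x y)).mpr (add_mem hx hy)
      | neg x _ hx => exact (congrArg (· ∈ N) (map_neg (R.pr i) x)).mpr (neg_mem hx)
  have hN : N = ⊤ := by
    refine eq_top_iff.2 fun a _ => ?_
    obtain ⟨f, hf⟩ := exists_sum_gpr A.internal a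
    rw [hf f le_rfl]
    exact sum_mem fun i _ => key (i - D + 1).toNat i
      (by have := Int.self_le_toNat (i - D + 1); omega) a
  have hfin : Module.Finite B A.carrier := ⟨⟨hX.toFinset, by rw [hX.coe_toFinset]; exact hN⟩⟩
  have : IsNoetherian B A.carrier := isNoetherian_of_isNoetherianRing_of_finite B A.carrier
  exact isNoetherian_of_tower B this

instance (M : GMod A) : SMulCommClass A.carrier (Subalgebra.center k A.carrier) M.carrier where
  smul_comm a c x := by
    change a • c.1 • x = c.1 • a • x
    rw [smul_smul, smul_smul, Subalgebra.mem_center_iff.1 c.2 a]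

/-- Finitely many homogeneous maps generate all homogeneous maps over the centre. -/
theorem exists_gen_maps [IsNoetherianRing A.carrier] (hA : A.Laurentian) (h : A.Spade)
    (M N : GMod A) : ∃ t : Finset (M.carrier →ₗ[A.carrier] N.carrier),
      (∀ f ∈ t, ∃ d, f ∈ ghomSet M N d) ∧ ∀ d, ∀ f ∈ ghomSet M N d,
        f ∈ Submodule.span (Subalgebra.center k A.carrier)
          (t : Set (M.carrier →ₗ[A.carrier] N.carrier)) := by
  have h1 := spade_noeth hA h
  obtain ⟨s, hs⟩ := N.fg.fg_top
  have h2 : IsNoetherian (Subalgebra.center k A.carrier) N.carrier := by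
    have h3 := N.fg
    obtain ⟨n, f, hf⟩ := Module.Finite.exists_fin' A.carrier N.carrier
    exact isNoetherian_of_surjective
      (f.restrictScalars (Subalgebra.center k A.carrier)) (LinearMap.range_eq_top.2 hf)
  obtain ⟨s, hs⟩ := M.fg.fg_top
  let ev : (M.carrier →ₗ[A.carrier] N.carrier) →ₗ[Subalgebra.center k A.carrier]
      (s → N.carrier) :=
    { toFun := fun f x => f x.1
      map_add' := fun _ _ => rfl
      map_smul' := fun _ _ => rfl }
  have hev : Function.Injective ev := by
    intro f g hfg
    refine LinearMap.ext_on hs fun x hx => ?_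
    exact congrFun hfg ⟨x, hx⟩
  have h4 : IsNoetherian (Subalgebra.center k A.carrier) (M.carrier →ₗ[A.carrier] N.carrier) :=
    isNoetherian_of_injective ev hev
  obtain ⟨t, ht, hspan⟩ := (Submodule.fg_span_iff_fg_span_finset_subset
    (R := Subalgebra.center k A.carrier)
    {f : M.carrier →ₗ[A.carrier] N.carrier | ∃ d, f ∈ ghomSet M N d}).1
    (IsNoetherian.noetherian _)
  refine ⟨t, fun f hf => ht hf, fun d f hf => ?_⟩
  rw [← hspan]
  exact Submodule.subset_span ⟨d, hf⟩

/-- A homogeneous map that extends has a homogeneous extension: the degree `d` component of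
an arbitrary extension. -/
theorem exists_homog_ext {M N : GMod A} {W : Submodule A.carrier M.carrier} (hW : M.Gr W) {d : ℤ}
    {f : W →ₗ[A.carrier] N.carrier} (hf : HomOn M W N d f)
    {g : M.carrier →ₗ[A.carrier] N.carrier} (hg : ∀ x : W, g x = f x) :
    ∃ g' ∈ ghomSet M N d, ∀ x : W, g' x = f x := by
  let D : M.carrier →ₗ[k] N.carrier :=
    DirectSum.toModule k ℤ N.carrier
      (fun i => N.pr (i + d) ∘ₗ (g.restrictScalars k) ∘ₗ (M.grading i).subtype) ∘ₗ
    (LinearEquiv.ofBijective (DirectSum.coeLinearMap M.grading) M.internal).symm.toLinearMap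
  have hD : ∀ i, ∀ x ∈ M.grading i, D x = N.pr (i + d) (g x) := by
    intro i x hx
    have e : (LinearEquiv.ofBijective (DirectSum.coeLinearMap M.grading) M.internal).symm x =
        DirectSum.lof k ℤ (fun i => M.grading i) i ⟨x, hx⟩ := by
      rw [LinearEquiv.symm_apply_eq]
      exact (DirectSum.coeLinearMap_lof (A := M.grading) i ⟨x, hx⟩).symm
    simp only [D, LinearMap.comp_apply, LinearEquiv.coe_coe, e, DirectSum.toModule_lof]
    rfl
  have hsm : ∀ (a : A.carrier) (x : M.carrier), D (a • x) = a • D x := by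
    intro a x
    refine gr_induction A.internal (p := fun a => D (a • x) = a • D x) ?_ ?_ ?_ a
    · rw [zero_smul, zero_smul, map_zero]
    · intro a b ha hb
      rw [add_smul, add_smul, map_add, ha, hb]
    · intro j a ha
      refine M.ind (p := fun x => D (a • x) = a • D x) ?_ ?_ ?_ x
      · rw [smul_zero, map_zero, smul_zero]
      · intro x y hx hy
        rw [smul_add, map_add, hx, hy, map_add, smul_add]
      · intro i x hx
        have e : j + i + d - j = i + d := by ring
        rw [hD _ _ (M.smul_mem ha hx), hD _ _ hx, map_smul, N.pr_smul ha, e]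
  refine ⟨{ toFun := D, map_add' := map_add D, map_smul' := hsm }, ?_, ?_⟩
  · intro i x hx
    change D x ∈ _
    rw [hD i x hx]
    exact N.pr_mem _ _
  · intro x
    change D x = f x
    have h1 : ∀ j, D (M.pr j x) = g (M.pr j x) := by
      intro j
      rw [hD j _ (M.pr_mem j _)]
      refine N.pr_self ?_
      rw [hg ⟨M.pr j x, hW x x.2 j⟩]
      exact hf j _ (M.pr_mem j _)
    obtain ⟨s, hs⟩ := exists_sum_gpr M.internal x.1
    have h2 : x.1 = ∑ j ∈ s, M.pr j x := hs s le_rfl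
    rw [← hg, h2, map_sum, map_sum]
    exact Finset.sum_congr rfl fun j _ => h1 j

end Spade


/-! ### Universal extensions -/

section Universal

namespace AHW

variable {S : AHW A Idx} {M E : GMod A} [IsNoetherianRing A.carrier]

/-- Maps out of `K(π)` do not see subquotients `Δ(σ)` with `σ ≯ π`. -/
theorem K_land {Λ : Set Idx} {π : Idx} (hΛ : ∀ σ ∈ Λ, ¬ π < σ)
    {W' W : Submodule A.carrier M.carrier} (h : Ch (S.Δ '' Λ) M W' W) {d : ℤ}
    {f : S.K π →ₗ[A.carrier] M.carrier} (hf : HomOn (S.P π) (S.K π) M d f)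
    (hfW : ∀ x, f x ∈ W) : ∀ x, f x ∈ W' := by
  induction h with
  | refl _ => exact hfW
  | @step W₁ W₂ N e hch hgr hN hsec ih =>
    refine ih fun x => ?_
    obtain ⟨σ, hσ, rfl⟩ := hN
    obtain ⟨-, φ, hφ, -, hk⟩ := hsec
    let u : S.K π →ₗ[A.carrier] (S.Δ σ).carrier := φ ∘ₗ f.codRestrict W₂ hfW
    have hu : HomOn (S.P π) (S.K π) (S.Δ σ) (d + e) u := by
      intro i x hx
      have := hφ (i + d) ⟨f x, hfW x⟩ (hf i x hx)
      rw [add_assoc] at this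
      exact this
    have hu0 : u = 0 := K_hom_zero (fun τ hτ => hz_std fun h => hΛ σ hσ (hτ.trans_le h)) hu
    exact (hk ⟨f x, hfW x⟩).1 (LinearMap.congr_fun hu0 x)

omit [IsNoetherianRing A.carrier] in
/-- Finitely many homogeneous maps `K(π) → E` can be made to extend to `P(π)` by enlarging
`E` through finitely many copies of `Δ(π)`. -/
theorem exists_ext_finset (π : Idx)
    (t : Finset (S.K π →ₗ[A.carrier] E.carrier))
    (ht : ∀ f ∈ t, ∃ d, HomOn (S.P π) (S.K π) E d f) :
    ∃ (E₁ : GMod A) (ι : E.carrier →ₗ[A.carrier] E₁.carrier), ι ∈ ghomSet E E₁ 0 ∧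
      Function.Injective ι ∧ Ch (S.Δ '' {π}) E₁ (LinearMap.range ι) ⊤ ∧
      ∀ f ∈ t, ∃ g : (S.P π).carrier →ₗ[A.carrier] E₁.carrier, ∀ x : S.K π, g x = ι (f x) := by
  classical
  induction t using Finset.induction_on with
  | empty =>
    refine ⟨E, LinearMap.id, fun i x hx => by simpa using hx, fun _ _ h => h, ?_, ?_⟩
    · rw [LinearMap.range_id]
      exact Ch.refl GMod.Gr.top
    · intro f hf
      exact absurd hf (Finset.notMem_empty f)
  | insert f t _ ih =>
    obtain ⟨E₁, ι, hι, hi, hch, hext⟩ := ih fun f hf => ht f (Finset.mem_insert_of_mem hf)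
    obtain ⟨d, hd⟩ := ht f (Finset.mem_insert_self f t)
    obtain ⟨E₂, j, hj, hji, g, hg, hgf, φ, hφ, hφs, hφk, -⟩ := S.exists_pushout (homOn_comp hd hι)
    refine ⟨E₂, j ∘ₗ ι, ?_, hji.comp hi, ?_, ?_⟩
    · simpa using ghom_comp hι hj
    · have h1 := hch.map hj fun x _ hx => by
        rw [hji (hx.trans (map_zero j).symm)]
        exact zero_mem _
      rw [Submodule.map_top, ← LinearMap.range_comp] at h1
      exact Ch.step h1 GMod.Gr.top ⟨π, rfl, rfl⟩ (Sec.of_ghom hφ hφs hφk)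
    · intro f' hf'
      rcases Finset.mem_insert.1 hf' with rfl | hf'
      · exact ⟨g, fun x => hgf x.1 x.2⟩
      · obtain ⟨g', hg'⟩ := hext f' hf'
        exact ⟨j ∘ₗ g', fun x => congrArg j (hg' x)⟩

/-- The universal extension of `E` by copies of `Δ(π)`: it kills `ext¹(Δ(π), –)` and keeps
`ext¹(Δ(σ), –)` zero unless `σ < π`. Finitely many copies suffice by property `(♠)`. -/
theorem exists_universal (hspade : A.Spade) (S : AHW A Idx) (π : Idx) (E : GMod A) :
    ∃ (E₁ : GMod A) (ι : E.carrier →ₗ[A.carrier] E₁.carrier), ι ∈ ghomSet E E₁ 0 ∧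
      Function.Injective ι ∧ Ch (S.Δ '' {π}) E₁ (LinearMap.range ι) ⊤ ∧
      S.GoodAt π E₁ ⊤ ∧ ∀ σ, ¬ σ < π → S.GoodAt σ E ⊤ → S.GoodAt σ E₁ ⊤ := by
  obtain ⟨t, ht, hspan⟩ := exists_gen_maps S.laur hspade ((S.P π).sub (S.K π) (S.K_gr π)) E
  obtain ⟨E₁, ι, hι, hi, hch, hext⟩ := exists_ext_finset (S := S) π t ht
  -- Both claims reduce to extending `ι ∘ f'` for a homogeneous map `f' : K(σ) → E`.
  have red : ∀ σ, ¬ σ < π → (∀ (d : ℤ) (f' : S.K σ →ₗ[A.carrier] E.carrier),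
      HomOn (S.P σ) (S.K σ) E d f' → ∃ g : (S.P σ).carrier →ₗ[A.carrier] E₁.carrier,
        ∀ x : S.K σ, g x = ι (f' x)) → S.GoodAt σ E₁ ⊤ := by
    intro σ hσ H d f hf _
    have hland := K_land (M := E₁) (fun τ hτ => by rw [Set.mem_singleton_iff.1 hτ]; exact hσ) hch hf
      fun _ => trivial
    obtain ⟨f', hf', hff'⟩ := exists_lift_inj (add_zero d) hι hi hf hland
    obtain ⟨g, hg⟩ := H d f' hf'
    obtain ⟨g', hg', hgf⟩ := exists_homog_ext (S.K_gr σ) hf fun x => (hg x).trans (hff' x)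
    exact ⟨g', hg', fun _ => trivial, fun x hx => hgf ⟨x, hx⟩⟩
  refine ⟨E₁, ι, hι, hi, hch, red π (lt_irrefl π) fun d f' hf' => ?_, fun σ hσ hE =>
    red σ hσ fun d f' hf' => ?_⟩
  · have hmem := hspan d f' hf'
    clear hf'
    induction hmem using Submodule.span_induction with
    | mem f h => exact hext f h
    | zero => exact ⟨0, fun x => (map_zero ι).symm⟩
    | add f f' _ _ h h' =>
      obtain ⟨g, hg⟩ := h
      obtain ⟨g', hg'⟩ := h'
      refine ⟨g + g', fun x => ?_⟩
      change g x + g' x = ι (f x + f' x)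
      rw [hg, hg', map_add]
    | smul c f _ h =>
      obtain ⟨g, hg⟩ := h
      refine ⟨c • g, fun x => ?_⟩
      change c.1 • g x = ι (c.1 • f x)
      rw [hg, map_smul]
  · obtain ⟨g, -, -, hg⟩ := hE d f' hf' fun _ => trivial
    exact ⟨ι ∘ₗ g, fun x => congrArg ι (hg x.1 x.2)⟩

/-- Iterated universal extensions: if `ext¹(Δ(σ), E)` vanishes for all `σ` in an up-closed
set `Θ`, then `E` embeds in a module without `ext¹(Δ(σ), –)` for all `σ`, with cokernel
filtered by `Δ(σ)` for `σ ∉ Θ`. -/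
theorem exists_good (hspade : A.Spade) (S : AHW A Idx) (n : ℕ) : ∀ (Θ : Set Idx),
    Set.ncard Θᶜ ≤ n → (∀ σ ∈ Θ, ∀ τ, σ < τ → τ ∈ Θ) → ∀ E : GMod A,
    (∀ σ ∈ Θ, S.GoodAt σ E ⊤) →
    ∃ (E₁ : GMod A) (ι : E.carrier →ₗ[A.carrier] E₁.carrier), ι ∈ ghomSet E E₁ 0 ∧
      Function.Injective ι ∧ Ch (S.Δ '' Θᶜ) E₁ (LinearMap.range ι) ⊤ ∧ S.Good E₁ ⊤ := by
  induction n with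
  | zero =>
    intro Θ hn _ E hE
    have h0 : Θᶜ = ∅ := (Set.ncard_eq_zero (Set.toFinite _)).1 (Nat.le_zero.1 hn)
    refine ⟨E, LinearMap.id, fun i x hx => by simpa using hx, fun _ _ h => h, ?_, fun σ => ?_⟩
    · rw [LinearMap.range_id]
      exact Ch.refl GMod.Gr.top
    · exact hE σ (by rw [Set.compl_empty_iff.1 h0]; trivial)
  | succ n ih =>
    intro Θ hn hup E hE
    by_cases hne : ∃ π, π ∉ Θ
    · obtain ⟨π, hπ, hmax⟩ := exists_max _ hne
      obtain ⟨E₁, ι, hι, hi, hch, hπE, hσE⟩ := exists_universal hspade S π E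
      have hsub : (insert π Θ)ᶜ ⊂ Θᶜ :=
        (Set.ssubset_iff_of_subset (Set.compl_subset_compl.2 (Set.subset_insert π Θ))).2
          ⟨π, hπ, fun h => h (Set.mem_insert π Θ)⟩
      obtain ⟨E₂, j, hj, hji, hch₂, hgood⟩ := ih (insert π Θ)
        (by have := Set.ncard_lt_ncard hsub (Set.toFinite _); omega)
        (by
          rintro σ (rfl | hσ) τ hτ
          · exact Or.inr (not_not.1 (hmax τ hτ))
          · exact Or.inr (hup σ hσ τ hτ))
        E₁
        (by
          rintro σ (rfl | hσ)
          · exact hπE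
          · exact hσE σ (fun h => hπ (hup σ hσ π h)) (hE σ hσ))
      refine ⟨E₂, j ∘ₗ ι, by simpa using ghom_comp hι hj, hji.comp hi, ?_, hgood⟩
      have h1 := hch.map hj fun x _ hx => by
        rw [hji (hx.trans (map_zero j).symm)]
        exact zero_mem _
      rw [Submodule.map_top, ← LinearMap.range_comp] at h1
      refine (h1.mono (Set.image_mono ?_)).trans (hch₂.mono (Set.image_mono hsub.1))
      rintro _ rfl
      exact hπ
    · exact ih Θ (by
        have : Θᶜ = ∅ := Set.compl_empty_iff.2 (Set.eq_univ_of_forall fun x => by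
          by_contra h; exact hne ⟨x, h⟩)
        rw [this, Set.ncard_empty]; exact Nat.zero_le _) hup E hE

end AHW

end Universal


/-! ### Kernels of surjections between `Δ`-filtered modules -/

section Kernels

namespace AHW

variable {S : AHW A Idx} {M N : GMod A} [IsNoetherianRing A.carrier]
  {W' W X : Submodule A.carrier M.carrier}

/-- A subquotient `Δ(σ)` is generated by the image of a map from `P(σ)`. -/
theorem sec_lift {σ : Idx} {d : ℤ} (hW : M.Gr W) (h : Sec M W W' (S.Δ σ) d) :
    ∃ l ∈ ghomSet (S.P σ) M (-d), (∀ x, l x ∈ W) ∧ (∀ x, l x ∈ W' ↔ x ∈ S.K σ) ∧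
      W = W' ⊔ LinearMap.range l := by
  obtain ⟨hle, φ, hφ, hs, hk⟩ := h
  obtain ⟨l, hl, hlW, hlφ⟩ := proj_lift (S.proj σ) hW (neg_add_cancel d) hφ (S.δ_mem σ)
    fun x => hs _
  refine ⟨l, hl, hlW, fun x => ?_, le_antisymm (fun w hw => ?_) ?_⟩
  · rw [S.mem_K, ← hlφ x (hlW x)]
    exact (hk ⟨l x, hlW x⟩).symm
  · obtain ⟨x, hx⟩ := S.δ_surj σ (φ ⟨w, hw⟩)
    have h1 : φ (⟨w, hw⟩ - ⟨l x, hlW x⟩) = 0 := by rw [map_sub, hlφ x (hlW x), hx, sub_self]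
    have h2 : w - l x ∈ W' := (hk _).1 h1
    exact Submodule.mem_sup.2 ⟨_, h2, l x, ⟨x, rfl⟩, sub_add_cancel w (l x)⟩
  · refine sup_le hle ?_
    rintro _ ⟨x, rfl⟩
    exact hlW x

omit [IsNoetherianRing A.carrier] in
theorem sec_lift_notMem {σ : Idx} {l : (S.P σ).carrier →ₗ[A.carrier] M.carrier}
    (hl : ∀ x, l x ∈ W' ↔ x ∈ S.K σ) : ∃ x, l x ∉ W' := by
  obtain ⟨x, hx⟩ := S.std_nontrivial σ
  exact ⟨x, fun h => hx ((hl x).1 h)⟩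

/-- If `π` is maximal among the labels occurring in `W/W'`, the `Δ`-filtration of `W/W'` can
be rearranged so that all copies of `Δ(π)` come first. -/
theorem sorted {π : Idx} (h : Ch (S.Δ '' Set.univ) M W' W) (hm : ∀ τ, π < τ → S.HL M τ W W') :
    ∃ U, Ch (S.Δ '' {π}) M W' U ∧ Ch (S.Δ '' Set.univ) M U W ∧ S.HL M π W U := by
  induction h with
  | refl hgr => exact ⟨W', Ch.refl hgr, Ch.refl hgr, fun _ _ _ h => h⟩
  | @step W₁ W₂ N d hch hgr hN hsec ih =>
    have hle : W₁ ≤ W₂ := hsec.1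
    obtain ⟨U₁, hU₁, hUW, hHL⟩ := ih fun τ hτ => (hm τ hτ).mono hle le_rfl
    obtain ⟨σ, -, rfl⟩ := hN
    obtain ⟨l, hl, hlW, hlK, hsup⟩ := sec_lift hgr hsec
    by_cases hσ : σ = π
    · subst hσ
      have hKW : ∀ x ∈ S.K σ, l x ∈ W' := factor hl hlW hm
      have hmeet : W₁ ⊓ (U₁ ⊔ LinearMap.range l) ≤ U₁ := by
        rintro w ⟨hw, hwU⟩
        obtain ⟨u, hu, _, ⟨x, rfl⟩, rfl⟩ := Submodule.mem_sup.1 hwU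
        have h1 : l x ∈ W₁ := (Submodule.add_mem_iff_right _ (hUW.le hu)).1 hw
        exact add_mem hu (hU₁.le (hKW x ((hlK x).1 h1)))
      have hWU : W₁ ⊔ (U₁ ⊔ LinearMap.range l) = W₂ := by
        rw [← sup_assoc, sup_eq_left.2 hUW.le, hsup]
      have hUle : U₁ ⊔ LinearMap.range l ≤ W₂ := le_sup_right.trans hWU.le
      have hUgr : M.Gr (U₁ ⊔ LinearMap.range l) := hU₁.gr.sup (GMod.Gr.range hl)
      have hsecU := hsec.inf (X := U₁ ⊔ LinearMap.range l) hWU.ge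
      rw [inf_eq_right.2 hUle,
        le_antisymm hmeet (le_inf hUW.le le_sup_left)] at hsecU
      refine ⟨U₁ ⊔ LinearMap.range l, Ch.step hU₁ hUgr ⟨σ, rfl, rfl⟩ hsecU, ?_, ?_⟩
      · have h1 := hUW.sup hUgr hmeet
        rw [hWU, sup_eq_right.2 (le_sup_left : U₁ ≤ U₁ ⊔ LinearMap.range l)] at h1
        exact h1
      · intro e g hg hgW x
        obtain ⟨g', hg', hg'U, hgg'⟩ := split_hom hUgr hch.gr hg
          (fun x => (sup_comm W₁ _ ▸ hWU).ge (hgW x))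
        have h1 := hHL e (g - g') (ghom_sub hg hg') hgg' x
        have h2 := add_mem (Submodule.mem_sup_left (T := LinearMap.range l) h1) (hg'U x)
        rwa [LinearMap.sub_apply, sub_add_cancel] at h2
    · refine ⟨U₁, hU₁, Ch.step hUW hgr ⟨σ, trivial, rfl⟩ hsec, ?_⟩
      intro e g hg hgW
      refine hHL e g hg fun x => ?_
      have hns : ¬ π ≤ σ := by
        intro hle'
        obtain ⟨x, hx⟩ := sec_lift_notMem hlK
        exact hx (hch.le (hm σ (lt_of_le_of_ne hle' (Ne.symm hσ)) _ l hl hlW x))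
      obtain ⟨-, φ, hφ, -, hk⟩ := hsec
      have hu : φ ∘ₗ g.codRestrict W₂ hgW ∈ ghomSet (S.P π) (S.Δ σ) (e + d) := by
        intro i y hy
        have := hφ (i + e) ⟨g y, hgW y⟩ (hg i y hy)
        rw [add_assoc] at this
        exact this
      exact (hk ⟨g x, hgW x⟩).1 (LinearMap.congr_fun (S.hom_std_zero hns hu) x)

/-- The kernel `X / W'` of a surjection from `W / W'` onto `Δ(π)` is filtered by copies of `Δ(π)`
if `W / W'` is. -/
theorem ker_of_isotypic {π : Idx} {d : ℤ} (h : Ch (S.Δ '' {π}) M W' W)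
    (hm : ∀ τ, π < τ → S.HL M τ W W') (hX : M.Gr X) (hsec : Sec M W X (S.Δ π) d) (hle : W' ≤ X) :
    Ch (S.Δ '' {π}) M W' X := by
  induction h generalizing X d with
  | refl hgr =>
    obtain ⟨l, -, hlW, hlK, -⟩ := sec_lift hgr hsec
    obtain ⟨x, hx⟩ := sec_lift_notMem hlK
    exact absurd (hle (hlW x)) hx
  | @step W₁ W₂ N e hch hgr hN hsec₁ ih =>
    obtain ⟨_, rfl, rfl⟩ := hN
    by_cases hW : W₂ ≤ W₁ ⊔ X
    · have h1 := hsec.inf (X := W₁) (by rwa [sup_comm])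
      rw [inf_eq_right.2 hsec₁.1] at h1
      have h2 := ih (fun τ hτ => (hm τ hτ).mono hsec₁.1 le_rfl) (hX.inf hch.gr) h1
        (le_inf hle hch.le)
      have h3 := hsec₁.inf hW
      rw [inf_eq_right.2 hsec.1, inf_comm] at h3
      exact Ch.step h2 hX ⟨_, rfl, rfl⟩ h3
    · obtain ⟨l, hl, hlW, hlK, hsup⟩ := sec_lift hgr hsec₁
      obtain ⟨hXle, φ, hφ, hs, hk⟩ := id hsec
      have hKW : ∀ x ∈ S.K _, l x ∈ W' := factor hl hlW hm
      let v := φ ∘ₗ l.codRestrict W₂ hlW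
      have hv : v ∈ ghomSet (S.P _) (S.Δ _) (-e + d) := by
        intro i y hy
        have := hφ (i + -e) ⟨l y, hlW y⟩ (hl i y hy)
        rw [add_assoc] at this
        exact this
      let u := φ ∘ₗ Submodule.inclusion hsec₁.1
      have hjoin : LinearMap.range u ⊔ LinearMap.range v = ⊤ := by
        refine eq_top_iff.2 fun y _ => ?_
        obtain ⟨⟨w, hw⟩, rfl⟩ := hs y
        obtain ⟨w₁, hw₁, _, ⟨x, rfl⟩, hwx⟩ := Submodule.mem_sup.1 (hsup.le hw)
        refine Submodule.mem_sup.2 ⟨u ⟨w₁, hw₁⟩, ⟨_, rfl⟩, v x, ⟨_, rfl⟩, ?_⟩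
        change φ ⟨w₁, _⟩ + φ ⟨l x, _⟩ = _
        rw [← map_add]
        exact congrArg φ (Subtype.ext hwx)
      have hvs : Function.Surjective v := by
        rcases S.std_local _ (HomOn.gr_range hch.gr (hφ.restrict hsec₁.1)) (GMod.Gr.range hv)
          hjoin with h1 | h1
        · refine absurd (fun w hw => ?_) hW
          obtain ⟨w₁, hw₁⟩ := LinearMap.range_eq_top.1 h1 (φ ⟨w, hw⟩)
          have h2 : φ (⟨w, hw⟩ - Submodule.inclusion hsec₁.1 w₁) = 0 := by
            rw [map_sub, sub_eq_zero]
            exact hw₁.symm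
          have h3 : w - w₁.1 ∈ X := (hk _).1 h2
          exact Submodule.mem_sup.2 ⟨w₁.1, w₁.2, _, h3, add_sub_cancel _ _⟩
        · exact LinearMap.range_eq_top.1 h1
      obtain ⟨b, hb⟩ := exists_factor (S.δ _) v (S.δ_surj _)
        fun x hx => (hk ⟨l x, hlW x⟩).2 (hle (hKW x hx))
      have hbs : Function.Surjective b := fun y => by
        obtain ⟨x, hx⟩ := hvs y
        exact ⟨S.δ _ x, (hb x).trans hx⟩
      -- `φ` and `l` induce a surjective, hence bijective, endomorphism of `Δ(π)`.
      have hbi : Function.Injective b := by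
        have := (S.Δ ‹Idx›).isNoeth
        exact IsNoetherian.injective_of_surjective_endomorphism b hbs
      have hvK : ∀ x, l x ∈ X → x ∈ S.K _ := by
        intro x hx
        have h1 : v x = 0 := (hk ⟨l x, hlW x⟩).2 hx
        rw [← hb] at h1
        exact hbi (h1.trans (map_zero b).symm)
      have hmeet : ∀ Y, W' ≤ Y → (∀ x, l x ∈ Y → x ∈ S.K _) →
          Y ⊓ (W' ⊔ LinearMap.range l) ≤ W' := by
        rintro Y hY hYK w ⟨hw, hwL⟩
        obtain ⟨u, hu, _, ⟨x, rfl⟩, rfl⟩ := Submodule.mem_sup.1 hwL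
        exact add_mem hu (hKW x (hYK x ((Submodule.add_mem_iff_right _ (hY hu)).1 hw)))
      have hL : M.Gr (W' ⊔ LinearMap.range l) := hch.gr'.sup (GMod.Gr.range hl)
      have h1 := hch.sup hL (hmeet W₁ hch.le fun x => (hlK x).1)
      rw [← sup_assoc, ← sup_assoc, sup_idem, sup_eq_left.2 hch.le, ← hsup] at h1
      have h2 := h1.inf hX fun w hw => by
        obtain ⟨x, hx⟩ := hvs (φ ⟨w, hw⟩)
        have h2 : φ (⟨w, hw⟩ - ⟨l x, hlW x⟩) = 0 := by
          rw [map_sub, sub_eq_zero]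
          exact hx.symm
        have h3 : w - l x ∈ X := (hk _).1 h2
        exact Submodule.mem_sup.2 ⟨l x, Submodule.mem_sup_right ⟨x, rfl⟩, _, h3,
          add_sub_cancel _ _⟩
      rw [inf_eq_right.2 hsec.1, inf_comm, le_antisymm (hmeet X hle hvK)
        (le_inf hle le_sup_left)] at h2
      exact h2

/-- The kernel of a surjection from a `Δ`-filtered module onto `Δ(π₀)` is `Δ`-filtered. -/
theorem ker_std {π₀ : Idx} {d : ℤ} (n : ℕ) : ∀ W' : Submodule A.carrier M.carrier,
    Set.ncard {τ | ¬ S.HL M τ W W'} ≤ n → Ch (S.Δ '' Set.univ) M W' W → M.Gr X →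
    Sec M W X (S.Δ π₀) d → W' ≤ X → Ch (S.Δ '' Set.univ) M W' X := by
  induction n with
  | zero =>
    intro W' hn h _ hsec hle
    have h0 := (Set.ncard_eq_zero (Set.toFinite _)).1 (Nat.le_zero.1 hn)
    obtain ⟨l, hl, hlW, hlK, -⟩ := sec_lift h.gr hsec
    obtain ⟨x, hx⟩ := sec_lift_notMem hlK
    have h1 : ¬ S.HL M π₀ W W' := fun hHL => hx (hle (hHL _ l hl hlW x))
    exact absurd (h0.le h1) (Set.notMem_empty _)
  | succ n ih =>
    intro W' hn h hX hsec hle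
    obtain ⟨l, hl, hlW, hlK, hsup⟩ := sec_lift h.gr hsec
    have h1 : ¬ S.HL M π₀ W W' := fun hHL => by
      obtain ⟨x, hx⟩ := sec_lift_notMem hlK
      exact hx (hle (hHL _ l hl hlW x))
    obtain ⟨π, hπ, hmax⟩ := exists_max (fun τ => ¬ S.HL M τ W W') ⟨π₀, h1⟩
    have hmax' : ∀ τ, π < τ → S.HL M τ W W' := fun τ hτ => not_not.1 (hmax τ hτ)
    obtain ⟨U, hU, hUW, hHL⟩ := sorted h hmax'
    by_cases hUX : U ≤ X
    · have hlt : {τ | ¬ S.HL M τ W U} ⊂ {τ | ¬ S.HL M τ W W'} :=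
        (Set.ssubset_iff_of_subset (s := {τ | ¬ S.HL M τ W U})
          (t := {τ | ¬ S.HL M τ W W'})
          fun τ hτ h' => hτ (h'.mono le_rfl hU.le)).2 ⟨π, hπ, fun h' => h' hHL⟩
      have := Set.ncard_lt_ncard hlt (Set.toFinite _)
      exact (hU.mono (Set.image_mono (Set.subset_univ _))).trans
        (ih U (by omega) hUW hX hsec hUX)
    · have hππ : π = π₀ := by
        by_contra hne
        refine hUX (ch_gen hU hle ?_)
        rintro _ rfl e g hg hgU x
        obtain ⟨-, φ, hφ, -, hk⟩ := hsec
        have hgW : ∀ x, g x ∈ W := fun x => hUW.le (hgU x)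
        have hu : φ ∘ₗ g.codRestrict W hgW ∈ ghomSet (S.P _) (S.Δ π₀) (e + d) := by
          intro i y hy
          have := hφ (i + e) ⟨g y, hgW y⟩ (hg i y hy)
          rw [add_assoc] at this
          exact this
        have h2 := S.hom_std_zero (fun h' => h1 (hmax' _ (lt_of_le_of_ne h' hne))) hu
        exact (hk ⟨g x, hgW x⟩).1 (LinearMap.congr_fun h2 x)
      subst hππ
      have hWU : W ≤ X ⊔ U := by
        refine hsup.le.trans (sup_le_sup_left ?_ X)
        rintro _ ⟨x, rfl⟩
        exact hHL _ l hl hlW x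
      have h2 := hsec.inf hWU
      rw [inf_eq_right.2 hUW.le] at h2
      have h3 := ker_of_isotypic hU (fun τ hτ => (hmax' τ hτ).mono hUW.le le_rfl)
        (hX.inf hU.gr) h2 (le_inf hle hU.le)
      have h4 := hUW.inf hX (by rwa [sup_comm])
      rw [inf_eq_right.2 hsec.1, inf_comm] at h4
      exact (h3.mono (Set.image_mono (Set.subset_univ _))).trans h4

/-- The kernel of a surjection between `Δ`-filtered modules is `Δ`-filtered. -/
theorem ker_ch {Q : Submodule A.carrier N.carrier} (hQ : Ch (S.Δ '' Set.univ) N ⊥ Q)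
    (h : Ch (S.Δ '' Set.univ) M W' W) {e : ℤ} {f : M.carrier →ₗ[A.carrier] N.carrier}
    (hf : f ∈ ghomSet M N e) (hWQ : W.map f = Q) (hW' : W' ≤ LinearMap.ker f) :
    Ch (S.Δ '' Set.univ) M W' (W ⊓ LinearMap.ker f) := by
  induction hQ generalizing W with
  | refl hgr =>
    have h1 : W ≤ LinearMap.ker f := by
      rw [← Submodule.comap_bot, ← Submodule.map_le_iff_le_comap]
      exact hWQ.le
    rwa [inf_eq_left.2 h1]
  | @step Q₁ Q₂ N' d hch hgr hN hsec ih =>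
    obtain ⟨σ, -, rfl⟩ := hN
    have hWle : W ≤ Q₂.comap f := Submodule.map_le_iff_le_comap.1 hWQ.le
    have hker : LinearMap.ker f ≤ Q₁.comap f := by
      rw [← Submodule.comap_bot]
      exact Submodule.comap_mono bot_le
    have h1 := (hsec.comap hf (hWQ ▸ LinearMap.map_le_range)).inf (X := W) (by
      rw [← hWQ, Submodule.comap_map_eq, sup_comm]
      exact sup_le_sup_right hker W)
    rw [inf_eq_right.2 hWle] at h1
    have h2 := ker_std _ W' le_rfl h ((GMod.Gr.comap hf hch.gr).inf h.gr) h1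
      (le_inf (hW'.trans hker) h.le)
    have h3 := ih h2 (by
      refine le_antisymm (Submodule.map_le_iff_le_comap.2 inf_le_left) fun y hy => ?_
      obtain ⟨w, hw, rfl⟩ := hWQ.ge (hsec.1 hy)
      exact ⟨w, ⟨hy, hw⟩, rfl⟩)
    rwa [inf_right_comm, inf_eq_right.2 hker, inf_comm] at h3

end AHW

end Kernels


/-! ### Tilting resolutions -/

section Resolutions

theorem hom_mem {M N : GMod A} (f : M ⟶ N) : f.1 ∈ ghomSet M N 0 := fun i x hx => by
  rw [add_zero]
  exact f.2 i x hx

/-- A homogeneous map of degree `0` as a morphism. -/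
def homMk {M N : GMod A} (f : M.carrier →ₗ[A.carrier] N.carrier) (hf : f ∈ ghomSet M N 0) :
    M ⟶ N :=
  ⟨f, fun i x hx => by
    have := hf i x hx
    rwa [add_zero] at this⟩

/-- The existence of a finite resolution of `V` by tilting modules. -/
def TiltRes (S : AHW A Idx) (V : GMod A) : Prop :=
  ∃ (r : ℕ) (T : ℕ → GMod A) (ι : V ⟶ T 0)
      (d : (n : ℕ) → (T n ⟶ T (n + 1))),
      (∀ n, IsTilting S (T n)) ∧
      (∀ n : ℕ, r < n → Subsingleton (T n).carrier) ∧
      Function.Injective ι.1 ∧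
      LinearMap.ker (d 0).1 = LinearMap.range ι.1 ∧
      (∀ n : ℕ, LinearMap.ker (d (n + 1)).1 = LinearMap.range (d n).1)

theorem ch_empty {M : GMod A} {W W' : Submodule A.carrier M.carrier} (h : Ch ∅ M W W') :
    W = W' := by
  induction h with
  | refl _ => rfl
  | step _ _ hN => exact absurd hN (Set.notMem_empty _)

variable {S : AHW A Idx} [IsNoetherianRing A.carrier]

theorem isTilting_of_good {E : GMod A} (h : Ch (S.Δ '' Set.univ) E ⊥ ⊤) (hg : S.Good E ⊤) :
    IsTilting S E :=
  ⟨(AHW.hasDFilt_iff S).2 h, AHW.hasPCFilt_of_good hg⟩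

theorem TiltRes.zero {V : GMod A} (hV : Subsingleton V.carrier) : TiltRes S V := by
  have htop : (⊥ : Submodule A.carrier V.carrier) = ⊤ := Subsingleton.elim _ _
  have hch : Ch (S.Δ '' Set.univ) V ⊥ ⊤ := by
    have := Ch.refl (Fam := S.Δ '' Set.univ) (GMod.Gr.bot (M := V))
    exact htop ▸ this
  have hgood : S.Good V ⊤ := fun π d f _ _ =>
    ⟨0, ghom_zero, fun _ => trivial, fun _ _ => Subsingleton.elim _ _⟩
  exact ⟨0, fun _ => V, 𝟙 V, fun _ => 𝟙 V, fun _ => isTilting_of_good hch hgood, fun _ _ => hV,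
    fun _ _ h => h, Subsingleton.elim _ _, fun _ => Subsingleton.elim _ _⟩

omit [IsNoetherianRing A.carrier] in
/-- A resolution of the cokernel of `V ↪ E` yields one of `V`. -/
theorem TiltRes.splice {V E : GMod A} {ι : V.carrier →ₗ[A.carrier] E.carrier}
    (hι : ι ∈ ghomSet V E 0) (hi : Function.Injective ι) (hE : IsTilting S E)
    (h : TiltRes S (E.quot (LinearMap.range ι) (GMod.Gr.range hι))) : TiltRes S V := by
  obtain ⟨r, T, j, d, hT, hr, hj, h0, hd⟩ := h
  let mk : E ⟶ E.quot (LinearMap.range ι) (GMod.Gr.range hι) :=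
    homMk (LinearMap.range ι).mkQ (quot_mk (GMod.Gr.range hι))
  let T' : ℕ → GMod A := fun n => Nat.casesOn n E T
  let d' : (n : ℕ) → (T' n ⟶ T' (n + 1)) := fun n =>
    Nat.casesOn (motive := fun n => T' n ⟶ T' (n + 1)) n (mk ≫ j) d
  have hmk : Function.Surjective mk.1 := Submodule.mkQ_surjective (LinearMap.range ι)
  refine ⟨r + 1, T', homMk ι hι, d', ?_, ?_, hi, ?_, ?_⟩
  · rintro (_ | n)
    · exact hE
    · exact hT n
  · rintro (_ | n) hn
    · omega
    · exact hr n (by omega)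
  · have h1 : LinearMap.ker (j.1 ∘ₗ mk.1) = LinearMap.ker mk.1 :=
      LinearMap.ker_comp_of_ker_eq_bot _ (LinearMap.ker_eq_bot.2 hj)
    exact h1.trans (Submodule.ker_mkQ (LinearMap.range ι))
  · rintro (_ | n)
    · have h1 : LinearMap.range (j.1 ∘ₗ mk.1) = LinearMap.range j.1 :=
        LinearMap.range_comp_of_range_eq_top _ (LinearMap.range_eq_top.2 hmk)
      exact h0.trans h1.symm
    · exact hd n

/-- A module filtered by `Δ(π)` with `π` in a down-closed set `Λ` has a finite tilting
resolution. The cokernel of its embedding in a tilting module only involves labels strictly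
below some element of `Λ`, which gives the induction. -/
theorem tiltRes_of_ch (hspade : A.Spade) (n : ℕ) : ∀ Λ : Set Idx, Set.ncard Λ ≤ n →
    (∀ τ ∈ Λ, ∀ σ, σ < τ → σ ∈ Λ) → ∀ V : GMod A, Ch (S.Δ '' Λ) V ⊥ ⊤ → TiltRes S V := by
  induction n with
  | zero =>
    intro Λ hn _ V h
    have h0 : Λ = ∅ := (Set.ncard_eq_zero (Set.toFinite _)).1 (Nat.le_zero.1 hn)
    subst h0
    rw [Set.image_empty] at h
    refine TiltRes.zero ((Submodule.subsingleton_iff A.carrier).1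
      (subsingleton_of_bot_eq_top (ch_empty h)))
  | succ n ih =>
    intro Λ hn hlow V h
    by_cases hne : ∃ π, π ∈ Λ
    · let Λ' : Set Idx := {σ | ∃ τ ∈ Λ, σ < τ}
      have hsub : Λ' ⊂ Λ := by
        obtain ⟨π, hπ, hmax⟩ := exists_max _ hne
        refine (Set.ssubset_iff_of_subset ?_).2 ⟨π, hπ, ?_⟩
        · rintro σ ⟨τ, hτ, hστ⟩
          exact hlow τ hτ σ hστ
        · rintro ⟨τ, hτ, hπτ⟩
          exact hmax τ hπτ hτ
      obtain ⟨E, ι, hι, hi, hch, hgood⟩ := AHW.exists_good hspade S _ Λ'ᶜ le_rfl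
        (fun σ hσ τ hστ ⟨ρ, hρ, hτρ⟩ => hσ ⟨ρ, hρ, hστ.trans hτρ⟩) V fun σ hσ d f hf _ => by
          have hland := AHW.K_land (fun τ hτ hστ => hσ ⟨τ, hτ, hστ⟩) h hf fun _ => trivial
          refine ⟨0, ghom_zero, fun _ => trivial, fun x hx => ?_⟩
          exact ((Submodule.mem_bot A.carrier).1 (hland ⟨x, hx⟩)).symm
      rw [compl_compl] at hch
      have h1 := h.map hι fun x _ hx => (Submodule.mem_bot A.carrier).2
        (hi (hx.trans (map_zero ι).symm))
      rw [Submodule.map_bot, Submodule.map_top] at h1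
      have hE : IsTilting S E := isTilting_of_good
        ((h1.mono (Set.image_mono (Set.subset_univ _))).trans
          (hch.mono (Set.image_mono (Set.subset_univ _)))) hgood
      have h2 := hch.map (quot_mk (GMod.Gr.range hι)) fun x _ hx =>
        (Submodule.Quotient.mk_eq_zero _).1 hx
      rw [Submodule.map_top, Submodule.range_mkQ, Submodule.mkQ_map_self] at h2
      refine TiltRes.splice hι hi hE (ih Λ' ?_ ?_ _ h2)
      · have := Set.ncard_lt_ncard hsub (Set.toFinite _)
        omega
      · rintro τ ⟨ρ, hρ, hτρ⟩ σ hσ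
        exact ⟨ρ, hρ, hσ.trans hτρ⟩
    · refine ih Λ ?_ hlow V h
      have : Λ = ∅ := Set.eq_empty_of_forall_notMem fun x hx => hne ⟨x, hx⟩
      rw [this, Set.ncard_empty]
      exact Nat.zero_le _

/-- A module with a finite resolution by `Δ`-filtered modules is `Δ`-filtered: all cycles of
the resolution are, as kernels of surjections between `Δ`-filtered modules. -/
theorem ch_of_tiltRes {V : GMod A} (h : TiltRes S V) : Ch (S.Δ '' Set.univ) V ⊥ ⊤ := by
  obtain ⟨r, T, ι, d, hT, hr, hi, h0, hd⟩ := h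
  have hch : ∀ n, Ch (S.Δ '' Set.univ) (T n) ⊥ ⊤ := fun n => (AHW.hasDFilt_iff S).1 (hT n).1
  have key : ∀ m n, r < n + m → Ch (S.Δ '' Set.univ) (T n) ⊥ (LinearMap.ker (d n).1) := by
    intro m
    induction m with
    | zero =>
      intro n hn
      have := hr n hn
      have h1 : LinearMap.ker (d n).1 = ⊥ := Subsingleton.elim _ _
      rw [h1]
      exact Ch.refl GMod.Gr.bot
    | succ m ih =>
      intro n hn
      have h1 := AHW.ker_ch (ih (n + 1) (by omega)) (hch n) (hom_mem (d n))
        (by rw [Submodule.map_top, hd n]) bot_le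
      rwa [top_inf_eq] at h1
  have h1 := key (r + 1) 0 (by omega)
  rw [h0] at h1
  have h2 := h1.comap (hom_mem ι) le_rfl
  have h3 : (LinearMap.range ι.1).comap ι.1 = ⊤ := eq_top_iff.2 fun x _ => ⟨x, rfl⟩
  rwa [Submodule.comap_bot, LinearMap.ker_eq_bot.2 hi, h3] at h2

end Resolutions

end Proof

/-- For an affine quasi-hereditary algebra with property `(♠)`,
a module has a `Δ`-filtration iff it admits a finite right resolution
`0 → V → T₀ → T₁ → ⋯ → T_r → 0` by tilting modules. -/
theorem delta_filtration_iff_finite_tilting_resolution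
    {k : Type} [Field k] (A : GAlg k) (hspade : A.Spade)
    (Idx : Type) [Fintype Idx] [PartialOrder Idx] (S : AHW A Idx)
    (V : GMod A) :
    HasDFilt S V ↔
    ∃ (r : ℕ) (T : ℕ → GMod A) (ι : V ⟶ T 0)
      (d : (n : ℕ) → (T n ⟶ T (n + 1))),
      (∀ n, IsTilting S (T n)) ∧
      (∀ n : ℕ, r < n → Subsingleton (T n).carrier) ∧
      Function.Injective ι.1 ∧
      LinearMap.ker (d 0).1 = LinearMap.range ι.1 ∧
      (∀ n : ℕ, LinearMap.ker (d (n + 1)).1 = LinearMap.range (d n).1) := by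
  have := S.noeth
  constructor
  · intro h
    exact tiltRes_of_ch hspade _ Set.univ le_rfl (fun _ _ _ _ => trivial) V
      ((AHW.hasDFilt_iff S).1 h)
  · intro h
    exact (AHW.hasDFilt_iff S).2 (ch_of_tiltRes h)
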